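/- arXiv:1612.07915 — 4 statements merged into one kernel-verified Lean document; each statement's English description precedes it below -/
import Mathlib

section
/- For a nonempty polytope P in ℝ^d, the function φ_P(x) = Σ_{F face of P} (-1)^{dim F} · 1_{F - N(P,F)}(x) is identically equal to 1, where N(P,F) is the normal cone of P at the face F and F - N(P,F) = {f - u : f ∈ F, u ∈ N(P,F)}. -/
open RealInnerProductSpace Pointwise

noncomputable section

abbrev Euc (d : ℕ) := EuclideanSpace ℝ (Fin d)

/-- A polyhedral set: intersection of finitely many closed half-spaces. -/
def IsPolyhedral {d : ℕ} (P : Set (Euc d)) : Prop :=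
  ∃ s : Finset (Euc d × ℝ), P = {x | ∀ h ∈ s, ⟪h.1, x⟫ ≤ h.2}

/-- A (nonempty) face of a convex set: a nonempty convex extreme subset. -/
def IsFaceOf {d : ℕ} (P F : Set (Euc d)) : Prop :=
  F.Nonempty ∧ Convex ℝ F ∧ IsExtreme ℝ P F

/-- The normal cone of `P` at the face `F`. -/
def normalCone {d : ℕ} (P F : Set (Euc d)) : Set (Euc d) :=
  {u | ∀ f ∈ F, ∀ z ∈ P, ⟪u, z - f⟫ ≤ 0}

/-- The dimension of a set: the rank of the direction of its affine hull. -/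
def sdim {d : ℕ} (F : Set (Euc d)) : ℕ :=
  Module.finrank ℝ (affineSpan ℝ F).direction

/-- φ_P(x) = Σ_{F face of P} (-1)^{dim F} 1_{F - N(P,F)}(x). -/
def phi {d : ℕ} (P : Set (Euc d)) (x : Euc d) : ℤ :=
  ∑ᶠ F ∈ {F : Set (Euc d) | IsFaceOf P F},
    (-1 : ℤ) ^ sdim F * (F - normalCone P F).indicator (fun _ => (1 : ℤ)) x

/-- A set is line-free if it contains no affine line. -/
def LineFree {d : ℕ} (P : Set (Euc d)) : Prop :=
  ∀ x y : Euc d, y ≠ 0 → ∃ t : ℝ, x + t • y ∉ P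


/-! ### Minimal faces -/

/-- Minimal face of `P` containing `z`. -/
def mf {d : ℕ} (P : Set (Euc d)) (z : Euc d) : Set (Euc d) :=
  {y | y ∈ P ∧ ∃ ε : ℝ, 0 < ε ∧ z + ε • (z - y) ∈ P}

lemma conv2 {d : ℕ} {P : Set (Euc d)} (hP : Convex ℝ P) {x y z : Euc d} {a b : ℝ}
    (hx : x ∈ P) (hy : y ∈ P) (ha : 0 ≤ a) (hb : 0 ≤ b) (hab : a + b = 1)
    (hz : z = a • x + b • y) : z ∈ P := by
  rw [hz]; exact hP hx hy ha hb hab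

lemma conv3 {d : ℕ} {P : Set (Euc d)} (hP : Convex ℝ P) {x y w z : Euc d} {a b c : ℝ}
    (hx : x ∈ P) (hy : y ∈ P) (hw : w ∈ P) (ha : 0 ≤ a) (hb : 0 ≤ b) (hc : 0 < c)
    (hab : a + b + c = 1)
    (hz : z = a • x + b • y + c • w) : z ∈ P := by
  have h1 : (b/(b+c)) • y + (c/(b+c)) • w ∈ P :=
    hP hy hw (by positivity) (by positivity) (by field_simp)
  refine conv2 hP hx h1 ha (b := b + c) (by positivity) (by linarith) ?_
  rw [hz]
  have : b + c ≠ 0 := by positivity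
  match_scalars <;> field_simp

lemma mf_small {d : ℕ} {P : Set (Euc d)} (hP : Convex ℝ P) {z y : Euc d} {ε δ : ℝ}
    (hz : z ∈ P) (h : z + ε • (z - y) ∈ P) (hε : 0 < ε) (h0 : 0 ≤ δ) (h1 : δ ≤ ε) :
    z + δ • (z - y) ∈ P := by
  refine conv2 hP hz h (a := 1 - δ/ε) (b := δ/ε) ?_ (by positivity) (by ring) ?_
  · have : δ/ε ≤ 1 := by rw [div_le_one hε]; exact h1
    linarith
  · match_scalars <;> field_simp <;> ring

lemma self_mem_mf {d : ℕ} {P : Set (Euc d)} {z : Euc d} (hz : z ∈ P) : z ∈ mf P z :=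
  ⟨hz, 1, one_pos, by simpa using hz⟩

lemma mf_sub {d : ℕ} {P : Set (Euc d)} {z : Euc d} : mf P z ⊆ P := fun _ h => h.1

lemma mf_min {d : ℕ} {P F : Set (Euc d)} {z : Euc d} (hF : IsExtreme ℝ P F) (hz : z ∈ F) :
    mf P z ⊆ F := by
  rintro y ⟨hy, ε, hε, hq⟩
  refine hF.2 hy hq hz ⟨ε/(1+ε), 1/(1+ε), by positivity, by positivity, by field_simp; ring, ?_⟩
  match_scalars <;> field_simp <;> ring

lemma mf_face {d : ℕ} {P : Set (Euc d)} (hP : Convex ℝ P) {z : Euc d} (hz : z ∈ P) :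
    IsFaceOf P (mf P z) := by
  refine ⟨⟨z, self_mem_mf hz⟩, ?_, mf_sub, ?_⟩
  · rintro y1 ⟨hy1, e1, he1, h1⟩ y2 ⟨hy2, e2, he2, h2⟩ a b ha hb hab
    refine ⟨hP hy1 hy2 ha hb hab, min e1 e2, lt_min he1 he2, ?_⟩
    have h1' := mf_small hP hz h1 he1 (lt_min he1 he2).le (min_le_left _ _)
    have h2' := mf_small hP hz h2 he2 (lt_min he1 he2).le (min_le_right _ _)
    refine conv2 hP h1' h2' ha hb hab ?_
    have : a = 1 - b := by linarith
    subst this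
    match_scalars <;> ring
  · rintro x1 h1 x2 h2 y ⟨hy, ε, hε, hq⟩ ⟨a, b, ha, hb, hab, rfl⟩
    refine ⟨h1, a*ε/(1+ε), by positivity, ?_⟩
    refine conv3 hP hz h2 hq (a := a*ε/(1+ε)) (b := ε*b/(1+ε)) (c := 1/(1+ε))
      (by positivity) (by positivity) (by positivity) ?_ ?_
    · have : a = 1 - b := by linarith
      subst this; field_simp; ring
    · have : a = 1 - b := by linarith
      subst this
      match_scalars <;> field_simp <;> ring

lemma mf_ri {d : ℕ} {P : Set (Euc d)} (hP : Convex ℝ P) {z y : Euc d} (hz : z ∈ P)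
    (hy : y ∈ mf P z) {t : ℝ} (h0 : 0 ≤ t) (h1 : t < 1) :
    mf P (z + t • (y - z)) = mf P z := by
  have hmem : z + t • (y - z) ∈ mf P z :=
    conv2 (mf_face hP hz).2.1 (self_mem_mf hz) hy (a := 1 - t) (b := t) (by linarith) h0 (by ring)
      (by match_scalars <;> ring)
  apply le_antisymm
  · exact mf_min (mf_face hP hz).2.2 hmem
  · refine mf_min (mf_face hP hmem.1).2.2 ⟨hz, 1 - t, by linarith, ?_⟩
    refine conv2 hP hz hy.1 (a := 1 - (2-t)*t) (b := (2-t)*t) (by nlinarith [sq_nonneg (1-t)])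
      (mul_nonneg (by linarith) h0) (by ring) ?_
    match_scalars <;> ring

lemma mf_eq_of_mem {d : ℕ} {P : Set (Euc d)} {z w : Euc d} (hP : Convex ℝ P)
    (hz : z ∈ P) (hw : w ∈ P) (h1 : z ∈ mf P w) (h2 : w ∈ mf P z) : mf P z = mf P w :=
  le_antisymm (mf_min (mf_face hP hw).2.2 h1) (mf_min (mf_face hP hz).2.2 h2)

/-! ### Cutting by a hyperplane -/

def lo {d : ℕ} (P : Set (Euc d)) (g : Euc d →ᵃ[ℝ] ℝ) : Set (Euc d) := {z | z ∈ P ∧ g z ≤ 0}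
def hy {d : ℕ} (P : Set (Euc d)) (g : Euc d →ᵃ[ℝ] ℝ) : Set (Euc d) := {z | z ∈ P ∧ g z = 0}

lemma g_combo {d : ℕ} (g : Euc d →ᵃ[ℝ] ℝ) (x y : Euc d) (a b : ℝ) (h : a + b = 1) :
    g (a • x + b • y) = a * g x + b * g y := by
  simpa using Convex.combo_affine_apply (f := g) (x := x) (y := y) h

lemma g_line {d : ℕ} (g : Euc d →ᵃ[ℝ] ℝ) (z y : Euc d) (t : ℝ) :
    g (z + t • (y - z)) = g z + t * (g y - g z) := by
  have : z + t • (y - z) = (1 - t) • z + t • y := by match_scalars <;> ring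
  rw [this, g_combo g _ _ _ _ (by ring)]; ring

lemma g_refl {d : ℕ} (g : Euc d →ᵃ[ℝ] ℝ) (z y : Euc d) (t : ℝ) :
    g (z + t • (z - y)) = g z + t * (g z - g y) := by
  have : z + t • (z - y) = (1 + t) • z + (-t) • y := by match_scalars <;> ring
  rw [this, g_combo g _ _ _ _ (by ring)]; ring

lemma lo_convex {d : ℕ} {P : Set (Euc d)} (hP : Convex ℝ P) (g : Euc d →ᵃ[ℝ] ℝ) :
    Convex ℝ (lo P g) := by
  rintro x ⟨hx, hx'⟩ y ⟨hy, hy'⟩ a b ha hb hab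
  refine ⟨hP hx hy ha hb hab, ?_⟩
  rw [g_combo g _ _ _ _ hab]; nlinarith

lemma hy_convex {d : ℕ} {P : Set (Euc d)} (hP : Convex ℝ P) (g : Euc d →ᵃ[ℝ] ℝ) :
    Convex ℝ (hy P g) := by
  rintro x ⟨hx, hx'⟩ y ⟨hy, hy'⟩ a b ha hb hab
  refine ⟨hP hx hy ha hb hab, ?_⟩
  rw [g_combo g _ _ _ _ hab, hx', hy']; ring

lemma hy_neg {d : ℕ} (P : Set (Euc d)) (g : Euc d →ᵃ[ℝ] ℝ) : hy P (-g) = hy P g := by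
  ext z; simp [hy]

lemma mf_hy {d : ℕ} {P : Set (Euc d)} (g : Euc d →ᵃ[ℝ] ℝ) {z : Euc d}
    (hg : g z = 0) : mf (hy P g) z = hy (mf P z) g := by
  ext y; constructor
  · rintro ⟨⟨h1, h2⟩, ε, hε, h3, h4⟩
    exact ⟨⟨h1, ε, hε, h3⟩, h2⟩
  · rintro ⟨⟨h1, ε, hε, h3⟩, h2⟩
    exact ⟨⟨h1, h2⟩, ε, hε, h3, by rw [g_refl, hg, h2]; ring⟩

lemma mf_lo_zero {d : ℕ} {P : Set (Euc d)} (g : Euc d →ᵃ[ℝ] ℝ) {z : Euc d}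
    (hg : g z = 0) : mf (lo P g) z = hy (mf P z) g := by
  ext y; constructor
  · rintro ⟨⟨h1, h2⟩, ε, hε, h3, h4⟩
    refine ⟨⟨h1, ε, hε, h3⟩, ?_⟩
    rw [g_refl, hg] at h4
    nlinarith
  · rintro ⟨⟨h1, ε, hε, h3⟩, h2⟩
    exact ⟨⟨h1, h2.le⟩, ε, hε, h3, by rw [g_refl, hg, h2]; simp⟩

lemma exists_small (c e : ℝ) (hc : c < 0) : ∃ δ : ℝ, 0 < δ ∧ δ < 1 ∧ c + δ * e < 0 := by
  have hp : 0 < |e| + 1 - c := by have := abs_nonneg e; linarith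
  refine ⟨-c / (|e| + 1 - c), div_pos (by linarith) hp, ?_, ?_⟩
  · rw [div_lt_one hp]; have := abs_nonneg e; linarith
  · rw [div_mul_eq_mul_div, ← sub_neg_eq_add, sub_neg, ← neg_div, lt_div_iff₀ hp]
    have := le_abs_self e
    nlinarith

lemma mf_lo_neg {d : ℕ} {P : Set (Euc d)} (hP : Convex ℝ P) (g : Euc d →ᵃ[ℝ] ℝ) {z : Euc d}
    (hz : z ∈ P) (hg : g z < 0) : mf (lo P g) z = lo (mf P z) g := by
  ext y; constructor
  · rintro ⟨⟨h1, h2⟩, ε, hε, h3, h4⟩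
    exact ⟨⟨h1, ε, hε, h3⟩, h2⟩
  · rintro ⟨⟨h1, ε, hε, h3⟩, h2⟩
    obtain ⟨δ, hδ, hδ1, h⟩ := exists_small (g z) (ε * (g z - g y)) hg
    refine ⟨⟨h1, h2⟩, δ * ε, by positivity, mf_small hP hz h3 hε (by positivity) (by nlinarith), ?_⟩
    rw [g_refl]; nlinarith

/-! ### Dimensions -/

lemma sdim_lo {d : ℕ} {F : Set (Euc d)} (hF : Convex ℝ F) (g : Euc d →ᵃ[ℝ] ℝ) {z : Euc d}
    (hz : z ∈ F) (hg : g z < 0) : sdim (lo F g) = sdim F := by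
  have : affineSpan ℝ (lo F g) = affineSpan ℝ F := by
    apply le_antisymm (affineSpan_mono ℝ fun y hy => hy.1)
    rw [affineSpan_le]
    intro y hy
    obtain ⟨δ, hδ, hδ1, h⟩ := exists_small (g z) (g y - g z) hg
    have h1 : z + δ • (y - z) ∈ lo F g :=
      ⟨conv2 hF hz hy (a := 1 - δ) (b := δ) (by linarith) hδ.le (by ring)
        (by match_scalars <;> ring), by rw [g_line]; exact h.le⟩
    have h2 : z ∈ lo F g := ⟨hz, hg.le⟩
    have := AffineMap.lineMap_mem (1/δ) (subset_affineSpan ℝ _ h2) (subset_affineSpan ℝ _ h1)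
    have e : AffineMap.lineMap z (z + δ • (y - z)) (1/δ) = y := by
      rw [AffineMap.lineMap_apply_module']
      match_scalars <;> field_simp
      ring
    rw [e] at this
    exact this
  rw [sdim, sdim, this]

lemma sdim_hy {d : ℕ} {F : Set (Euc d)} (hF : Convex ℝ F) (g : Euc d →ᵃ[ℝ] ℝ) {n p : Euc d}
    (hn : n ∈ F) (hgn : g n < 0) (hp : p ∈ F) (hgp : 0 < g p) :
    sdim F = sdim (hy F g) + 1 := by
  have hcross : ∀ y1 ∈ F, ∀ y2 ∈ F, g y1 < 0 → 0 < g y2 →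
      ∃ s : ℝ, 0 < s ∧ s < 1 ∧ y1 + s • (y2 - y1) ∈ hy F g := by
    intro y1 h1 y2 h2 hg1 hg2
    have hd : 0 < g y2 - g y1 := by linarith
    have hs1 : -g y1 / (g y2 - g y1) < 1 := by rw [div_lt_one hd]; linarith
    have hs0 : 0 < -g y1 / (g y2 - g y1) := div_pos (by linarith) hd
    refine ⟨-g y1 / (g y2 - g y1), hs0, hs1, ?_, ?_⟩
    · exact conv2 hF h1 h2 (a := 1 - -g y1 / (g y2 - g y1)) (b := -g y1 / (g y2 - g y1))
        (by linarith) hs0.le (by ring) (by match_scalars <;> ring)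
    · rw [g_line]; field_simp; ring
  obtain ⟨s, hs0, hs1, hz0⟩ := hcross n hn p hp hgn hgp
  set z0 := n + s • (p - n) with hz0def
  set D0 := (affineSpan ℝ (hy F g)).direction with hD0
  set D := (affineSpan ℝ F).direction with hD
  have hsub : ∀ y ∈ hy F g, y - z0 ∈ D0 := fun y hy' =>
    AffineSubspace.vsub_mem_direction (subset_affineSpan ℝ _ hy') (subset_affineSpan ℝ _ hz0)
  have hnp : p - z0 = (-(1 - s)/s) • (n - z0) := by
    rw [hz0def]; match_scalars <;> field_simp <;> ring
  have hDle : D ≤ D0 ⊔ Submodule.span ℝ {n - z0} := by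
    rw [hD, direction_affineSpan, vectorSpan_eq_span_vsub_set_right ℝ hz0.1, Submodule.span_le]
    rintro _ ⟨y, hyF, rfl⟩
    have hn0 : n - z0 ∈ D0 ⊔ Submodule.span ℝ {n - z0} :=
      Submodule.mem_sup_right (Submodule.mem_span_singleton_self _)
    have hp0 : p - z0 ∈ D0 ⊔ Submodule.span ℝ {n - z0} := by
      rw [hnp]; exact Submodule.smul_mem _ _ hn0
    change y - z0 ∈ D0 ⊔ Submodule.span ℝ {n - z0}
    rcases lt_trichotomy (g y) 0 with h | h | h
    · obtain ⟨r, hr0, hr1, hr⟩ := hcross y hyF p hp h hgp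
      have h1 := Submodule.mem_sup_left (T := Submodule.span ℝ {n - z0}) (hsub _ hr)
      have h2 := Submodule.smul_mem _ (1/(1-r)) (Submodule.sub_mem _ h1 (Submodule.smul_mem _ r hp0))
      convert h2 using 1
      have : 1 - r ≠ 0 := by linarith
      match_scalars <;> field_simp <;> ring
    · exact Submodule.mem_sup_left (hsub _ ⟨hyF, h⟩)
    · obtain ⟨r, hr0, hr1, hr⟩ := hcross n hn y hyF hgn h
      have h1 := Submodule.mem_sup_left (T := Submodule.span ℝ {n - z0}) (hsub _ hr)
      have h2 := Submodule.smul_mem _ (1/r)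
        (Submodule.sub_mem _ h1 (Submodule.smul_mem _ (1-r) hn0))
      convert h2 using 1
      match_scalars <;> field_simp <;> ring
  have hDge : D0 ⊔ Submodule.span ℝ {n - z0} ≤ D := by
    refine sup_le (AffineSubspace.direction_le (affineSpan_mono ℝ fun y hy => hy.1)) ?_
    rw [Submodule.span_singleton_le_iff_mem]
    exact AffineSubspace.vsub_mem_direction (subset_affineSpan ℝ _ hn) (subset_affineSpan ℝ _ hz0.1)
  have hker : D0 ≤ LinearMap.ker g.linear := by
    rw [hD0, direction_affineSpan, vectorSpan_eq_span_vsub_set_right ℝ hz0, Submodule.span_le]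
    rintro _ ⟨y, hyF, rfl⟩
    simp only [SetLike.mem_coe, LinearMap.mem_ker, AffineMap.linearMap_vsub]
    rw [hyF.2, hz0.2]; simp
  have hnn : g.linear (n - z0) = g n := by
    have := g.linearMap_vsub n z0
    rw [hz0.2] at this; simpa using this
  have hne : n - z0 ≠ 0 := by
    intro h; rw [h] at hnn; simp at hnn; linarith
  have hdisj : D0 ⊓ Submodule.span ℝ {n - z0} = ⊥ := by
    rw [eq_bot_iff]
    rintro v ⟨hv1, hv2⟩
    obtain ⟨c, rfl⟩ := Submodule.mem_span_singleton.1 hv2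
    have := hker hv1
    rw [LinearMap.mem_ker, map_smul, hnn] at this
    rcases mul_eq_zero.1 this with h | h
    · simp [h]
    · linarith
  have := Submodule.finrank_sup_add_finrank_inf_eq D0 (Submodule.span ℝ {n - z0})
  rw [hdisj, finrank_bot, finrank_span_singleton hne, le_antisymm hDge hDle] at this
  simpa [sdim] using this

/-! ### The weights -/

def good {d : ℕ} (P F : Set (Euc d)) (x : Euc d) : Prop := ∃ f ∈ F, f - x ∈ normalCone P F

open Classical in
def wt {d : ℕ} (P : Set (Euc d)) (x : Euc d) (F : Set (Euc d)) : ℤ :=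
  (-1) ^ sdim F * (if good P F x then 1 else 0)

lemma mem_sub_iff_good {d : ℕ} (P F : Set (Euc d)) (x : Euc d) :
    x ∈ F - normalCone P F ↔ good P F x := by
  rw [Set.mem_sub]
  constructor
  · rintro ⟨f, hf, u, hu, rfl⟩
    exact ⟨f, hf, by simpa using hu⟩
  · rintro ⟨f, hf, hu⟩
    exact ⟨f, hf, _, hu, by simp⟩

lemma phi_eq {d : ℕ} (P : Set (Euc d)) (x : Euc d) :
    phi P x = ∑ᶠ F ∈ {F : Set (Euc d) | IsFaceOf P F}, wt P x F := by
  classical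
  unfold phi
  refine finsum_congr fun F => finsum_congr fun _ => ?_
  rw [wt, Set.indicator_apply]
  congr 1
  exact if_congr (mem_sub_iff_good P F x) rfl rfl

lemma nc_mf {d : ℕ} {P E : Set (Euc d)} {z u : Euc d} (hzE : z ∈ E) (hE : E ⊆ mf P z) :
    u ∈ normalCone P E ↔ ∀ y ∈ P, ⟪u, y - z⟫ ≤ 0 := by
  constructor
  · intro h y hy; exact h z hzE y hy
  · intro h f hf y hy
    obtain ⟨_, ε, hε, hq⟩ := hE hf
    have h1 := h _ hq
    rw [add_sub_cancel_left, inner_smul_right] at h1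
    have h2 := h _ hy
    have h3 : ⟪u, z - f⟫ ≤ 0 := by
      by_contra hc; push Not at hc; nlinarith [mul_pos hε hc]
    have : y - f = (y - z) + (z - f) := by abel
    rw [this, inner_add_right]; linarith

lemma nc_const {d : ℕ} {P F : Set (Euc d)} (hFP : F ⊆ P) {u f f' : Euc d}
    (hu : u ∈ normalCone P F) (hf : f ∈ F) (hf' : f' ∈ F) : ⟪u, f - f'⟫ = 0 := by
  have h1 := hu f hf f' (hFP hf')
  have h2 := hu f' hf' f (hFP hf)
  have : f' - f = -(f - f') := by abel
  rw [this, inner_neg_right] at h1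
  linarith

lemma nc_uniq {d : ℕ} {P F : Set (Euc d)} (hFP : F ⊆ P) {x f f' : Euc d}
    (hf : f ∈ F) (hf' : f' ∈ F) (h : f - x ∈ normalCone P F) (h' : f' - x ∈ normalCone P F) :
    f = f' := by
  have h1 := nc_const hFP h hf hf'
  have h2 := nc_const hFP h' hf hf'
  have h3 : ⟪f - f', f - f'⟫ = 0 := by
    have : f - f' = (f - x) - (f' - x) := by abel
    nth_rewrite 1 [this]
    rw [inner_sub_left, h1, h2]; simp
  rw [inner_self_eq_zero] at h3
  exact sub_eq_zero.1 h3

lemma good_lo_neg {d : ℕ} {P : Set (Euc d)} (hP : Convex ℝ P) (g : Euc d →ᵃ[ℝ] ℝ) {z x : Euc d}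
    (hz : z ∈ P) (hg : g z < 0) :
    good (lo P g) (lo (mf P z) g) x ↔ ∃ f ∈ lo (mf P z) g, f - x ∈ normalCone P (mf P z) := by
  refine exists_congr fun f => and_congr_right fun hf => ?_
  rw [nc_mf (show z ∈ lo (mf P z) g from ⟨self_mem_mf hz, hg.le⟩) (mf_lo_neg hP g hz hg).ge,
    nc_mf (self_mem_mf hz) le_rfl]
  constructor
  · intro h y hy
    obtain ⟨δ, hδ, hδ1, h'⟩ := exists_small (g z) (g y - g z) hg
    have h1 := h (z + δ • (y - z)) ⟨conv2 hP hz hy (a := 1 - δ) (b := δ) (by linarith) hδ.le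
      (by ring) (by match_scalars <;> ring), by rw [g_line]; exact h'.le⟩
    rw [add_sub_cancel_left, inner_smul_right] at h1
    by_contra hc; push Not at hc; nlinarith [mul_pos hδ hc]
  · intro h y hy; exact h y hy.1

open Classical in
lemma good_zero {d : ℕ} {P : Set (Euc d)} (hP : Convex ℝ P) (g : Euc d →ᵃ[ℝ] ℝ) {z x : Euc d}
    (hz : z ∈ P) (hg : g z = 0) :
    (if good (lo P g) (hy (mf P z) g) x then (1:ℤ) else 0) +
      (if good (lo P (-g)) (hy (mf P z) g) x then 1 else 0) -
      (if good (hy P g) (hy (mf P z) g) x then 1 else 0) =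
    if ∃ f ∈ hy (mf P z) g, f - x ∈ normalCone P (mf P z) then 1 else 0 := by
  set E := hy (mf P z) g with hE
  have hzE : z ∈ E := ⟨self_mem_mf hz, hg⟩
  have e1 : ∀ u, u ∈ normalCone (lo P g) E ↔ ∀ y ∈ lo P g, ⟪u, y - z⟫ ≤ 0 := fun u =>
    nc_mf hzE (mf_lo_zero g hg).ge
  have e2 : ∀ u, u ∈ normalCone (lo P (-g)) E ↔ ∀ y ∈ lo P (-g), ⟪u, y - z⟫ ≤ 0 := fun u =>
    nc_mf hzE (by rw [mf_lo_zero (-g) (by simp [hg]), hy_neg])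
  have e3 : ∀ u, u ∈ normalCone (hy P g) E ↔ ∀ y ∈ hy P g, ⟪u, y - z⟫ ≤ 0 := fun u =>
    nc_mf hzE (mf_hy g hg).ge
  have e4 : ∀ u, u ∈ normalCone P (mf P z) ↔ ∀ y ∈ P, ⟪u, y - z⟫ ≤ 0 := fun u =>
    nc_mf (self_mem_mf hz) le_rfl
  have m1 : ∀ u, u ∈ normalCone (lo P g) E → u ∈ normalCone (hy P g) E := fun u hu =>
    (e3 u).2 fun y hy => (e1 u).1 hu y ⟨hy.1, hy.2.le⟩
  have m2 : ∀ u, u ∈ normalCone (lo P (-g)) E → u ∈ normalCone (hy P g) E := fun u hu =>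
    (e3 u).2 fun y hy => (e2 u).1 hu y ⟨hy.1, by simp [hy.2]⟩
  have m3 : ∀ u, u ∈ normalCone P (mf P z) ↔
      u ∈ normalCone (lo P g) E ∧ u ∈ normalCone (lo P (-g)) E := by
    intro u
    rw [e4, e1, e2]
    constructor
    · intro h; exact ⟨fun y hy => h y hy.1, fun y hy => h y hy.1⟩
    · rintro ⟨h1, h2⟩ y hy
      rcases le_total (g y) 0 with h | h
      · exact h1 y ⟨hy, h⟩
      · exact h2 y ⟨hy, by simpa using h⟩
  have m4 : ∀ u, u ∈ normalCone (hy P g) E →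
      u ∈ normalCone (lo P g) E ∨ u ∈ normalCone (lo P (-g)) E := by
    intro u hu
    rw [e1, e2]
    by_contra hc
    push Not at hc
    obtain ⟨⟨y1, ⟨h1, hg1⟩, hu1⟩, y2, ⟨h2, hg2⟩, hu2⟩ := hc
    have hg2 : 0 ≤ g y2 := by simpa using hg2
    rcases eq_or_lt_of_le hg1 with h0 | h0
    · have := (e3 u).1 hu y1 ⟨h1, h0⟩; linarith
    have hd : 0 < g y2 - g y1 := by linarith
    have hs1 : -g y1 / (g y2 - g y1) ≤ 1 := by rw [div_le_one hd]; linarith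
    have hs0 : 0 < -g y1 / (g y2 - g y1) := div_pos (by linarith) hd
    have hs : g y1 + (-g y1 / (g y2 - g y1)) * (g y2 - g y1) = 0 := by field_simp; ring
    set s := -g y1 / (g y2 - g y1)
    have := (e3 u).1 hu (y1 + s • (y2 - y1)) ⟨conv2 hP h1 h2 (a := 1 - s) (b := s)
      (by linarith) hs0.le (by ring) (by match_scalars <;> ring), by rw [g_line]; exact hs⟩
    have e : y1 + s • (y2 - y1) - z = (1 - s) • (y1 - z) + s • (y2 - z) := by
      match_scalars <;> ring
    rw [e, inner_add_right, inner_smul_right, inner_smul_right] at this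
    have := mul_pos hs0 hu2
    have := mul_nonneg (sub_nonneg.2 hs1) hu1.le
    linarith
  have hEP : E ⊆ hy P g := fun y hy => ⟨hy.1.1, hy.2⟩
  by_cases c : good (hy P g) E x
  · obtain ⟨f, hf, hfx⟩ := c
    have hu : ∀ f' ∈ E, f' - x ∈ normalCone (hy P g) E → f' = f := fun f' hf' h =>
      nc_uniq hEP hf' hf h hfx
    have q1 : good (lo P g) E x ↔ f - x ∈ normalCone (lo P g) E :=
      ⟨fun ⟨f', hf', h⟩ => by rwa [hu f' hf' (m1 _ h)] at h, fun h => ⟨f, hf, h⟩⟩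
    have q2 : good (lo P (-g)) E x ↔ f - x ∈ normalCone (lo P (-g)) E :=
      ⟨fun ⟨f', hf', h⟩ => by rwa [hu f' hf' (m2 _ h)] at h, fun h => ⟨f, hf, h⟩⟩
    have q3 : good (hy P g) E x ↔ True := ⟨fun _ => trivial, fun _ => ⟨f, hf, hfx⟩⟩
    have q4 : (∃ f ∈ E, f - x ∈ normalCone P (mf P z)) ↔ f - x ∈ normalCone P (mf P z) :=
      ⟨fun ⟨f', hf', h⟩ => by rwa [hu f' hf' (m1 _ ((m3 _).1 h).1)] at h, fun h => ⟨f, hf, h⟩⟩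
    rw [if_congr q1 rfl rfl, if_congr q2 rfl rfl, if_pos (q3.2 trivial),
      if_congr (q4.trans (m3 _)) rfl rfl]
    have h4 := m4 _ hfx
    clear q1 q2 q3 q4 hu e1 e2 e3 e4 m1 m2 m3 m4
    generalize (f - x ∈ normalCone (lo P g) E) = p1 at *
    generalize (f - x ∈ normalCone (lo P (-g)) E) = p2 at *
    by_cases h' : p1 <;> by_cases h'' : p2 <;> simp_all
  · have q1 : ¬ good (lo P g) E x := fun ⟨f', hf', h⟩ => c ⟨f', hf', m1 _ h⟩
    have q2 : ¬ good (lo P (-g)) E x := fun ⟨f', hf', h⟩ => c ⟨f', hf', m2 _ h⟩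
    have q4 : ¬ (∃ f ∈ E, f - x ∈ normalCone P (mf P z)) :=
      fun ⟨f', hf', h⟩ => c ⟨f', hf', m1 _ ((m3 _).1 h).1⟩
    rw [if_neg c, if_neg q1, if_neg q2, if_neg q4]; simp

/-! ### The valuation property -/

def Nice {d : ℕ} (P : Set (Euc d)) : Prop :=
  Convex ℝ P ∧ {F : Set (Euc d) | IsFaceOf P F}.Finite ∧
    ∀ F, IsFaceOf P F → ∃ z ∈ P, F = mf P z

def NegF {d : ℕ} (P : Set (Euc d)) (g : Euc d →ᵃ[ℝ] ℝ) (F : Set (Euc d)) : Prop :=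
  ∃ z ∈ P, F = mf P z ∧ g z < 0
def Zer {d : ℕ} (P : Set (Euc d)) (g : Euc d →ᵃ[ℝ] ℝ) (F : Set (Euc d)) : Prop :=
  ∃ z ∈ P, F = mf P z ∧ g z = 0

lemma faces_hy {d : ℕ} {P : Set (Euc d)} (g : Euc d →ᵃ[ℝ] ℝ) (hP : Convex ℝ P)
    (h : Nice (hy P g)) :
    {F | IsFaceOf (hy P g) F} = (fun F => hy F g) '' {F | Zer P g F} := by
  ext G; constructor
  · intro hG
    obtain ⟨z, hz, rfl⟩ := h.2.2 G hG
    exact ⟨mf P z, ⟨z, hz.1, rfl, hz.2⟩, (mf_hy g hz.2).symm⟩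
  · rintro ⟨_, ⟨z, hz, rfl, hg⟩, rfl⟩
    change IsFaceOf (hy P g) (hy (mf P z) g)
    rw [← mf_hy g hg]
    exact mf_face h.1 ⟨hz, hg⟩

lemma faces_lo {d : ℕ} {P : Set (Euc d)} (g : Euc d →ᵃ[ℝ] ℝ) (hP : Convex ℝ P)
    (h : Nice (lo P g)) :
    {F | IsFaceOf (lo P g) F} = (fun F => lo F g) '' {F | NegF P g F} ∪
      (fun F => hy F g) '' {F | Zer P g F} := by
  ext G; constructor
  · intro hG
    obtain ⟨z, hz, rfl⟩ := h.2.2 G hG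
    rcases lt_or_eq_of_le hz.2 with h' | h'
    · exact Or.inl ⟨mf P z, ⟨z, hz.1, rfl, h'⟩, (mf_lo_neg hP g hz.1 h').symm⟩
    · exact Or.inr ⟨mf P z, ⟨z, hz.1, rfl, h'⟩, (mf_lo_zero g h').symm⟩
  · rintro (⟨_, ⟨z, hz, rfl, hg⟩, rfl⟩ | ⟨_, ⟨z, hz, rfl, hg⟩, rfl⟩)
    · change IsFaceOf (lo P g) (lo (mf P z) g)
      rw [← mf_lo_neg hP g hz hg]
      exact mf_face h.1 ⟨hz, hg.le⟩
    · change IsFaceOf (lo P g) (hy (mf P z) g)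
      rw [← mf_lo_zero g hg]
      exact mf_face h.1 ⟨hz, hg.le⟩

lemma inj_hy {d : ℕ} {P : Set (Euc d)} (g : Euc d →ᵃ[ℝ] ℝ) (hP : Convex ℝ P) :
    Set.InjOn (fun F => hy F g) {F | Zer P g F} := by
  rintro _ ⟨z, hz, rfl, hg⟩ _ ⟨w, hw, rfl, hg'⟩ h
  have h1 : z ∈ hy (mf P z) g := ⟨self_mem_mf hz, hg⟩
  have h2 : w ∈ hy (mf P w) g := ⟨self_mem_mf hw, hg'⟩
  change hy (mf P z) g = hy (mf P w) g at h
  rw [h] at h1; rw [← h] at h2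
  exact mf_eq_of_mem hP hz hw h1.1 h2.1

lemma inj_lo {d : ℕ} {P : Set (Euc d)} (g : Euc d →ᵃ[ℝ] ℝ) (hP : Convex ℝ P) :
    Set.InjOn (fun F => lo F g) {F | NegF P g F} := by
  rintro _ ⟨z, hz, rfl, hg⟩ _ ⟨w, hw, rfl, hg'⟩ h
  have h1 : z ∈ lo (mf P z) g := ⟨self_mem_mf hz, hg.le⟩
  have h2 : w ∈ lo (mf P w) g := ⟨self_mem_mf hw, hg'.le⟩
  change lo (mf P z) g = lo (mf P w) g at h
  rw [h] at h1; rw [← h] at h2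
  exact mf_eq_of_mem hP hz hw h1.1 h2.1

open Classical in
lemma fs {α : Type*} (S : Finset α) (p : α → Prop) (h : ∀ F, p F → F ∈ S) (f : α → ℤ) :
    ∑ᶠ F ∈ {F | p F}, f F = ∑ F ∈ S, if p F then f F else 0 := by
  have e : {F | p F} = ((S.filter p : Finset α) : Set α) := by
    ext F
    simp only [Finset.coe_filter]
    exact ⟨fun hp => ⟨h F hp, hp⟩, fun hp => hp.2⟩
  rw [e, finsum_mem_coe_finset, Finset.sum_filter]

open Classical in
lemma phi_hy {d : ℕ} {P : Set (Euc d)} (g : Euc d →ᵃ[ℝ] ℝ) (hP : Nice P) (h : Nice (hy P g))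
    (x : Euc d) : phi (hy P g) x = ∑ F ∈ hP.2.1.toFinset,
      if Zer P g F then wt (hy P g) x (hy F g) else 0 := by
  rw [phi_eq, faces_hy g hP.1 h, finsum_mem_image (inj_hy g hP.1)]
  apply fs
  rintro _ ⟨z, hz, rfl, _⟩
  simpa using mf_face hP.1 hz

open Classical in
lemma phi_lo {d : ℕ} {P : Set (Euc d)} (g : Euc d →ᵃ[ℝ] ℝ) (hP : Nice P) (h : Nice (lo P g))
    (x : Euc d) : phi (lo P g) x = ∑ F ∈ hP.2.1.toFinset,
      ((if NegF P g F then wt (lo P g) x (lo F g) else 0) +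
        if Zer P g F then wt (lo P g) x (hy F g) else 0) := by
  have hN : ∀ F, NegF P g F → F ∈ hP.2.1.toFinset := by
    rintro _ ⟨z, hz, rfl, _⟩
    simpa using mf_face hP.1 hz
  have hZ : ∀ F, Zer P g F → F ∈ hP.2.1.toFinset := by
    rintro _ ⟨z, hz, rfl, _⟩
    simpa using mf_face hP.1 hz
  have hN' : {F | NegF P g F}.Finite := hP.2.1.subset fun F hF => by simpa using hN F hF
  have hZ' : {F | Zer P g F}.Finite := hP.2.1.subset fun F hF => by simpa using hZ F hF
  rw [phi_eq, faces_lo g hP.1 h, finsum_mem_union ?_ (hN'.image _) (hZ'.image _),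
    finsum_mem_image (inj_hy g hP.1), finsum_mem_image (inj_lo g hP.1), fs _ _ hN, fs _ _ hZ,
    Finset.sum_add_distrib]
  rw [Set.disjoint_left]
  rintro _ ⟨_, ⟨z, hz, rfl, hg⟩, rfl⟩ ⟨_, ⟨w, hw, rfl, hg'⟩, h⟩
  have h1 : z ∈ lo (mf P z) g := ⟨self_mem_mf hz, hg.le⟩
  change hy (mf P w) g = lo (mf P z) g at h
  rw [← h] at h1
  exact hg.ne h1.2

lemma neg_iff {d : ℕ} {P : Set (Euc d)} (g : Euc d →ᵃ[ℝ] ℝ) (hP : Convex ℝ P) {z : Euc d}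
    (hz : z ∈ P) : NegF P g (mf P z) ↔ ∃ y ∈ mf P z, g y < 0 := by
  constructor
  · rintro ⟨w, hw, h, hg⟩
    exact ⟨w, h ▸ self_mem_mf hw, hg⟩
  · rintro ⟨y, hy, hg⟩
    obtain ⟨δ, hδ, hδ1, h⟩ := exists_small (g y) (g z - g y) hg
    have e := mf_ri hP hz hy (t := 1 - δ) (by linarith) (by linarith)
    refine ⟨z + (1 - δ) • (y - z), ?_, e.symm, ?_⟩
    · exact conv2 hP hz hy.1 (a := δ) (b := 1 - δ) hδ.le (by linarith) (by ring)
        (by match_scalars <;> ring)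
    · rw [g_line]; linarith

lemma zer_of_cross {d : ℕ} {P : Set (Euc d)} (g : Euc d →ᵃ[ℝ] ℝ) (hP : Convex ℝ P) {F : Set (Euc d)}
    (h1 : NegF P g F) (h2 : NegF P (-g) F) : Zer P g F := by
  obtain ⟨z, hz, rfl, hg⟩ := h1
  obtain ⟨y, hy, h, hg'⟩ := h2
  have hyF : y ∈ mf P z := by rw [h]; exact self_mem_mf hy
  have hg' : 0 < g y := by simpa using hg'
  have hd : 0 < g y - g z := by linarith
  have hs1 : -g z / (g y - g z) < 1 := by rw [div_lt_one hd]; linarith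
  have hs0 : 0 < -g z / (g y - g z) := div_pos (by linarith) hd
  have hs : g z + (-g z / (g y - g z)) * (g y - g z) = 0 := by field_simp; ring
  refine ⟨z + (-g z / (g y - g z)) • (y - z), ?_, (mf_ri hP hz hyF hs0.le hs1).symm, ?_⟩
  · exact conv2 hP hz hy (a := 1 - -g z / (g y - g z)) (b := -g z / (g y - g z)) (by linarith)
      hs0.le (by ring) (by match_scalars <;> ring)
  · rw [g_line]; exact hs

lemma neg_of_zer {d : ℕ} {P : Set (Euc d)} (g : Euc d →ᵃ[ℝ] ℝ) (hP : Convex ℝ P) {F : Set (Euc d)}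
    (h1 : NegF P g F) (h2 : Zer P g F) : NegF P (-g) F := by
  obtain ⟨z, hz, rfl, hg⟩ := h2
  obtain ⟨y, hy, h, hg'⟩ := h1
  have hyF : y ∈ mf P z := by rw [h]; exact self_mem_mf hy
  rw [neg_iff _ hP hz]
  obtain ⟨_, ε, hε, hq⟩ := hyF
  refine ⟨z + ε • (z - y), ⟨hq, 1/ε, by positivity, ?_⟩, ?_⟩
  · convert hy using 1
    match_scalars <;> field_simp <;> ring
  · have : g (z + ε • (z - y)) > 0 := by rw [g_refl, hg]; nlinarith
    simpa using this

open Classical in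
/-- The valuation property. -/
lemma phi_val {d : ℕ} {P : Set (Euc d)} (g : Euc d →ᵃ[ℝ] ℝ) (hP : Nice P) (h0 : Nice (hy P g))
    (h1 : Nice (lo P g)) (h2 : Nice (lo P (-g))) (x : Euc d) :
    phi (lo P g) x + phi (lo P (-g)) x = phi P x + phi (hy P g) x := by
  have hfin : phi P x = ∑ F ∈ hP.2.1.toFinset, wt P x F := by
    rw [phi_eq]
    have := fs hP.2.1.toFinset (fun F => IsFaceOf P F) (fun F hF => by simpa using hF)
      (fun F => wt P x F)
    rw [this]
    refine Finset.sum_congr rfl fun F hF => if_pos (by simpa using hF)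
  rw [phi_lo g hP h1, phi_lo (-g) hP h2, phi_hy g hP h0, hfin, ← Finset.sum_add_distrib,
    ← Finset.sum_add_distrib]
  refine Finset.sum_congr rfl fun F hF => ?_
  have hF' : IsFaceOf P F := by simpa using hF
  have hC := hP.1
  obtain ⟨z, hz, hFz⟩ := hP.2.2 F hF'
  have hFP : F ⊆ P := hF'.2.2.1
  have hZ : Zer P (-g) F ↔ Zer P g F := by simp [Zer]
  have hn : NegF P g F → wt (lo P g) x (lo F g) =
      (-1) ^ sdim F * (if ∃ f ∈ lo F g, f - x ∈ normalCone P F then 1 else 0) := by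
    rintro ⟨z, hz, rfl, hg⟩
    rw [wt, sdim_lo hF'.2.1 g (self_mem_mf hz) hg]
    congr 1
    exact if_congr (good_lo_neg hC g hz hg) rfl rfl
  have hp : NegF P (-g) F → wt (lo P (-g)) x (lo F (-g)) =
      (-1) ^ sdim F * (if ∃ f ∈ lo F (-g), f - x ∈ normalCone P F then 1 else 0) := by
    rintro ⟨z, hz, rfl, hg⟩
    rw [wt, sdim_lo hF'.2.1 (-g) (self_mem_mf hz) hg]
    congr 1
    exact if_congr (good_lo_neg hC (-g) hz hg) rfl rfl
  have hz0 : Zer P g F → wt (lo P g) x (hy F g) + wt (lo P (-g)) x (hy F g) -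
      wt (hy P g) x (hy F g) = (-1) ^ sdim (hy F g) *
        (if ∃ f ∈ hy F g, f - x ∈ normalCone P F then 1 else 0) := by
    rintro ⟨z, hz, rfl, hg⟩
    rw [← good_zero hC g hz hg]
    simp only [wt]
    ring
  have ht : wt P x F = (-1) ^ sdim F * (if ∃ f ∈ F, f - x ∈ normalCone P F then 1 else 0) := rfl
  rw [hZ, hy_neg]
  by_cases cn : NegF P g F
  · by_cases cp : NegF P (-g) F
    · have cz := zer_of_cross g hC cn cp
      simp only [cn, cp, cz, if_true]
      have hz0 := hz0 cz
      obtain ⟨n, hn1, hn2, hgn⟩ := cn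
      obtain ⟨p, hp1, hp2, hgp⟩ := id cp
      have hdim := sdim_hy hF'.2.1 g (n := n) (p := p) (hn2 ▸ self_mem_mf hn1) hgn
        (hp2 ▸ self_mem_mf hp1) (by simpa using hgp)
      rw [hn ⟨n, hn1, hn2, hgn⟩, hp cp, ht]
      have key : (if ∃ f ∈ lo F g, f - x ∈ normalCone P F then (1:ℤ) else 0) +
          (if ∃ f ∈ lo F (-g), f - x ∈ normalCone P F then 1 else 0) -
          (if ∃ f ∈ hy F g, f - x ∈ normalCone P F then 1 else 0) =
          (if ∃ f ∈ F, f - x ∈ normalCone P F then 1 else 0) := by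
        by_cases c : ∃ f ∈ F, f - x ∈ normalCone P F
        · obtain ⟨f, hf, hfx⟩ := id c
          have hu : ∀ f' ∈ F, f' - x ∈ normalCone P F → f' = f := fun f' hf' h =>
            nc_uniq hFP hf' hf h hfx
          have q1 : (∃ f ∈ lo F g, f - x ∈ normalCone P F) ↔ g f ≤ 0 :=
            ⟨fun ⟨f', hf', h⟩ => by rw [← hu f' hf'.1 h]; exact hf'.2, fun h => ⟨f, ⟨hf, h⟩, hfx⟩⟩
          have q2 : (∃ f ∈ lo F (-g), f - x ∈ normalCone P F) ↔ 0 ≤ g f :=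
            ⟨fun ⟨f', hf', h⟩ => by rw [← hu f' hf'.1 h]; simpa using hf'.2,
              fun h => ⟨f, ⟨hf, by simpa using h⟩, hfx⟩⟩
          have q3 : (∃ f ∈ hy F g, f - x ∈ normalCone P F) ↔ g f = 0 :=
            ⟨fun ⟨f', hf', h⟩ => by rw [← hu f' hf'.1 h]; exact hf'.2, fun h => ⟨f, ⟨hf, h⟩, hfx⟩⟩
          simp only [q1, q2, q3, c, if_true]
          rcases lt_trichotomy (g f) 0 with h | h | h
          · simp [h.le, h.ne, h.not_ge]
          · simp [h]
          · simp [h.le, h.ne', h.not_ge]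
        · have q1 : ¬ ∃ f ∈ lo F g, f - x ∈ normalCone P F :=
            fun ⟨f', hf', h⟩ => c ⟨f', hf'.1, h⟩
          have q2 : ¬ ∃ f ∈ lo F (-g), f - x ∈ normalCone P F :=
            fun ⟨f', hf', h⟩ => c ⟨f', hf'.1, h⟩
          have q3 : ¬ ∃ f ∈ hy F g, f - x ∈ normalCone P F :=
            fun ⟨f', hf', h⟩ => c ⟨f', hf'.1, h⟩
          rw [if_neg c, if_neg q1, if_neg q2, if_neg q3]; simp
      rw [hdim, pow_succ, ← key]
      linear_combination hz0
    · have cz : ¬ Zer P g F := fun h => cp (neg_of_zer g hC cn h)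
      simp only [cn, cp, cz, if_true, if_false]
      rw [hn cn, ht]
      have : lo F g = F := by
        refine Set.Subset.antisymm (fun y hy => hy.1) fun y hy => ⟨hy, ?_⟩
        by_contra hc
        apply cp
        rw [hFz] at hy ⊢
        rw [neg_iff _ hC hz]
        exact ⟨y, hy, by simpa using hc⟩
      rw [this]; ring
  · have hge : ∀ y ∈ F, 0 ≤ g y := fun y hy => by
      by_contra hc
      apply cn
      rw [hFz] at hy ⊢
      rw [neg_iff _ hC hz]
      exact ⟨y, hy, by simpa using hc⟩
    by_cases cp : NegF P (-g) F
    · have cz : ¬ Zer P g F := fun h => cn (by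
        have := neg_of_zer (-g) hC cp (by rwa [hZ])
        simpa using this)
      simp only [cn, cp, cz, if_true, if_false]
      rw [hp cp, ht]
      have : lo F (-g) = F := by
        refine Set.Subset.antisymm (fun y hy => hy.1) fun y hy => ⟨hy, ?_⟩
        simpa using hge y hy
      rw [this]; ring
    · have hle : ∀ y ∈ F, g y ≤ 0 := fun y hy => by
        by_contra hc
        apply cp
        rw [hFz] at hy ⊢
        rw [neg_iff _ hC hz]
        exact ⟨y, hy, by simpa using hc⟩
      have hzF : z ∈ F := by rw [hFz]; exact self_mem_mf hz
      have cz : Zer P g F := ⟨z, hz, hFz, le_antisymm (hle z hzF) (hge z hzF)⟩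
      simp only [cn, cp, cz, if_true, if_false]
      have hz0 := hz0 cz
      have : hy F g = F := by
        refine Set.Subset.antisymm (fun y hy => hy.1) fun y hy => ⟨hy, ?_⟩
        exact le_antisymm (hle y hy) (hge y hy)
      rw [this] at hz0 ⊢
      rw [ht, ← hz0]; ring

/-! ### Polyhedra in an affine subspace -/

def Pol {d : ℕ} {ι : Type} (A : AffineSubspace ℝ (Euc d)) (s : Finset ι)
    (g : ι → Euc d →ᵃ[ℝ] ℝ) : Set (Euc d) := {z | z ∈ A ∧ ∀ i ∈ s, g i z ≤ 0}

lemma aff_eval {d : ℕ} (g : Euc d →ᵃ[ℝ] ℝ) (c : ℝ) (p1 p2 p3 : Euc d) :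
    g (c • (p1 - p2) + p3) = c * (g p1 - g p2) + g p3 := by
  have h := g.map_vadd p3 (c • (p1 - p2))
  have h2 := g.linearMap_vsub p1 p2
  simp only [vadd_eq_add, vsub_eq_sub] at h h2
  rw [h, map_smul, h2]; simp

def hyA {d : ℕ} (A : AffineSubspace ℝ (Euc d)) (g : Euc d →ᵃ[ℝ] ℝ) : AffineSubspace ℝ (Euc d) where
  carrier := {z | z ∈ A ∧ g z = 0}
  smul_vsub_vadd_mem' := by
    intro c p1 p2 p3; rintro ⟨h1, e1⟩ ⟨h2, e2⟩ ⟨h3, e3⟩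
    refine ⟨A.smul_vsub_vadd_mem c h1 h2 h3, ?_⟩
    simp only [vadd_eq_add, vsub_eq_sub]
    rw [aff_eval, e1, e2, e3]; simp

lemma mem_hyA {d : ℕ} {A : AffineSubspace ℝ (Euc d)} {g : Euc d →ᵃ[ℝ] ℝ} {z : Euc d} :
    z ∈ hyA A g ↔ z ∈ A ∧ g z = 0 := Iff.rfl

lemma A_mem {d : ℕ} (A : AffineSubspace ℝ (Euc d)) (c : ℝ) {p1 p2 p3 : Euc d} (h1 : p1 ∈ A)
    (h2 : p2 ∈ A) (h3 : p3 ∈ A) : c • (p1 - p2) + p3 ∈ A := A.smul_vsub_vadd_mem c h1 h2 h3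

lemma A_line {d : ℕ} (A : AffineSubspace ℝ (Euc d)) (t : ℝ) {z y : Euc d} (h1 : z ∈ A)
    (h2 : y ∈ A) : z + t • (y - z) ∈ A := by
  rw [add_comm]; exact A_mem A t h2 h1 h1

lemma A_refl {d : ℕ} (A : AffineSubspace ℝ (Euc d)) (t : ℝ) {z y : Euc d} (h1 : z ∈ A)
    (h2 : y ∈ A) : z + t • (z - y) ∈ A := by
  rw [add_comm]; exact A_mem A t h1 h2 h1

lemma pol_convex {d : ℕ} {ι : Type} (A : AffineSubspace ℝ (Euc d)) (s : Finset ι)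
    (g : ι → Euc d →ᵃ[ℝ] ℝ) : Convex ℝ (Pol A s g) := by
  rintro x ⟨hx, hx'⟩ y ⟨hy, hy'⟩ a b ha hb hab
  refine ⟨A.convex hx hy ha hb hab, fun i hi => ?_⟩
  rw [g_combo _ _ _ _ _ hab]
  nlinarith [hx' i hi, hy' i hi]

lemma small_fin {ι : Type} (s : Finset ι) (a b : ι → ℝ)
    (h : ∀ i ∈ s, a i < 0 ∨ (a i = 0 ∧ b i ≤ 0)) : ∃ ε : ℝ, 0 < ε ∧ ∀ i ∈ s, a i + ε * b i ≤ 0 := by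
  have : ∀ᶠ ε in nhdsWithin (0:ℝ) (Set.Ioi 0), ∀ i ∈ s, a i + ε * b i ≤ 0 := by
    rw [Filter.eventually_all_finset]
    intro i hi
    rcases h i hi with h | ⟨h1, h2⟩
    · have hc : Filter.Tendsto (fun ε : ℝ => a i + ε * b i) (nhdsWithin (0:ℝ) (Set.Ioi 0))
          (nhds (a i + 0 * b i)) :=
        (Continuous.tendsto (by fun_prop) 0).mono_left nhdsWithin_le_nhds
      exact (hc.eventually_lt_const (by simpa using h)).mono fun _ h => h.le
    · filter_upwards [self_mem_nhdsWithin] with ε hε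
      have : (0:ℝ) < ε := hε
      nlinarith
  obtain ⟨ε, h1, h2⟩ := (this.and self_mem_nhdsWithin).exists
  exact ⟨ε, h2, h1⟩

lemma mf_pol {d : ℕ} {ι : Type} {A : AffineSubspace ℝ (Euc d)} {s : Finset ι}
    {g : ι → Euc d →ᵃ[ℝ] ℝ} {z : Euc d} (hz : z ∈ Pol A s g) :
    mf (Pol A s g) z = {y | y ∈ Pol A s g ∧ ∀ i ∈ s, g i z = 0 → g i y = 0} := by
  ext y; constructor
  · rintro ⟨hy, ε, hε, h⟩
    refine ⟨hy, fun i hi hi0 => le_antisymm (hy.2 i hi) ?_⟩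
    have := h.2 i hi
    rw [g_refl, hi0] at this
    nlinarith
  · rintro ⟨hy, h⟩
    obtain ⟨ε, hε, h'⟩ := small_fin s (fun i => g i z) (fun i => g i z - g i y) (by
      intro i hi
      rcases lt_or_eq_of_le (hz.2 i hi) with h0 | h0
      · exact Or.inl h0
      · exact Or.inr ⟨h0, by simp [h0, h i hi h0]⟩)
    exact ⟨hy, ε, hε, A_refl A _ hz.1 hy.1, fun i hi => by rw [g_refl]; exact h' i hi⟩

lemma pol_nice {d : ℕ} {ι : Type} (A : AffineSubspace ℝ (Euc d)) (s : Finset ι)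
    (g : ι → Euc d →ᵃ[ℝ] ℝ) : Nice (Pol A s g) := by
  classical
  have key : ∀ F, IsFaceOf (Pol A s g) F → ∃ z ∈ Pol A s g, F = mf (Pol A s g) z := by
    intro F hF
    let act : Euc d → Finset ι := fun z => s.filter fun i => g i z = 0
    obtain ⟨z, hz, hmin⟩ := (InvImage.wf (fun z => (act z).card) Nat.lt_wfRel.wf).has_min F hF.1
    have hFP := hF.2.2.1
    refine ⟨z, hFP hz, Set.Subset.antisymm ?_ (mf_min hF.2.2 hz)⟩
    intro y hy
    rw [mf_pol (hFP hz)]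
    refine ⟨hFP hy, fun i hi hiz => ?_⟩
    have hm : z + (1/2:ℝ) • (y - z) ∈ F := conv2 hF.2.1 hz hy (a := 1/2) (b := 1/2) (by norm_num)
      (by norm_num) (by norm_num) (by match_scalars <;> ring)
    have hsub : act (z + (1/2:ℝ) • (y - z)) ⊆ act z ∩ act y := by
      intro j hj
      simp only [act, Finset.mem_filter, Finset.mem_inter] at hj ⊢
      obtain ⟨hj, hj'⟩ := hj
      rw [g_line] at hj'
      have h1 := (hFP hz).2 j hj
      have h2 := (hFP hy).2 j hj
      exact ⟨⟨hj, by linarith⟩, hj, by linarith⟩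
    have hc := hmin _ hm
    have he : act (z + (1/2:ℝ) • (y - z)) = act z :=
      Finset.eq_of_subset_of_card_le (hsub.trans Finset.inter_subset_left) (not_lt.1 hc)
    have : i ∈ act z := by simp [act, hi, hiz]
    rw [← he] at this
    have := Finset.mem_inter.1 (hsub this)
    exact (Finset.mem_filter.1 this.2).2
  refine ⟨pol_convex A s g, ?_, key⟩
  refine ((s.powerset.finite_toSet).image
    (fun t => {y | y ∈ Pol A s g ∧ ∀ i ∈ t, g i y = 0})).subset ?_
  intro F hF
  obtain ⟨z, hz, rfl⟩ := key F hF
  refine ⟨s.filter fun i => g i z = 0, Finset.mem_coe.2 (Finset.mem_powerset.2 (Finset.filter_subset _ _)), ?_⟩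
  rw [mf_pol hz]
  ext y
  simp only [Finset.mem_filter, and_imp]

lemma lo_pol {d : ℕ} {ι : Type} [DecidableEq ι] (A : AffineSubspace ℝ (Euc d)) (s : Finset ι)
    (g : ι → Euc d →ᵃ[ℝ] ℝ) (i : ι) :
    lo (Pol A s g) (g i) = Pol A (insert i s) g := by
  ext z
  constructor
  · rintro ⟨⟨h1, h2⟩, h3⟩
    refine ⟨h1, fun j hj => ?_⟩
    rcases Finset.mem_insert.1 hj with rfl | h
    · exact h3
    · exact h2 j h
  · rintro ⟨h1, h2⟩
    exact ⟨⟨h1, fun j hj => h2 j (Finset.mem_insert_of_mem hj)⟩, h2 i (Finset.mem_insert_self _ _)⟩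

lemma hy_pol {d : ℕ} {ι : Type} (A : AffineSubspace ℝ (Euc d)) (s : Finset ι)
    (g : ι → Euc d →ᵃ[ℝ] ℝ) (h : Euc d →ᵃ[ℝ] ℝ) :
    hy (Pol A s g) h = Pol (hyA A h) s g := by
  ext z
  constructor
  · rintro ⟨⟨h1, h2⟩, h3⟩
    exact ⟨⟨h1, h3⟩, h2⟩
  · rintro ⟨⟨h1, h3⟩, h2⟩
    exact ⟨⟨h1, h2⟩, h3⟩

lemma pol_congr {d : ℕ} {ι : Type} (A : AffineSubspace ℝ (Euc d)) (s : Finset ι)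
    {g g' : ι → Euc d →ᵃ[ℝ] ℝ} (h : ∀ i ∈ s, g i = g' i) : Pol A s g = Pol A s g' := by
  ext z
  refine and_congr_right fun _ => forall₂_congr fun i hi => ?_
  rw [h i hi]

open Classical in
def flp {d : ℕ} {ι : Type} (t : Finset ι) (g : ι → Euc d →ᵃ[ℝ] ℝ) : ι → Euc d →ᵃ[ℝ] ℝ :=
  fun i => if i ∈ t then -g i else g i

lemma flip_empty {d : ℕ} {ι : Type} (g : ι → Euc d →ᵃ[ℝ] ℝ) : flp ∅ g = g := by
  funext i; simp [flp]

/-- valuation for a flipped constraint -/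
lemma val_flip {d : ℕ} {ι : Type} [DecidableEq ι] (A : AffineSubspace ℝ (Euc d)) (s : Finset ι)
    (g : ι → Euc d →ᵃ[ℝ] ℝ) (i : ι) (his : i ∉ s) (t : Finset ι) (hit : i ∉ t) (x : Euc d) :
    phi (Pol A (insert i s) (flp t g)) x + phi (Pol A (insert i s) (flp (insert i t) g)) x =
      phi (Pol A s (flp t g)) x + phi (Pol (hyA A (g i)) s (flp t g)) x := by
  have e1 : lo (Pol A s (flp t g)) (g i) = Pol A (insert i s) (flp t g) := by
    rw [← lo_pol]; simp [flp, hit]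
  have e2 : lo (Pol A s (flp t g)) (-g i) = Pol A (insert i s) (flp (insert i t) g) := by
    rw [← lo_pol, pol_congr A s (g' := flp (insert i t) g)]
    · simp [flp]
    · intro j hj
      have : j ≠ i := fun h => his (h ▸ hj)
      simp [flp, this]
  have := phi_val (P := Pol A s (flp t g)) (g i) (pol_nice _ _ _)
    (by rw [hy_pol]; exact pol_nice _ _ _) (by rw [e1]; exact pol_nice _ _ _)
    (by rw [e2]; exact pol_nice _ _ _) x
  rwa [e1, e2, hy_pol] at this

/-- sign flipping -/
lemma flip_zero {ι : Type} [DecidableEq ι] (s : Finset ι) (V : Finset ι → ℤ)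
    (h : ∀ i ∈ s, ∀ t ⊆ s, i ∉ t → V t + V (insert i t) = 0) {t : Finset ι} (ht : t ⊆ s)
    (h0 : V t = 0) : V ∅ = 0 := by
  induction t using Finset.induction_on with
  | empty => exact h0
  | insert i t hi ih =>
    have hts : t ⊆ s := (Finset.subset_insert i t).trans ht
    have := h i (ht (Finset.mem_insert_self i t)) t hts hi
    exact ih hts (by omega)
/-! ### Affine subspaces -/

lemma exists_proj {d : ℕ} (A : AffineSubspace ℝ (Euc d)) (hA : (A : Set (Euc d)).Nonempty)
    (x : Euc d) : ∃ z ∈ A, ∀ a ∈ A, ∀ b ∈ A, ⟪x - z, a - b⟫ = 0 := by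
  haveI : Nonempty A := hA.to_subtype
  refine ⟨EuclideanGeometry.orthogonalProjection A x,
    EuclideanGeometry.orthogonalProjection_mem x, fun a ha b hb => ?_⟩
  have h := EuclideanGeometry.vsub_orthogonalProjection_mem_direction_orthogonal A x
  rw [Submodule.mem_orthogonal'] at h
  exact h _ (AffineSubspace.vsub_mem_direction ha hb)

lemma phi_empty {d : ℕ} (x : Euc d) : phi (∅ : Set (Euc d)) x = 0 := by
  have : {F : Set (Euc d) | IsFaceOf ∅ F} = ∅ := by
    ext F
    refine ⟨fun h => ?_, fun h => h.elim⟩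
    obtain ⟨z, hz⟩ := h.1
    exact (h.2.2.1 hz).elim
  rw [phi_eq, this, finsum_mem_empty]

lemma pol_empty {d : ℕ} {ι : Type} (A : AffineSubspace ℝ (Euc d)) (g : ι → Euc d →ᵃ[ℝ] ℝ) :
    Pol A ∅ g = A := by
  ext z; simp [Pol]

lemma phi_aff {d : ℕ} {ι : Type} (A : AffineSubspace ℝ (Euc d)) (hA : (A : Set (Euc d)).Nonempty)
    (g : ι → Euc d →ᵃ[ℝ] ℝ) (x : Euc d) :
    phi (Pol A ∅ g) x = (-1) ^ sdim (A : Set (Euc d)) := by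
  classical
  have hmf : ∀ z ∈ Pol A ∅ g, mf (Pol A ∅ g) z = Pol A ∅ g := by
    intro z hz
    rw [mf_pol hz]; ext y; simp
  have : {F : Set (Euc d) | IsFaceOf (Pol A ∅ g) F} = {Pol A ∅ g} := by
    ext F
    constructor
    · intro h
      obtain ⟨z, hz, e⟩ := (pol_nice A ∅ g).2.2 F h
      rw [hmf z hz] at e; exact e
    · intro h
      have h : F = Pol A ∅ g := h
      obtain ⟨z, hz⟩ := hA
      have hz : z ∈ Pol A ∅ g := by rw [pol_empty]; exact hz
      have := mf_face (pol_convex A ∅ g) hz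
      rw [hmf z hz] at this
      rw [h]; exact this
  rw [phi_eq, this, finsum_mem_singleton, wt, if_pos, pol_empty, mul_one]
  rw [pol_empty]
  obtain ⟨z, hz, h⟩ := exists_proj A hA x
  refine ⟨z, hz, fun f hf y hy => ?_⟩
  have := h y hy f hf
  rw [← neg_sub, inner_neg_left, this]; simp

lemma phi_aff_hy {d : ℕ} {ι : Type} (A : AffineSubspace ℝ (Euc d)) (g : ι → Euc d →ᵃ[ℝ] ℝ)
    (h : Euc d →ᵃ[ℝ] ℝ) {n p : Euc d} (hn : n ∈ A) (hp : p ∈ A) (hgn : h n < 0) (hgp : 0 < h p)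
    (x : Euc d) : phi (Pol A ∅ g) x + phi (Pol (hyA A h) ∅ g) x = 0 := by
  have hne : ((hyA A h : AffineSubspace ℝ (Euc d)) : Set (Euc d)).Nonempty := by
    refine ⟨n + (-h n / (h p - h n)) • (p - n), A_line A _ hn hp, ?_⟩
    have : h p - h n ≠ 0 := by linarith
    rw [g_line]; field_simp; ring
  rw [phi_aff A ⟨n, hn⟩, phi_aff _ hne, sdim_hy A.convex h hn hgn hp hgp]
  have : hy (A : Set (Euc d)) h = (hyA A h : AffineSubspace ℝ (Euc d)) := rfl
  rw [this, pow_succ]; ring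

/-- The strict regions being all nonempty gives surjectivity. -/
lemma surj_of_regions {d : ℕ} {ι : Type} [DecidableEq ι] (s : Finset ι)
    (g : ι → Euc d →ᵃ[ℝ] ℝ) (A : AffineSubspace ℝ (Euc d))
    (h : ∀ t ⊆ s, ∃ z ∈ A, ∀ i ∈ s, flp t g i z < 0) (c : ι → ℝ) :
    ∃ z ∈ A, ∀ i ∈ s, g i z = c i := by
  induction s using Finset.induction_on generalizing A c with
  | empty =>
    obtain ⟨z, hz, _⟩ := h ∅ (by simp)
    exact ⟨z, hz, by simp⟩
  | insert i s his ih =>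
    have h' : ∀ t ⊆ s, ∃ z ∈ hyA A (g i), ∀ j ∈ s, flp t g j z < 0 := by
      intro t ht
      have hit : i ∉ t := fun h => his (ht h)
      obtain ⟨n, hn, hn'⟩ := h t (ht.trans (Finset.subset_insert _ _))
      obtain ⟨p, hp, hp'⟩ := h (insert i t) (Finset.insert_subset_insert _ ht)
      have h1 : g i n < 0 := by simpa [flp, hit] using hn' i (Finset.mem_insert_self _ _)
      have h2 : 0 < g i p := by simpa [flp] using hp' i (Finset.mem_insert_self _ _)
      have hd : 0 < g i p - g i n := by linarith
      have hs1 : -g i n / (g i p - g i n) < 1 := by rw [div_lt_one hd]; linarith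
      have hs0 : 0 < -g i n / (g i p - g i n) := div_pos (by linarith) hd
      have hs : g i n + (-g i n / (g i p - g i n)) * (g i p - g i n) = 0 := by field_simp; ring
      refine ⟨n + (-g i n / (g i p - g i n)) • (p - n), ⟨A_line A _ hn hp, ?_⟩, fun j hj => ?_⟩
      · rw [g_line]; exact hs
      · have hji : j ≠ i := fun h => his (h ▸ hj)
        have e : flp (insert i t) g j = flp t g j := by simp [flp, hji]
        have a1 := hn' j (Finset.mem_insert_of_mem hj)
        have a2 := hp' j (Finset.mem_insert_of_mem hj)
        rw [e] at a2
        rw [g_line]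
        nlinarith
    obtain ⟨p, hp, hp'⟩ := h {i} (by simp)
    have h2 : 0 < g i p := by simpa [flp] using hp' i (Finset.mem_insert_self _ _)
    obtain ⟨q, hq, hq'⟩ := ih (hyA A (g i)) h' (fun j => g j p)
    obtain ⟨r, hr, hr'⟩ := ih (hyA A (g i)) h' c
    refine ⟨(c i / g i p) • (p - q) + r, A_mem A _ hp hq.1 hr.1, fun j hj => ?_⟩
    rw [aff_eval]
    rcases Finset.mem_insert.1 hj with rfl | hj
    · rw [hq.2, hr.2]; field_simp; ring
    · rw [hq' j hj, hr' j hj]; simp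
/-! ### Simplicial cones -/

def A0 {d : ℕ} {ι : Type} (A : AffineSubspace ℝ (Euc d)) (s : Finset ι)
    (g : ι → Euc d →ᵃ[ℝ] ℝ) : AffineSubspace ℝ (Euc d) where
  carrier := {z | z ∈ A ∧ ∀ i ∈ s, g i z = 0}
  smul_vsub_vadd_mem' := by
    intro c p1 p2 p3
    rintro ⟨h1, e1⟩ ⟨h2, e2⟩ ⟨h3, e3⟩
    refine ⟨A.smul_vsub_vadd_mem c h1 h2 h3, fun i hi => ?_⟩
    simp only [vadd_eq_add, vsub_eq_sub]
    rw [aff_eval, e1 i hi, e2 i hi, e3 i hi]; simp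

lemma sum_mem_A {d : ℕ} {ι : Type} [DecidableEq ι] (A : AffineSubspace ℝ (Euc d)) {z q : Euc d}
    (hz : z ∈ A) (hq : q ∈ A) (p : ι → Euc d) (hp : ∀ i, p i ∈ A) (c : ι → ℝ) (r : Finset ι) :
    z + ∑ i ∈ r, c i • (p i - q) ∈ A ∧ ∀ g : Euc d →ᵃ[ℝ] ℝ,
      g (z + ∑ i ∈ r, c i • (p i - q)) = g z + ∑ i ∈ r, c i * (g (p i) - g q) := by
  induction r using Finset.induction_on with
  | empty => simpa using hz
  | insert i r hi ih =>
    have e : z + ∑ j ∈ insert i r, c j • (p j - q) =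
        c i • (p i - q) + (z + ∑ j ∈ r, c j • (p j - q)) := by
      rw [Finset.sum_insert hi]; abel
    rw [e]
    refine ⟨A_mem A _ (hp i) hq ih.1, fun g => ?_⟩
    rw [aff_eval, ih.2, Finset.sum_insert hi]; ring

lemma mf_image_sub {d : ℕ} {C C' : Set (Euc d)} (T : Euc d →ᵃ[ℝ] Euc d)
    (h : ∀ z ∈ C, T z ∈ C') {z y : Euc d} (hy : y ∈ mf C z) : T y ∈ mf C' (T z) := by
  obtain ⟨h1, ε, hε, h2⟩ := hy
  refine ⟨h _ h1, ε, hε, ?_⟩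
  have := h _ h2
  have e : T (z + ε • (z - y)) = T z + ε • (T z - T y) := by
    have h3 := T.map_vadd z (ε • (z - y))
    have h4 := T.linearMap_vsub z y
    simp only [vadd_eq_add, vsub_eq_sub] at h3 h4
    rw [add_comm, h3, map_smul, h4, add_comm]
  rwa [← e]

lemma mf_image {d : ℕ} {C C' : Set (Euc d)} (T : Euc d →ᵃ[ℝ] Euc d) (hT : ∀ z, T (T z) = z)
    (h : ∀ z ∈ C, T z ∈ C') (h' : ∀ z ∈ C', T z ∈ C) (z : Euc d) :
    T '' mf C z = mf C' (T z) := by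
  apply Set.Subset.antisymm
  · rintro _ ⟨y, hy, rfl⟩
    exact mf_image_sub T h hy
  · intro y hy
    refine ⟨T y, ?_, hT y⟩
    have := mf_image_sub T h' hy
    rwa [hT] at this

lemma sdim_image_le {d : ℕ} (T : Euc d →ᵃ[ℝ] Euc d) (F : Set (Euc d)) :
    sdim (T '' F) ≤ sdim F := by
  unfold sdim
  rw [← AffineSubspace.map_span, AffineSubspace.map_direction]
  exact Submodule.finrank_map_le _ _

lemma image_image_invol {d : ℕ} (T : Euc d →ᵃ[ℝ] Euc d) (hT : ∀ z, T (T z) = z)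
    (F : Set (Euc d)) : T '' (T '' F) = F := by
  rw [← Set.image_comp]
  have : (T ∘ T : Euc d → Euc d) = id := funext hT
  rw [this, Set.image_id]

lemma sdim_image {d : ℕ} (T : Euc d →ᵃ[ℝ] Euc d) (hT : ∀ z, T (T z) = z) (F : Set (Euc d)) :
    sdim (T '' F) = sdim F := by
  apply le_antisymm (sdim_image_le T F)
  have := sdim_image_le T (T '' F)
  rwa [image_image_invol T hT] at this

lemma face_image {d : ℕ} {C C' : Set (Euc d)} (hC : Nice C) (hC' : Nice C')
    (T : Euc d →ᵃ[ℝ] Euc d) (hT : ∀ z, T (T z) = z)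
    (h : ∀ z ∈ C, T z ∈ C') (h' : ∀ z ∈ C', T z ∈ C) {F : Set (Euc d)} (hF : IsFaceOf C F) :
    IsFaceOf C' (T '' F) := by
  obtain ⟨z, hz, rfl⟩ := hC.2.2 F hF
  rw [mf_image T hT h h']
  exact mf_face hC'.1 (h z hz)

lemma phi_invol {d : ℕ} {C C' : Set (Euc d)} (hC : Nice C) (hC' : Nice C')
    (T : Euc d →ᵃ[ℝ] Euc d) (hT : ∀ z, T (T z) = z)
    (h : ∀ z ∈ C, T z ∈ C') (h' : ∀ z ∈ C', T z ∈ C) (x : Euc d)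
    (hg : ∀ F, IsFaceOf C F → good C F x) (hg' : ∀ F, IsFaceOf C' F → good C' F x) :
    phi C x = phi C' x := by
  classical
  rw [phi_eq, phi_eq]
  refine finsum_mem_eq_of_bijOn (fun F => T '' F) ⟨?_, ?_, ?_⟩ ?_
  · intro F hF; exact face_image hC hC' T hT h h' hF
  · intro F _ G _ e
    have e : T '' F = T '' G := e
    rw [← image_image_invol T hT F, e, image_image_invol T hT G]
  · intro F hF
    exact ⟨T '' F, face_image hC' hC T hT h' h hF, image_image_invol T hT F⟩
  · intro F hF
    have hF' := face_image hC hC' T hT h h' hF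
    rw [wt, wt, if_pos (hg F hF), if_pos (hg' _ hF'), sdim_image T hT]

lemma all_good {d : ℕ} {ι : Type} (A : AffineSubspace ℝ (Euc d)) (s : Finset ι)
    (g : ι → Euc d →ᵃ[ℝ] ℝ) (x z0 : Euc d) (hz0 : z0 ∈ A) (h0 : ∀ i ∈ s, g i z0 = 0)
    (hu : ∀ a ∈ A, ∀ b ∈ A, ⟪x - z0, a - b⟫ = 0) (F : Set (Euc d)) (hF : IsFaceOf (Pol A s g) F) :
    good (Pol A s g) F x := by
  obtain ⟨z, hz, e⟩ := (pol_nice A s g).2.2 F hF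
  refine ⟨z0, ?_, ?_⟩
  · rw [e, mf_pol hz]
    exact ⟨⟨hz0, fun i hi => (h0 i hi).le⟩, fun i hi _ => h0 i hi⟩
  · intro f hf y hy
    have := hu y hy.1 f (hF.2.2.1 hf).1
    rw [← neg_sub, inner_neg_left, this]; simp

lemma phi_no_good {d : ℕ} (C : Set (Euc d)) (x : Euc d) (h : ∀ F, IsFaceOf C F → ¬ good C F x) :
    phi C x = 0 := by
  classical
  rw [phi_eq]
  refine finsum_mem_eq_zero_of_forall_eq_zero fun F hF => ?_
  rw [wt, if_neg (h F hF), mul_zero]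

def Surj {d : ℕ} {ι : Type} (A : AffineSubspace ℝ (Euc d)) (s : Finset ι)
    (g : ι → Euc d →ᵃ[ℝ] ℝ) : Prop := ∀ c : ι → ℝ, ∃ z ∈ A, ∀ i ∈ s, g i z = c i

lemma Surj.flp {d : ℕ} {ι : Type} {A : AffineSubspace ℝ (Euc d)} {s : Finset ι}
    {g : ι → Euc d →ᵃ[ℝ] ℝ} (h : Surj A s g) (t : Finset ι) : Surj A s (flp t g) := by
  classical
  intro c
  obtain ⟨z, hz, h⟩ := h fun i => if i ∈ t then - c i else c i
  refine ⟨z, hz, fun i hi => ?_⟩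
  have := h i hi
  by_cases hit : i ∈ t <;> simp_all [_root_.flp]

lemma Surj.mono {d : ℕ} {ι : Type} {A : AffineSubspace ℝ (Euc d)} {s s' : Finset ι}
    {g : ι → Euc d →ᵃ[ℝ] ℝ} (h : Surj A s g) (hs : s' ⊆ s) : Surj A s' g := by
  intro c
  obtain ⟨z, hz, h⟩ := h c
  exact ⟨z, hz, fun i hi => h i (hs hi)⟩

lemma Surj.hyp {d : ℕ} {ι : Type} [DecidableEq ι] {A : AffineSubspace ℝ (Euc d)} {s : Finset ι}
    {g : ι → Euc d →ᵃ[ℝ] ℝ} (h : Surj A s g) {i : ι} (hi : i ∈ s) :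
    Surj (hyA A (g i)) (s.erase i) g := by
  intro c
  obtain ⟨z, hz, h⟩ := h (Function.update c i 0)
  refine ⟨z, ⟨hz, by rw [h i hi]; simp⟩, fun j hj => ?_⟩
  rw [h j (Finset.mem_of_mem_erase hj), Function.update_of_ne (Finset.ne_of_mem_erase hj)]

theorem phi_simplicial {d : ℕ} {ι : Type} (s : Finset ι) :
    s.Nonempty → ∀ (A : AffineSubspace ℝ (Euc d)) (g : ι → Euc d →ᵃ[ℝ] ℝ), Surj A s g →
      ∀ x, phi (Pol A s g) x = 0 := by
  classical
  induction s using Finset.strongInduction with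
  | H s ih =>
  intro hs A g hg x
  have R : ∀ i ∈ s, ∀ t ⊆ s, i ∉ t →
      phi (Pol A s (flp t g)) x + phi (Pol A s (flp (insert i t) g)) x = 0 := by
    intro i hi t _ hit
    have hv := val_flip A (s.erase i) g i (by simp) t hit x
    rw [Finset.insert_erase hi] at hv
    rw [hv]
    rcases (s.erase i).eq_empty_or_nonempty with he | he
    · rw [he]
      obtain ⟨n, hn, hn'⟩ := hg fun _ => -1
      obtain ⟨p, hp, hp'⟩ := hg fun _ => 1
      exact phi_aff_hy A _ (g i) hn hp (by rw [hn' i hi]; norm_num) (by rw [hp' i hi]; norm_num) x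
    · rw [ih _ (Finset.erase_ssubset hi) he A _ ((hg.mono (Finset.erase_subset i s)).flp t),
        ih _ (Finset.erase_ssubset hi) he _ _ ((hg.hyp hi).flp t), add_zero]
  obtain ⟨q, hq, hq'⟩ := hg 0
  obtain ⟨z0, hz0, hu⟩ := exists_proj (A0 A s g) ⟨q, hq, hq'⟩ x
  obtain ⟨hz0A, hz0g⟩ : z0 ∈ A ∧ ∀ i ∈ s, g i z0 = 0 := id hz0
  have hpex : ∀ i, ∃ p ∈ A, ∀ j ∈ s, g j p = if j = i then 1 else 0 := fun i =>
    hg fun j => if j = i then 1 else 0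
  choose p hpA hp using hpex
  have key : ∀ z ∈ A, ⟪x - z0, z - z0⟫ = ∑ i ∈ s, g i z * ⟪x - z0, p i - z0⟫ := by
    intro z hz
    obtain ⟨h1, h2⟩ := sum_mem_A A hz hz0A p hpA (fun i => -g i z) s
    have h3 : z + ∑ i ∈ s, (-g i z) • (p i - z0) ∈ A0 A s g := by
      refine ⟨h1, fun j hj => ?_⟩
      rw [h2]
      have : ∀ i ∈ s, -g i z * (g j (p i) - g j z0) = if j = i then -g j z else 0 := by
        intro i hi
        rw [hp i j hj, hz0g j hj]
        by_cases hji : j = i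
        · subst hji; simp
        · simp [hji]
      rw [Finset.sum_congr rfl this]
      simp [hj]
    have h4 := hu _ h3 z0 hz0
    have e : z + ∑ i ∈ s, (-g i z) • (p i - z0) - z0 =
        (z - z0) + ∑ i ∈ s, (-g i z) • (p i - z0) := by abel
    rw [e, inner_add_right, inner_sum] at h4
    simp only [inner_smul_right, neg_mul, Finset.sum_neg_distrib] at h4
    linarith
  set a : ι → ℝ := fun i => ⟪x - z0, p i - z0⟫ with ha
  by_cases hall : ∀ i ∈ s, a i = 0
  · obtain ⟨i, hi⟩ := hs
    have hperp : ∀ b ∈ A, ∀ c ∈ A, ⟪x - z0, b - c⟫ = 0 := by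
      have h0 : ∀ z ∈ A, ⟪x - z0, z - z0⟫ = 0 := by
        intro z hz
        rw [key z hz]
        refine Finset.sum_eq_zero fun i hi => ?_
        have := hall i hi
        simp only [ha] at this
        rw [this, mul_zero]
      intro b hb c hc
      have : b - c = (b - z0) - (c - z0) := by abel
      rw [this, inner_sub_right, h0 b hb, h0 c hc, sub_zero]
    have hR := R i hi ∅ (by simp) (by simp)
    rw [flip_empty] at hR
    let T : Euc d →ᵃ[ℝ] Euc d := AffineMap.id ℝ _ +
      ((LinearMap.toSpanSingleton ℝ (Euc d) ((-2:ℝ) • (p i - z0))).toAffineMap.comp (g i))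
    have hTz : ∀ z, T z = (-2 * g i z) • (p i - z0) + z := by
      intro z
      simp only [T, AffineMap.coe_add, Pi.add_apply, AffineMap.id_apply, AffineMap.comp_apply,
        LinearMap.coe_toAffineMap, LinearMap.toSpanSingleton_apply]
      rw [add_comm, smul_smul, mul_comm]
    have hgT : ∀ j ∈ s, ∀ z, g j (T z) = if j = i then - g i z else g j z := by
      intro j hj z
      rw [hTz, aff_eval, hp i j hj, hz0g j hj]
      by_cases hji : j = i
      · subst hji; simp; ring
      · simp [hji]
    have hTT : ∀ z, T (T z) = z := by
      intro z
      rw [hTz (T z), hgT i hi, if_pos rfl, hTz z, ← add_assoc, ← add_smul]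
      simp
    have hTA : ∀ z ∈ A, T z ∈ A := fun z hz => by
      rw [hTz]; exact A_mem A _ (hpA i) hz0A hz
    have hflp : ∀ j, flp (insert i ∅) g j = if j = i then -g i else g j := by
      intro j
      by_cases hji : j = i
      · subst hji; simp [flp]
      · simp [flp, hji]
    have := phi_invol (pol_nice A s g) (pol_nice A s (flp (insert i ∅) g)) T hTT
      (by
        intro z hz
        refine ⟨hTA z hz.1, fun j hj => ?_⟩
        rw [hflp]
        have := hgT j hj z
        have h2 := hz.2 j hj
        by_cases hji : j = i
        · subst hji; simp at this ⊢; rw [this]; linarith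
        · simp [hji] at this ⊢; rw [this]; exact h2)
      (by
        intro z hz
        refine ⟨hTA z hz.1, fun j hj => ?_⟩
        have := hgT j hj z
        have h2 := hz.2 j hj
        rw [hflp] at h2
        by_cases hji : j = i
        · subst hji; simp at this h2 ⊢; rw [this]; linarith
        · simp [hji] at this h2 ⊢; rw [this]; exact h2) x
      (all_good A s g x z0 hz0A hz0g hperp)
      (all_good A s _ x z0 hz0A (by
        intro j hj
        rw [hflp]
        by_cases hji : j = i
        · subst hji; simp [hz0g j hj]
        · simp [hji, hz0g j hj]) hperp)
    omega
  · push Not at hall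
    obtain ⟨i, hi, hai⟩ := hall
    let t := s.filter fun i => a i < 0
    have hts : t ⊆ s := Finset.filter_subset _ _
    have hmt : ∀ j ∈ s, (j ∈ t ↔ a j < 0) := fun j hj => by simp [t, hj]
    suffices h0 : phi (Pol A s (flp t g)) x = 0 by
      have := flip_zero s (fun t => phi (Pol A s (flp t g)) x) R hts h0
      simpa [flip_empty] using this
    apply phi_no_good
    rintro F hF ⟨f, hf, hfx⟩
    have hfC := hF.2.2.1 hf
    have hz0C : ∀ j ∈ s, flp t g j z0 = 0 := by
      intro j hj
      by_cases hjt : j ∈ t <;> simp [flp, hjt, hz0g j hj]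
    have hle : ∀ z ∈ Pol A s (flp t g), ⟪x - z0, z - z0⟫ ≤ 0 := by
      intro z hz
      rw [key z hz.1]
      refine Finset.sum_nonpos fun j hj => ?_
      change g j z * a j ≤ 0
      have h1 := hz.2 j hj
      by_cases hjt : j ∈ t
      · have := (hmt j hj).1 hjt
        simp [flp, hjt] at h1
        nlinarith
      · have : ¬ a j < 0 := fun h => hjt ((hmt j hj).2 h)
        simp [flp, hjt] at h1
        push Not at this
        nlinarith
    have h1 := hfx f hf z0 ⟨hz0A, fun j hj => (hz0C j hj).le⟩
    have h2 := hfx f hf (z0 + (2:ℝ) • (f - z0)) ⟨A_line A _ hz0A hfC.1, fun j hj => by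
      rw [g_line, hz0C j hj]; have := hfC.2 j hj; linarith⟩
    have h3 := hle f hfC
    have e1 : z0 - f = -(f - z0) := by abel
    have e2 : z0 + (2:ℝ) • (f - z0) - f = f - z0 := by match_scalars <;> ring
    have e3 : f - x = (f - z0) - (x - z0) := by abel
    rw [e1, inner_neg_right, e3, inner_sub_left] at h1
    rw [e2, e3, inner_sub_left] at h2
    have h4 : ⟪f - z0, f - z0⟫ = 0 := le_antisymm (by linarith) real_inner_self_nonneg
    rw [inner_self_eq_zero, sub_eq_zero] at h4
    subst h4
    let σ : ℝ := if i ∈ t then 1 else -1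
    have hσ : σ ≠ 0 := by by_cases h : i ∈ t <;> simp [σ, h]
    have hw : f + σ • (p i - f) ∈ Pol A s (flp t g) := by
      refine ⟨A_line A _ hz0A (hpA i), fun j hj => ?_⟩
      rw [g_line, hz0C j hj]
      by_cases hji : j = i
      · subst hji
        by_cases h : j ∈ t <;> simp [σ, h, flp, hp j j hj]
      · by_cases h : j ∈ t <;> simp [h, flp, hp i j hj, hji]
    have h5 := hle _ hw
    have h6 := hfx f hf _ hw
    have e4 : f - x = -(x - f) := by abel
    rw [e4, inner_neg_left] at h6
    have h7 : ⟪x - f, f + σ • (p i - f) - f⟫ = 0 := by linarith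
    rw [add_sub_cancel_left, inner_smul_right] at h7
    rcases mul_eq_zero.1 h7 with h | h
    · exact hσ h
    · exact hai h
/-! ### Constancy -/

lemma face_self {d : ℕ} {P : Set (Euc d)} (h : P.Nonempty) (hP : Convex ℝ P) : IsFaceOf P P :=
  ⟨h, hP, le_rfl, fun _ hx _ _ _ _ _ => hx⟩

theorem phi_const {d : ℕ} {ι : Type} (s : Finset ι) :
    ∀ (A : AffineSubspace ℝ (Euc d)) (g : ι → Euc d →ᵃ[ℝ] ℝ) (x y : Euc d),
      phi (Pol A s g) x = phi (Pol A s g) y := by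
  classical
  induction s using Finset.strongInduction with
  | H s ih =>
  intro A g x y
  rcases s.eq_empty_or_nonempty with rfl | hs
  · rcases (A : Set (Euc d)).eq_empty_or_nonempty with hA | hA
    · rw [pol_empty, hA, phi_empty, phi_empty]
    · rw [phi_aff A hA, phi_aff A hA]
  have R : ∀ i ∈ s, ∀ t ⊆ s, i ∉ t →
      (phi (Pol A s (flp t g)) x - phi (Pol A s (flp t g)) y) +
      (phi (Pol A s (flp (insert i t) g)) x - phi (Pol A s (flp (insert i t) g)) y) = 0 := by
    intro i hi t _ hit
    have hv := val_flip A (s.erase i) g i (by simp) t hit x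
    have hv' := val_flip A (s.erase i) g i (by simp) t hit y
    rw [Finset.insert_erase hi] at hv hv'
    have i1 := ih _ (Finset.erase_ssubset hi) A (flp t g) x y
    have i2 := ih _ (Finset.erase_ssubset hi) (hyA A (g i)) (flp t g) x y
    omega
  by_cases h : ∀ t ⊆ s, ∃ z ∈ A, ∀ i ∈ s, flp t g i z < 0
  · have hS : Surj A s g := fun c => surj_of_regions s g A h c
    rw [phi_simplicial s hs A g hS, phi_simplicial s hs A g hS]
  · push Not at h
    obtain ⟨t, hts, ht⟩ := h
    suffices h0 : phi (Pol A s (flp t g)) x = phi (Pol A s (flp t g)) y by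
      have := flip_zero s
        (fun t => phi (Pol A s (flp t g)) x - phi (Pol A s (flp t g)) y) R hts (sub_eq_zero.2 h0)
      simp only [flip_empty] at this
      exact sub_eq_zero.1 this
    generalize flp t g = G at ht
    rcases (Pol A s G).eq_empty_or_nonempty with hP | hP
    · rw [hP, phi_empty, phi_empty]
    obtain ⟨z, hz, e⟩ := (pol_nice A s G).2.2 _ (face_self hP (pol_convex A s G))
    obtain ⟨i, hi, hiz⟩ := ht z hz.1
    have hi0 : G i z = 0 := le_antisymm (hz.2 i hi) hiz
    have hall : ∀ w ∈ Pol A s G, G i w = 0 := by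
      intro w hw
      rw [e, mf_pol hz] at hw
      exact hw.2 i hi hi0
    have : Pol A s G = Pol (hyA A (G i)) (s.erase i) G := by
      ext w; constructor
      · intro hw
        exact ⟨⟨hw.1, hall w hw⟩, fun j hj => hw.2 j (Finset.mem_of_mem_erase hj)⟩
      · rintro ⟨⟨h1, h2⟩, h3⟩
        refine ⟨h1, fun j hj => ?_⟩
        by_cases hji : j = i
        · rw [hji, h2]
        · exact h3 j (Finset.mem_erase.2 ⟨hji, hj⟩)
    rw [this]
    exact ih _ (Finset.erase_ssubset hi) _ _ x y

lemma polyhedral_pol {d : ℕ} (s : Finset (Euc d × ℝ)) :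
    {x : Euc d | ∀ h ∈ s, ⟪h.1, x⟫ ≤ h.2} =
      Pol ⊤ s (fun h => (innerSL ℝ h.1 : Euc d →L[ℝ] ℝ).toLinearMap.toAffineMap -
        AffineMap.const ℝ _ h.2) := by
  ext z
  constructor
  · intro hz
    refine ⟨trivial, fun h hh => ?_⟩
    have := hz h hh
    simpa using this
  · rintro ⟨_, hz⟩ h hh
    have := hz h hh
    simpa using this

lemma phi_one_at {d : ℕ} {P : Set (Euc d)} (hP : Convex ℝ P) {v : Euc d} (hv : v ∈ P)
    (hmax : ∀ z ∈ P, ‖z‖ ≤ ‖v‖) : phi P (v - (4:ℝ) • v) = 1 := by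
  classical
  have hin : ∀ z ∈ P, ⟪v, z - v⟫ ≤ - (⟪z - v, z - v⟫ / 2) := by
    intro z hz
    have h1 := hmax z hz
    have h2 : ⟪z, z⟫ ≤ ⟪v, v⟫ := by
      rw [real_inner_self_eq_norm_sq, real_inner_self_eq_norm_sq]
      exact pow_le_pow_left₀ (norm_nonneg _) h1 2
    have e : z = v + (z - v) := by abel
    rw [e, inner_add_left, inner_add_right, inner_add_right, real_inner_comm v (z - v)] at h2
    linarith
  have hneg : ∀ z ∈ P, ⟪v, z - v⟫ ≤ 0 := fun z hz => by
    have := hin z hz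
    have := real_inner_self_nonneg (F := Euc d) (x := z - v)
    linarith
  have hmf : mf P v = {v} := by
    apply Set.Subset.antisymm
    · rintro y ⟨hy, ε, hε, hq⟩
      have h1 := hin y hy
      have h2 := hneg _ hq
      rw [add_sub_cancel_left, inner_smul_right, ← neg_sub, inner_neg_right] at h2
      have h3 : 0 ≤ ⟪v, y - v⟫ := by
        by_contra hc; push Not at hc; nlinarith [mul_pos hε (neg_pos.2 hc)]
      have h4 : ⟪y - v, y - v⟫ = 0 := le_antisymm (by linarith) real_inner_self_nonneg
      rw [inner_self_eq_zero, sub_eq_zero] at h4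
      exact h4
    · rintro _ rfl; exact self_mem_mf hv
  have hface : IsFaceOf P {v} := hmf ▸ mf_face hP hv
  have hgood : good P {v} (v - (4:ℝ) • v) := by
    refine ⟨v, rfl, ?_⟩
    rintro _ rfl z hz
    rw [sub_sub_cancel, inner_smul_left]
    have := hneg z hz
    simp only [conj_trivial]; linarith
  have hdim : sdim ({v} : Set (Euc d)) = 0 := by
    unfold sdim
    rw [direction_affineSpan, vectorSpan_singleton, finrank_bot]
  rw [phi_eq, finsum_eq_single _ ({v} : Set (Euc d)) ?_]
  · have hm : ({v} : Set (Euc d)) ∈ {F | IsFaceOf P F} := hface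
    rw [finsum_eq_if, if_pos hm, wt, if_pos hgood, hdim]; simp
  intro F hne
  rw [finsum_eq_if]
  refine ite_eq_right_iff.2 fun hF => ?_
  rw [wt, if_neg, mul_zero]
  rintro ⟨f, hf, hfx⟩
  have hfP := hF.2.2.1 hf
  apply hne
  have h1 := hfx f hf v hv
  have e1 : v - f = -(f - v) := by abel
  have e2 : f - (v - (4:ℝ) • v) = (f - v) + (4:ℝ) • v := by abel
  have h2 := hin f hfP
  have h2' := hneg f hfP
  rw [e1, e2, inner_neg_right, inner_add_left, inner_smul_left] at h1
  simp only [conj_trivial] at h1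
  have h4 : ⟪f - v, f - v⟫ = 0 := le_antisymm (by linarith) real_inner_self_nonneg
  rw [inner_self_eq_zero, sub_eq_zero] at h4
  subst h4
  apply Set.Subset.antisymm
  · intro f' hf'
    have h5 := hfx f' hf' f hv
    rw [sub_sub_cancel, inner_smul_left, ← neg_sub, inner_neg_right] at h5
    simp only [conj_trivial] at h5
    have h6 := hin f' (hF.2.2.1 hf')
    have h7 : ⟪f' - f, f' - f⟫ = 0 := le_antisymm (by linarith) real_inner_self_nonneg
    rw [inner_self_eq_zero, sub_eq_zero] at h7
    exact h7
  · rintro _ rfl; exact hf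

theorem phi_eq_one_of_polytope {d : ℕ} (P : Set (Euc d))
    (hP : IsPolyhedral P) (hne : P.Nonempty) (hb : Bornology.IsBounded P) :
    ∀ x : Euc d, phi P x = 1 := by
  intro x
  obtain ⟨s, hs⟩ := hP
  have hclosed : IsClosed P := by
    have e : P = ⋂ h ∈ s, {x : Euc d | ⟪h.1, x⟫ ≤ h.2} := by
      rw [hs]; ext z; simp only [Set.mem_iInter]; rfl
    rw [e]
    exact isClosed_biInter fun h _ => isClosed_le (by fun_prop) continuous_const
  have hcomp : IsCompact P := Metric.isCompact_of_isClosed_isBounded hclosed hb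
  obtain ⟨v, hv, hmax⟩ := hcomp.exists_isMaxOn hne continuous_norm.continuousOn
  have hpol := hs.trans (polyhedral_pol s)
  have hconv : Convex ℝ P := by rw [hpol]; exact pol_convex _ _ _
  have h1 := phi_one_at hconv hv (fun z hz => hmax hz)
  rw [← h1, hpol]
  exact phi_const _ _ _ _ _
end
end

section
/- For a nonempty unbounded line-free polyhedral set P in ℝ^d, the function φ_P(x) = Σ_{F face of P} (-1)^{dim F} · 1_{F - N(P,F)}(x) is identically equal to 0. -/
open RealInnerProductSpace Pointwise

noncomputable section

def eChar {d : ℕ} (R : Set (Euc d)) : ℤ := by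
  classical exact if R.Nonempty then (-1 : ℤ) ^ sdim R else 0

structure RO {d : ℕ} (W : Submodule ℝ (Euc d)) (R : Set (Euc d)) : Prop where
  conv : Convex ℝ R
  sub : ∀ x ∈ R, ∀ y ∈ R, y - x ∈ W
  opn : ∀ x ∈ R, ∀ v ∈ W, ∀ᶠ t in nhds (0 : ℝ), x + t • v ∈ R

def kerSub {d : ℕ} (a : Euc d) : Submodule ℝ (Euc d) := LinearMap.ker (innerₛₗ ℝ a)

lemma mem_kerSub {d : ℕ} (a v : Euc d) : v ∈ kerSub a ↔ inner ℝ a v = 0 := by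
  simp [kerSub]

lemma eChar_empty {d : ℕ} : eChar (∅ : Set (Euc d)) = 0 := by simp [eChar]

lemma eChar_of_not {d : ℕ} {R : Set (Euc d)} (h : ¬ R.Nonempty) : eChar R = 0 := by
  simp [eChar, h]

/-- If `W` is sandwiched then the dimension is that of `W`. -/
lemma sdim_eq {d : ℕ} {W : Submodule ℝ (Euc d)} {R F : Set (Euc d)} (h : RO W R)
    (hne : R.Nonempty) (hRF : R ⊆ F) (hF : ∀ x ∈ F, ∀ y ∈ F, y - x ∈ W) :
    sdim F = Module.finrank ℝ W := by
  have : (affineSpan ℝ F).direction = W := by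
    rw [direction_affineSpan]
    apply le_antisymm
    · rw [vectorSpan_def, Submodule.span_le]
      rintro _ ⟨y, hy, x, hx, rfl⟩
      exact hF x hx y hy
    · intro v hv
      obtain ⟨x, hx⟩ := hne
      have h1 := h.opn x hx v hv
      obtain ⟨ε, hε, h2⟩ := Metric.eventually_nhds_iff.1 h1
      have h3 : x + (ε / 2) • v ∈ R := h2 (by
        rw [Real.dist_eq, sub_zero, abs_of_pos (by linarith)]; linarith)
      have h4 := vsub_mem_vectorSpan ℝ (hRF h3) (hRF hx)
      have h5 := (vectorSpan ℝ F).smul_mem (ε / 2)⁻¹ h4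
      have : (ε / 2) ≠ 0 := by positivity
      have h6 : (x + (ε / 2) • v) -ᵥ x = (ε / 2) • v := by simp
      rwa [h6, inv_smul_smul₀ this] at h5
  rw [sdim, this]

lemma eChar_eq {d : ℕ} {W : Submodule ℝ (Euc d)} {R : Set (Euc d)} (h : RO W R)
    (hne : R.Nonempty) : eChar R = (-1 : ℤ) ^ Module.finrank ℝ W := by
  simp [eChar, hne, sdim_eq h hne subset_rfl h.sub]

lemma RO.lt {d : ℕ} {W : Submodule ℝ (Euc d)} {R : Set (Euc d)} (h : RO W R) (a : Euc d) (b : ℝ) :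
    RO W (R ∩ {x | inner ℝ a x < b}) := by
  refine ⟨h.conv.inter ?_, fun x hx y hy => h.sub x hx.1 y hy.1, ?_⟩
  · exact convex_halfSpace_lt (innerₛₗ ℝ a).isLinear b
  · intro x hx v hv
    refine (h.opn x hx.1 v hv).and ?_
    have hc : Continuous fun t : ℝ => inner ℝ a (x + t • v) := by fun_prop
    exact hc.continuousAt.eventually_lt continuousAt_const (by simpa using hx.2)

lemma RO.gt {d : ℕ} {W : Submodule ℝ (Euc d)} {R : Set (Euc d)} (h : RO W R) (a : Euc d) (b : ℝ) :
    RO W (R ∩ {x | b < inner ℝ a x}) := by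
  have := h.lt (-a) (-b)
  simpa using this

lemma RO.eq {d : ℕ} {W : Submodule ℝ (Euc d)} {R : Set (Euc d)} (h : RO W R) (a : Euc d) (b : ℝ) :
    RO (W ⊓ kerSub a) (R ∩ {x | inner ℝ a x = b}) := by
  refine ⟨h.conv.inter ?_, fun x hx y hy => ⟨h.sub x hx.1 y hy.1, ?_⟩, ?_⟩
  · exact convex_hyperplane (innerₛₗ ℝ a).isLinear b
  · have h1 : inner ℝ a x = b := hx.2
    have h2 : inner ℝ a y = b := hy.2
    show y - x ∈ kerSub a
    rw [mem_kerSub, inner_sub_right, h1, h2, sub_self]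
  · intro x hx v hv
    filter_upwards [h.opn x hx.1 v hv.1] with t ht
    refine ⟨ht, ?_⟩
    have h1 : inner ℝ a x = b := hx.2
    have h2 : inner ℝ a v = 0 := (mem_kerSub _ _).1 hv.2
    simp [inner_add_right, inner_smul_right, h1, h2]

lemma RO.congr_exists {d : ℕ} {R R' : Set (Euc d)} (h : ∃ W, RO W R) (e : R = R') : ∃ W, RO W R' :=
  e ▸ h

lemma finrank_inf_ker {d : ℕ} (W : Submodule ℝ (Euc d)) (a : Euc d)
    (h : ∃ v ∈ W, inner ℝ a v ≠ 0) :
    Module.finrank ℝ W = Module.finrank ℝ (W ⊓ kerSub a : Submodule ℝ (Euc d)) + 1 := by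
  obtain ⟨v, hv, hav⟩ := h
  let g : W →ₗ[ℝ] ℝ := (innerₛₗ ℝ a).domRestrict W
  have h1 := g.finrank_range_add_finrank_ker
  have hs : LinearMap.range g = ⊤ := by
    rw [LinearMap.range_eq_top]
    intro c
    refine ⟨(c / inner ℝ a v) • ⟨v, hv⟩, ?_⟩
    simp [g, hav]
  have h2 : Module.finrank ℝ (LinearMap.ker g) =
      Module.finrank ℝ (W ⊓ kerSub a : Submodule ℝ (Euc d)) := by
    have : (W ⊓ kerSub a : Submodule ℝ (Euc d)) = (LinearMap.ker g).map W.subtype := by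
      ext y
      simp [g, kerSub, and_comm]
    rw [this]
    exact (LinearEquiv.finrank_eq (Submodule.equivMapOfInjective _ W.injective_subtype _))
  rw [hs, finrank_top, Module.finrank_self, h2] at h1
  omega

lemma eChar_cut {d : ℕ} {W : Submodule ℝ (Euc d)} {R : Set (Euc d)} (h : RO W R)
    (a : Euc d) (b : ℝ) :
    eChar R = eChar (R ∩ {x | inner ℝ a x < b}) + eChar (R ∩ {x | inner ℝ a x = b})
      + eChar (R ∩ {x | b < inner ℝ a x}) := by
  by_cases hz : (R ∩ {x | inner ℝ a x = b}).Nonempty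
  · obtain ⟨x, hx, hxb⟩ := hz
    simp only [Set.mem_ofPred_eq] at hxb
    by_cases hW : ∃ v ∈ W, inner ℝ a v ≠ 0
    · have key : ∃ v ∈ W, 0 < inner ℝ a v := by
        obtain ⟨v, hv, hav⟩ := hW
        rcases lt_or_gt_of_ne hav with h1 | h1
        · exact ⟨-v, W.neg_mem hv, by simpa using h1⟩
        · exact ⟨v, hv, h1⟩
      obtain ⟨v, hv, hav⟩ := key
      obtain ⟨ε, hε, h2⟩ := Metric.eventually_nhds_iff.1 (h.opn x hx v hv)
      have hp : (R ∩ {x | b < inner ℝ a x}).Nonempty := by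
        refine ⟨x + (ε / 2) • v, h2 (by
          rw [Real.dist_eq, sub_zero, abs_of_pos (by linarith)]; linarith), ?_⟩
        simp only [Set.mem_ofPred_eq, inner_add_right, inner_smul_right, hxb]
        have : 0 < ε / 2 * inner ℝ a v := by positivity
        linarith
      have hm : (R ∩ {x | inner ℝ a x < b}).Nonempty := by
        refine ⟨x + (-(ε / 2)) • v, h2 (by
          rw [Real.dist_eq, sub_zero, abs_neg, abs_of_pos (by linarith)]; linarith), ?_⟩
        simp only [Set.mem_ofPred_eq, inner_add_right, inner_smul_right, hxb]
        have : 0 < ε / 2 * inner ℝ a v := by positivity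
        linarith
      rw [eChar_eq h ⟨x, hx⟩, eChar_eq (h.lt a b) hm, eChar_eq (h.gt a b) hp,
        eChar_eq (h.eq a b) ⟨x, hx, hxb⟩, finrank_inf_ker W a hW, pow_succ]
      ring
    · push Not at hW
      have hall : ∀ y ∈ R, inner ℝ a y = b := by
        intro y hy
        have := hW _ (h.sub x hx y hy)
        rw [inner_sub_right] at this
        linarith
      have e1 : R ∩ {x | inner ℝ a x = b} = R := by
        ext y; simp only [Set.mem_inter_iff, Set.mem_ofPred_eq, and_iff_left_iff_imp]; exact hall y
      have e2 : R ∩ {x | inner ℝ a x < b} = ∅ := by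
        ext y; simp only [Set.mem_inter_iff, Set.mem_ofPred_eq, Set.mem_empty_iff_false, iff_false]
        rintro ⟨h1, h2⟩; have := hall y h1; linarith
      have e3 : R ∩ {x | b < inner ℝ a x} = ∅ := by
        ext y; simp only [Set.mem_inter_iff, Set.mem_ofPred_eq, Set.mem_empty_iff_false, iff_false]
        rintro ⟨h1, h2⟩; have := hall y h1; linarith
      rw [e1, e2, e3, eChar_empty]; ring
  · rw [eChar_of_not hz]
    have hne : ∀ y ∈ R, inner ℝ a y ≠ b := fun y hy hyb => hz ⟨y, hy, hyb⟩
    by_cases hp : (R ∩ {x | b < inner ℝ a x}).Nonempty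
    · obtain ⟨y, hy, hyb⟩ := hp
      simp only [Set.mem_ofPred_eq] at hyb
      have hall : ∀ z ∈ R, b < inner ℝ a z := by
        intro z hzR
        by_contra hcon
        have hlt : inner ℝ a z < b := lt_of_le_of_ne (not_lt.1 hcon) (hne z hzR)
        set p := inner ℝ a y
        set q := inner ℝ a z
        have hpq : 0 < p - q := by linarith
        have := h.conv hy hzR (a := (b - q) / (p - q)) (b := (p - b) / (p - q))
          (div_nonneg (by linarith) hpq.le) (div_nonneg (by linarith) hpq.le)
          (by field_simp; ring)
        refine hne _ this ?_
        rw [inner_add_right, inner_smul_right, inner_smul_right]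
        change (b - q) / (p - q) * p + (p - b) / (p - q) * q = b
        field_simp
        ring
      have e1 : R ∩ {x | b < inner ℝ a x} = R := by
        ext y; simp only [Set.mem_inter_iff, Set.mem_ofPred_eq, and_iff_left_iff_imp]; exact hall y
      have e2 : R ∩ {x | inner ℝ a x < b} = ∅ := by
        ext y; simp only [Set.mem_inter_iff, Set.mem_ofPred_eq, Set.mem_empty_iff_false, iff_false]
        rintro ⟨h1, h2⟩; have := hall y h1; linarith
      rw [e1, e2, eChar_empty]; ring
    · rw [eChar_of_not hp]
      have e1 : R ∩ {x | inner ℝ a x < b} = R := by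
        ext y; simp only [Set.mem_inter_iff, Set.mem_ofPred_eq, and_iff_left_iff_imp]
        intro hy
        refine lt_of_le_of_ne (not_lt.1 fun hcon => hp ⟨y, hy, hcon⟩) (hne y hy)
      rw [e1]; ring

def cell {d : ℕ} (A S : Finset (Euc d × ℝ)) : Set (Euc d) :=
  {x | ∀ i ∈ S, (i ∈ A → inner ℝ i.1 x = i.2) ∧ (i ∉ A → inner ℝ i.1 x < i.2)}

def WA {d : ℕ} (A : Finset (Euc d × ℝ)) : Submodule ℝ (Euc d) := ⨅ i ∈ A, kerSub i.1

lemma mem_WA {d : ℕ} (A : Finset (Euc d × ℝ)) (v : Euc d) :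
    v ∈ WA A ↔ ∀ i ∈ A, inner ℝ i.1 v = 0 := by
  simp [WA, Submodule.mem_iInf, mem_kerSub]

lemma RO.cell {d : ℕ} {W : Submodule ℝ (Euc d)} {R : Set (Euc d)} (h : RO W R)
    {A S : Finset (Euc d × ℝ)} (hAS : A ⊆ S) : RO (W ⊓ WA A) (R ∩ cell A S) := by
  refine ⟨h.conv.inter ?_, fun x hx y hy => ⟨h.sub x hx.1 y hy.1, ?_⟩, ?_⟩
  · have : _root_.cell A S = ⋂ i ∈ S, {x | (i ∈ A → inner ℝ i.1 x = i.2) ∧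
        (i ∉ A → inner ℝ i.1 x < i.2)} := by
      ext x; simp [_root_.cell]
    rw [this]
    refine convex_iInter₂ fun i hi => ?_
    by_cases hiA : i ∈ A
    · simpa [hiA] using convex_hyperplane (innerₛₗ ℝ i.1).isLinear i.2
    · simpa [hiA] using convex_halfSpace_lt (innerₛₗ ℝ i.1).isLinear i.2
  · show y - x ∈ WA A
    rw [mem_WA]
    intro i hi
    have h1 := (hx.2 i (hAS hi)).1 hi
    have h2 := (hy.2 i (hAS hi)).1 hi
    rw [inner_sub_right, h1, h2, sub_self]
  · intro x hx v hv
    refine (h.opn x hx.1 v hv.1).and ?_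
    have : ∀ᶠ t in nhds (0 : ℝ), ∀ i ∈ S, (i ∈ A → inner ℝ i.1 (x + t • v) = i.2) ∧
        (i ∉ A → inner ℝ i.1 (x + t • v) < i.2) := by
      rw [Filter.eventually_all_finset]
      intro i hi
      by_cases hiA : i ∈ A
      · have h1 := (hx.2 i hi).1 hiA
        have h2 := (mem_WA A v).1 hv.2 i hiA
        simp [hiA, inner_add_right, inner_smul_right, h1, h2]
      · have hc : Continuous fun t : ℝ => inner ℝ i.1 (x + t • v) := by fun_prop
        have h1 := (hx.2 i hi).2 hiA
        have := hc.continuousAt.eventually_lt continuousAt_const (x₀ := (0:ℝ)) (g := fun _ => i.2)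
          (by simpa using h1)
        simpa [hiA] using this
    exact this

lemma RO.univ {d : ℕ} : RO (⊤ : Submodule ℝ (Euc d)) Set.univ :=
  ⟨convex_univ, fun _ _ _ _ => trivial, fun _ _ _ _ => by simp⟩

lemma RO_cell {d : ℕ} {A S : Finset (Euc d × ℝ)} (hAS : A ⊆ S) : RO (WA A) (cell A S) := by
  simpa using RO.univ.cell hAS

def XX {d : ℕ} (R : Set (Euc d)) (S : Finset (Euc d × ℝ)) : ℤ :=
  ∑ A ∈ S.powerset, eChar (R ∩ cell A S)

lemma XX_cut {d : ℕ} {W : Submodule ℝ (Euc d)} {R : Set (Euc d)} (h : RO W R)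
    (S : Finset (Euc d × ℝ)) (a : Euc d) (b : ℝ) :
    XX R S = XX (R ∩ {x | inner ℝ a x < b}) S + XX (R ∩ {x | inner ℝ a x = b}) S
      + XX (R ∩ {x | b < inner ℝ a x}) S := by
  unfold XX
  rw [← Finset.sum_add_distrib, ← Finset.sum_add_distrib]
  refine Finset.sum_congr rfl fun A hA => ?_
  rw [eChar_cut (h.cell (Finset.mem_powerset.1 hA)) a b]
  simp only [Set.inter_right_comm]

open Classical in
lemma XX_insert {d : ℕ} (R : Set (Euc d)) (S : Finset (Euc d × ℝ)) (i : Euc d × ℝ) (hi : i ∉ S) :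
    XX R (insert i S) = XX (R ∩ {x | inner ℝ i.1 x < i.2}) S
      + XX (R ∩ {x | inner ℝ i.1 x = i.2}) S := by
  unfold XX
  rw [Finset.sum_powerset_insert hi]
  congr 1
  · refine Finset.sum_congr rfl fun A hA => ?_
    have hiA : i ∉ A := fun h => hi (Finset.mem_powerset.1 hA h)
    congr 1
    ext x
    simp [cell, hiA, and_assoc]
  · refine Finset.sum_congr rfl fun A hA => ?_
    congr 1
    ext x
    have this_ne : ∀ j ∈ S, j ≠ i := fun j hj e => hi (e ▸ hj)
    constructor
    · rintro ⟨hx, hc⟩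
      refine ⟨⟨hx, (hc i (Finset.mem_insert_self _ _)).1 (Finset.mem_insert_self _ _)⟩, ?_⟩
      intro j hj
      have := hc j (Finset.mem_insert_of_mem hj)
      simpa [Finset.mem_insert, this_ne j hj] using this
    · rintro ⟨⟨hx, hxi⟩, hc⟩
      refine ⟨hx, ?_⟩
      intro j hj
      rcases Finset.mem_insert.1 hj with rfl | hj
      · exact ⟨fun _ => hxi, fun h => absurd (Finset.mem_insert_self _ _) h⟩
      · have := hc j hj
        simpa [Finset.mem_insert, this_ne j hj] using this

lemma XX_rec {d : ℕ} (r a : Euc d) (b : ℝ) (har : inner ℝ a r < 0) (S : Finset (Euc d × ℝ)) :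
    ∀ (R : Set (Euc d)) (W : Submodule ℝ (Euc d)), RO W R →
      (∀ x ∈ R, ∀ t : ℝ, 0 ≤ t → x - t • r ∈ R) → (∀ i ∈ S, inner ℝ i.1 r ≤ 0) →
      XX (R ∩ {x | inner ℝ a x < b}) S + XX (R ∩ {x | inner ℝ a x = b}) S = 0 := by
  classical
  induction S using Finset.induction_on with
  | empty =>
    intro R W h hr _
    have e : ∀ R : Set (Euc d), XX R ∅ = eChar R := by
      intro R; simp [XX, cell]
    rw [e, e]
    have h1 := eChar_cut h a b
    suffices eChar R = eChar (R ∩ {x | b < inner ℝ a x}) by linarith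
    by_cases hne : R.Nonempty
    · obtain ⟨x, hx⟩ := hne
      have : (R ∩ {x | b < inner ℝ a x}).Nonempty := by
        refine ⟨x - ((|b - inner ℝ a x| + 1) / (- inner ℝ a r)) • r,
          hr x hx _ (div_nonneg (by positivity) (by linarith)), ?_⟩
        simp only [Set.mem_ofPred_eq, inner_sub_right, inner_smul_right]
        have : (|b - inner ℝ a x| + 1) / (- inner ℝ a r) * inner ℝ a r
          = - (|b - inner ℝ a x| + 1) := by
          have := har.ne
          field_simp
        rw [this]
        have := le_abs_self (b - inner ℝ a x)
        linarith
      rw [eChar_eq h ⟨x, hx⟩, eChar_eq (h.gt a b) this]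
    · rw [eChar_of_not hne, eChar_of_not fun h => hne (h.mono Set.inter_subset_left)]
  | insert i S hi ih =>
    intro R W h hr hS
    rw [XX_insert _ _ _ hi, XX_insert _ _ _ hi]
    have h1 := XX_cut (h.lt a b) S i.1 i.2
    have h2 := XX_cut (h.eq a b) S i.1 i.2
    have h3 := ih R W h hr (fun j hj => hS j (Finset.mem_insert_of_mem hj))
    have h4 := ih (R ∩ {x | i.2 < inner ℝ i.1 x}) W (h.gt _ _) (by
      rintro x ⟨hx, hxi⟩ t ht
      refine ⟨hr x hx t ht, ?_⟩
      simp only [Set.mem_ofPred_eq, inner_sub_right, inner_smul_right] at hxi ⊢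
      have := hS i (Finset.mem_insert_self _ _)
      nlinarith) (fun j hj => hS j (Finset.mem_insert_of_mem hj))
    rw [Set.inter_right_comm R _ {x | inner ℝ a x < b}, Set.inter_right_comm R _ {x | inner ℝ a x = b}] at h4
    linarith

def PP {d : ℕ} (S : Finset (Euc d × ℝ)) : Set (Euc d) := {x | ∀ h ∈ S, inner ℝ h.1 x ≤ h.2}

def FF {d : ℕ} (A S : Finset (Euc d × ℝ)) : Set (Euc d) :=
  PP S ∩ {x | ∀ i ∈ A, inner ℝ i.1 x = i.2}

lemma chi_zero {d : ℕ} (S : Finset (Euc d × ℝ)) (r : Euc d) (hr : ∀ i ∈ S, inner ℝ i.1 r ≤ 0)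
    (k : Euc d × ℝ) (hk : k ∈ S) (hkr : inner ℝ k.1 r < 0) :
    ∑ A ∈ S.powerset, eChar (cell A S) = 0 := by
  classical
  have h := XX_rec r k.1 k.2 hkr (S.erase k) Set.univ ⊤ RO.univ (fun _ _ _ _ => trivial)
    (fun i hi => hr i (Finset.mem_of_mem_erase hi))
  rw [← XX_insert _ _ _ (Finset.notMem_erase k S), Finset.insert_erase hk] at h
  simpa [XX] using h

lemma cell_sub_FF {d : ℕ} {A S : Finset (Euc d × ℝ)} (hA : A ⊆ S) : cell A S ⊆ FF A S := by
  intro x hx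
  refine ⟨fun i hi => ?_, fun i hi => (hx i (hA hi)).1 hi⟩
  by_cases h : i ∈ A
  · exact ((hx i hi).1 h).le
  · exact ((hx i hi).2 h).le

lemma FF_sub {d : ℕ} {A S : Finset (Euc d × ℝ)} : ∀ x ∈ FF A S, ∀ y ∈ FF A S, y - x ∈ WA A := by
  intro x hx y hy
  rw [mem_WA]
  intro i hi
  rw [inner_sub_right, hx.2 i hi, hy.2 i hi, sub_self]

lemma FF_convex {d : ℕ} (A S : Finset (Euc d × ℝ)) : Convex ℝ (FF A S) := by
  have h1 : Convex ℝ (⋂ i ∈ S, {x : Euc d | inner ℝ i.1 x ≤ i.2}) := by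
    refine convex_iInter₂ fun i _ => ?_
    exact convex_halfSpace_le (innerₛₗ ℝ i.1).isLinear i.2
  have h2 : Convex ℝ (⋂ i ∈ A, {x : Euc d | inner ℝ i.1 x = i.2}) := by
    refine convex_iInter₂ fun i _ => ?_
    exact convex_hyperplane (innerₛₗ ℝ i.1).isLinear i.2
  convert h1.inter h2 using 1
  ext x; simp [FF, PP]

lemma FF_closed {d : ℕ} (A S : Finset (Euc d × ℝ)) : IsClosed (FF A S) := by
  have hc : ∀ a : Euc d, Continuous fun x : Euc d => inner ℝ a x := fun a => by fun_prop
  have h1 : IsClosed (⋂ i ∈ S, {x : Euc d | inner ℝ i.1 x ≤ i.2}) := by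
    refine isClosed_iInter fun i => isClosed_iInter fun _ => ?_
    exact isClosed_le (hc i.1) continuous_const
  have h2 : IsClosed (⋂ i ∈ A, {x : Euc d | inner ℝ i.1 x = i.2}) := by
    refine isClosed_iInter fun i => isClosed_iInter fun _ => ?_
    exact isClosed_eq (hc i.1) continuous_const
  convert h1.inter h2 using 1
  ext x; simp [FF, PP]

/-- moving slightly from a point `f` of `P` with active set `A₀ ⊇ A` towards a point of the cell
of the local cone lands in the cell of `P`. -/
lemma move_in {d : ℕ} {A S A₀ : Finset (Euc d × ℝ)} {f q : Euc d} (hf : f ∈ PP S)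
    (hA₀ : ∀ i ∈ S, i ∈ A₀ ↔ inner ℝ i.1 f = i.2) (hS : A₀ ⊆ S) (hA : A ⊆ A₀)
    (hq : q ∈ cell A A₀) :
    ∃ ε : ℝ, 0 < ε ∧ f + ε • (q - f) ∈ cell A S := by
  have h1 : ∀ᶠ t in nhdsWithin (0 : ℝ) (Set.Ioi 0), f + t • (q - f) ∈ cell A S := by
    have : ∀ᶠ t in nhdsWithin (0 : ℝ) (Set.Ioi 0), ∀ i ∈ S,
        (i ∈ A → inner ℝ i.1 (f + t • (q - f)) = i.2) ∧
        (i ∉ A → inner ℝ i.1 (f + t • (q - f)) < i.2) := by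
      rw [Filter.eventually_all_finset]
      intro i hi
      by_cases hi0 : i ∈ A₀
      · have hfi := (hA₀ i hi).1 hi0
        filter_upwards [self_mem_nhdsWithin] with t ht
        have ht : 0 < t := ht
        rw [inner_add_right, inner_smul_right, inner_sub_right, hfi]
        refine ⟨fun hiA => ?_, fun hiA => ?_⟩
        · rw [(hq i hi0).1 hiA]; ring
        · have := (hq i hi0).2 hiA
          nlinarith
      · have hfi : inner ℝ i.1 f < i.2 :=
          lt_of_le_of_ne (hf i hi) fun h => hi0 ((hA₀ i hi).2 h)
        have hc : Continuous fun t : ℝ => inner ℝ i.1 (f + t • (q - f)) := by fun_prop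
        have := hc.continuousAt.eventually_lt continuousAt_const (x₀ := (0:ℝ)) (g := fun _ => i.2)
          (by simpa using hfi)
        filter_upwards [nhdsWithin_le_nhds this] with t ht
        exact ⟨fun hiA => absurd (hA hiA) hi0, fun _ => ht⟩
    exact this
  obtain ⟨t, ht, ht0⟩ := (h1.and self_mem_nhdsWithin).exists
  exact ⟨t, ht0, ht⟩

lemma cell_mono {d : ℕ} {A S A₀ : Finset (Euc d × ℝ)} (hS : A₀ ⊆ S) : cell A S ⊆ cell A A₀ :=
  fun _ hx i hi => hx i (hS hi)

open Classical in
lemma local_zero {d : ℕ} (S : Finset (Euc d × ℝ)) (f w p : Euc d) (hf : f ∈ PP S) (hp : p ∈ PP S)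
    (hw : inner ℝ w (p - f) < 0) :
    ∑ A ∈ S.powerset, (if f ∈ FF A S ∧ ∀ z ∈ FF A S, inner ℝ w (z - f) ≤ 0
      then eChar (cell A S) else 0) = 0 := by
  set A₀ := S.filter (fun i => inner ℝ i.1 f = i.2) with hA₀def
  have hS : A₀ ⊆ S := Finset.filter_subset _ _
  have hA₀ : ∀ i ∈ S, i ∈ A₀ ↔ inner ℝ i.1 f = i.2 := by
    intro i hi; simp [hA₀def, hi]
  have h0 := XX_rec (p - f) w (inner ℝ w f) hw A₀ Set.univ ⊤ RO.univ (fun _ _ _ _ => trivial)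
    (fun i hi => by
      rw [inner_sub_right, (hA₀ i (hS hi)).1 hi]
      linarith [hp i (hS hi)])
  refine Eq.trans ?_ h0
  rw [XX, XX, ← Finset.sum_add_distrib]
  symm
  apply Finset.sum_subset_zero_on_sdiff (Finset.powerset_mono.2 hS)
  · intro A hA
    rw [Finset.mem_sdiff, Finset.mem_powerset, Finset.mem_powerset] at hA
    rw [if_neg]
    rintro ⟨h1, -⟩
    exact hA.2 fun i hi => (hA₀ i (hA.1 hi)).2 (h1.2 i hi)
  · intro A hA
    rw [Finset.mem_powerset] at hA
    have hAS := hA.trans hS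
    have hfA : f ∈ FF A S := ⟨hf, fun i hi => (hA₀ i (hAS hi)).1 (hA hi)⟩
    have hcut := eChar_cut (RO_cell hA) w (inner ℝ w f)
    simp only [Set.univ_inter, Set.inter_comm _ (cell A A₀)]
    have hL : eChar (cell A A₀ ∩ {x | inner ℝ w x < inner ℝ w f}) +
        eChar (cell A A₀ ∩ {x | inner ℝ w x = inner ℝ w f}) =
        eChar (cell A A₀) - eChar (cell A A₀ ∩ {x | inner ℝ w f < inner ℝ w x}) := by linarith
    rw [hL]
    by_cases hne : (cell A A₀).Nonempty
    · have hne' : (cell A S).Nonempty := by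
        obtain ⟨q, hq⟩ := hne
        obtain ⟨ε, -, h⟩ := move_in hf hA₀ hS hA hq
        exact ⟨_, h⟩
      rw [eChar_eq (RO_cell hA) hne, eChar_eq (RO_cell hAS) hne']
      by_cases hpos : (cell A A₀ ∩ {x | inner ℝ w f < inner ℝ w x}).Nonempty
      · rw [eChar_eq ((RO_cell hA).gt _ _) hpos, sub_self, if_neg]
        rintro ⟨-, h⟩
        obtain ⟨q, hq, hqw⟩ := hpos
        obtain ⟨ε, hε, h2⟩ := move_in hf hA₀ hS hA hq
        have := h _ (cell_sub_FF hAS h2)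
        rw [add_sub_cancel_left, inner_smul_right, inner_sub_right] at this
        have hqw : inner ℝ w f < inner ℝ w q := hqw
        nlinarith
      · rw [eChar_of_not hpos, sub_zero, if_pos]
        refine ⟨hfA, fun z hz => ?_⟩
        by_contra hcon
        push Not at hcon
        obtain ⟨p₀, hp₀⟩ := hne'
        have h1 : ∀ᶠ t in nhdsWithin (0 : ℝ) (Set.Ioi 0),
            inner ℝ w f < inner ℝ w (z + t • (p₀ - z)) := by
          have hc : Continuous fun t : ℝ => inner ℝ w (z + t • (p₀ - z)) := by fun_prop
          refine nhdsWithin_le_nhds (continuousAt_const.eventually_lt hc.continuousAt ?_)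
          rw [inner_sub_right] at hcon
          simpa using hcon
        have h2 : ∀ᶠ t in nhdsWithin (0 : ℝ) (Set.Ioi 0), z + t • (p₀ - z) ∈ cell A A₀ := by
          filter_upwards [Ioo_mem_nhdsGT (show (0:ℝ) < 1 by norm_num)] with t ht i hi
          have hzi := hz.1 i (hS hi)
          rw [inner_add_right, inner_smul_right, inner_sub_right]
          refine ⟨fun hiA => ?_, fun hiA => ?_⟩
          · rw [hz.2 i hiA, (hp₀ i (hS hi)).1 hiA]; ring
          · have := (hp₀ i (hS hi)).2 hiA
            nlinarith [ht.1, ht.2, mul_pos ht.1 (sub_pos.2 this),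
              mul_nonneg (sub_nonneg.2 ht.2.le) (sub_nonneg.2 hzi)]
        obtain ⟨t, ht1, ht2⟩ := (h1.and h2).exists
        exact hpos ⟨_, ht2, ht1⟩
    · have hne' : ¬ (cell A S).Nonempty := fun h => hne (h.mono (cell_mono hS))
      rw [eChar_of_not hne, eChar_of_not hne', eChar_of_not fun h => hne (h.mono Set.inter_subset_left)]
      simp

lemma FF_face {d : ℕ} {A S : Finset (Euc d × ℝ)} (hA : A ⊆ S) (hne : (cell A S).Nonempty) :
    IsFaceOf (PP S) (FF A S) := by
  refine ⟨hne.mono (cell_sub_FF hA), FF_convex A S, Set.inter_subset_left, ?_⟩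
  rintro x hx y hy z hz ⟨a, b, ha, hb, hab, rfl⟩
  refine ⟨hx, fun i hi => ?_⟩
  have h1 := hz.2 i hi
  rw [inner_add_right, inner_smul_right, inner_smul_right] at h1
  have h2 := hx i (hA hi)
  have h3 := hy i (hA hi)
  refine le_antisymm h2 ?_
  by_contra hcon
  push Not at hcon
  have hb' : a = 1 - b := by linarith
  subst hb'
  nlinarith [mul_pos ha (sub_pos.2 hcon), mul_nonneg hb.le (sub_nonneg.2 h3)]

lemma face_eq {d : ℕ} {S : Finset (Euc d × ℝ)} {F : Set (Euc d)} (hF : IsFaceOf (PP S) F) :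
    ∃ A ⊆ S, (cell A S).Nonempty ∧ FF A S = F := by
  classical
  obtain ⟨hne, hconv, hext⟩ := hF
  let act : Euc d → Finset (Euc d × ℝ) := fun p => S.filter (fun i => inner ℝ i.1 p = i.2)
  obtain ⟨p, hpF, hmin⟩ : ∃ p ∈ F, ∀ q ∈ F, (act p).card ≤ (act q).card := by
    have hex : ∃ n, ∃ p ∈ F, (act p).card = n := by
      obtain ⟨p, hp⟩ := hne
      exact ⟨_, p, hp, rfl⟩
    obtain ⟨p, hp, h⟩ := Nat.find_spec hex
    exact ⟨p, hp, fun q hq => h ▸ Nat.find_min' hex ⟨q, hq, rfl⟩⟩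
  have hpP := hext.subset hpF
  have hcell : p ∈ cell (act p) S := by
    intro i hi
    simp only [act, Finset.mem_filter, hi, true_and]
    exact ⟨id, fun h => lt_of_le_of_ne (hpP i hi) h⟩
  refine ⟨act p, Finset.filter_subset _ _, ⟨p, hcell⟩, ?_⟩
  apply Set.Subset.antisymm
  · intro q hq
    have h1 : ∀ᶠ t in nhds (0 : ℝ), p + t • (p - q) ∈ cell (act p) S :=
      (RO_cell (Finset.filter_subset _ _)).opn p hcell _
        (FF_sub q hq p (cell_sub_FF (Finset.filter_subset _ _) hcell))
    obtain ⟨ε, hε, h2⟩ := Metric.eventually_nhds_iff.1 h1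
    have h3 : p + (ε / 2) • (p - q) ∈ cell (act p) S := h2 (by
        rw [Real.dist_eq, sub_zero, abs_of_pos (by linarith)]; linarith)
    have h4 := (cell_sub_FF (Finset.filter_subset _ _) h3).1
    refine hext.left_mem_of_mem_openSegment hq.1 h4 hpF
      ⟨(ε / 2) / (1 + ε / 2), 1 / (1 + ε / 2), by positivity, by positivity, by field_simp; ring, ?_⟩
    have : (1 + ε / 2) ≠ 0 := by positivity
    generalize hδ : ε / 2 = δ at this
    match_scalars
    · field_simp
      ring
    · field_simp
  · intro q hq
    refine ⟨hext.subset hq, ?_⟩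
    have hm : (1 / 2 : ℝ) • p + (1 / 2 : ℝ) • q ∈ F :=
      hconv hpF hq (by norm_num) (by norm_num) (by norm_num)
    have hqP := hext.subset hq
    have hin : act ((1 / 2 : ℝ) • p + (1 / 2 : ℝ) • q) ⊆ act p ∩ act q := by
      intro i hi
      simp only [act, Finset.mem_filter, Finset.mem_inter, inner_add_right, inner_smul_right] at hi ⊢
      obtain ⟨hi, h⟩ := hi
      have h1 := hpP i hi
      have h2 := hqP i hi
      exact ⟨⟨hi, by linarith⟩, ⟨hi, by linarith⟩⟩
    have h1 : act p ∩ act q = act p := Finset.eq_of_subset_of_card_le Finset.inter_subset_left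
      ((hmin _ hm).trans (Finset.card_le_card hin))
    intro i hi
    rw [← h1] at hi
    exact (Finset.mem_filter.1 (Finset.mem_inter.1 hi).2).2

lemma FF_inj {d : ℕ} {A B S : Finset (Euc d × ℝ)} (hA : A ⊆ S) (hB : B ⊆ S)
    (hAne : (cell A S).Nonempty) (hBne : (cell B S).Nonempty) (h : FF A S = FF B S) : A = B := by
  have key : ∀ {A B : Finset (Euc d × ℝ)}, A ⊆ S → B ⊆ S → (cell B S).Nonempty →
      FF A S = FF B S → A ⊆ B := by
    intro A B hA hB hne h i hi
    obtain ⟨x, hx⟩ := hne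
    by_contra hiB
    have h1 : x ∈ FF A S := h ▸ cell_sub_FF hB hx
    have := (hx i (hA hi)).2 hiB
    linarith [h1.2 i hi]
  exact Finset.Subset.antisymm (key hA hB hBne h) (key hB hA hAne h.symm)

open Classical in
lemma phi_eq_s1 {d : ℕ} (S : Finset (Euc d × ℝ)) (x : Euc d) :
    phi (PP S) x = ∑ A ∈ S.powerset,
      if ∃ f ∈ FF A S, f - x ∈ normalCone (PP S) (FF A S) then eChar (cell A S) else 0 := by
  have hset : {F : Set (Euc d) | IsFaceOf (PP S) F} =
      (fun A => FF A S) '' ((S.powerset.filter (fun A => (cell A S).Nonempty) : Finset _) :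
        Set (Finset (Euc d × ℝ))) := by
    ext F
    simp only [Set.mem_ofPred_eq, Set.mem_image, Finset.coe_filter, Finset.mem_powerset]
    constructor
    · intro hF
      obtain ⟨A, h1, h2, h3⟩ := face_eq hF
      exact ⟨A, ⟨h1, h2⟩, h3⟩
    · rintro ⟨A, ⟨h1, h2⟩, rfl⟩
      exact FF_face h1 h2
  rw [phi, hset, finsum_mem_image, finsum_mem_coe_finset, Finset.sum_filter]
  · refine Finset.sum_congr rfl fun A hA => ?_
    rw [Finset.mem_powerset] at hA
    by_cases hne : (cell A S).Nonempty
    · rw [if_pos hne, sdim_eq (RO_cell hA) hne (cell_sub_FF hA) FF_sub, eChar_eq (RO_cell hA) hne]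
      have : x ∈ FF A S - normalCone (PP S) (FF A S) ↔
          ∃ f ∈ FF A S, f - x ∈ normalCone (PP S) (FF A S) := by
        rw [Set.mem_sub]
        constructor
        · rintro ⟨f, hf, u, hu, rfl⟩
          exact ⟨f, hf, by simpa using hu⟩
        · rintro ⟨f, hf, hu⟩
          exact ⟨f, hf, _, hu, by simp⟩
      rw [Set.indicator_apply]
      simp only [this]
      split_ifs <;> simp
    · rw [if_neg hne, eChar_of_not hne]; simp
  · intro A hA B hB h
    simp only [Finset.coe_filter, Finset.mem_powerset, Set.mem_ofPred_eq] at hA hB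
    exact FF_inj hA.1 hB.1 hA.2 hB.2 h

open Classical in
lemma phi_eq_chi {d : ℕ} (S : Finset (Euc d × ℝ)) (x : Euc d) :
    phi (PP S) x = ∑ A ∈ S.powerset, eChar (cell A S) := by
  have hproj : ∀ A : Finset (Euc d × ℝ), ∃ f : Euc d, (FF A S).Nonempty →
      f ∈ FF A S ∧ ∀ z ∈ FF A S, inner ℝ (x - f) (z - f) ≤ 0 := by
    intro A
    by_cases hne : (FF A S).Nonempty
    · obtain ⟨v, hv, h⟩ := exists_norm_eq_iInf_of_complete_convex hne (FF_closed A S).isComplete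
        (FF_convex A S) x
      exact ⟨v, fun _ => ⟨hv, (norm_eq_iInf_iff_real_inner_le_zero (FF_convex A S) hv).1 h⟩⟩
    · exact ⟨0, fun h => absurd h hne⟩
  choose π hπ using hproj
  have huniq : ∀ A : Finset (Euc d × ℝ), ∀ f ∈ FF A S,
      (∀ z ∈ FF A S, inner ℝ (x - f) (z - f) ≤ 0) → f = π A := by
    intro A f hf h
    obtain ⟨h1, h2⟩ := hπ A ⟨f, hf⟩
    have h3 := h _ h1
    have h4 := h2 _ hf
    have h5 : inner ℝ (f - π A) (f - π A) ≤ 0 := by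
      have e : inner ℝ (f - π A) (f - π A) =
          inner ℝ (x - f) (π A - f) + inner ℝ (x - π A) (f - π A) := by
        rw [← neg_sub f (π A), inner_neg_right, neg_add_eq_sub, ← inner_sub_left]
        congr 1
        abel
      linarith
    exact sub_eq_zero.1 (by
      rw [real_inner_self_eq_norm_sq] at h5
      exact norm_eq_zero.1 (pow_eq_zero_iff two_ne_zero |>.1 (le_antisymm h5 (sq_nonneg _))))
  let Z := S.powerset.image π
  rw [phi_eq_s1]
  have hL : ∀ A ∈ S.powerset,
      (if ∃ f ∈ FF A S, f - x ∈ normalCone (PP S) (FF A S) then eChar (cell A S) else 0) =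
      ∑ f ∈ Z.filter (fun f => f ∈ PP S), (if f ∈ FF A S ∧ (∀ z ∈ PP S, 0 ≤ inner ℝ (x - f) (z - f)) ∧
        ∀ z ∈ FF A S, inner ℝ (x - f) (z - f) ≤ 0 then eChar (cell A S) else 0) := by
    intro A hA
    have hiff : (∃ f ∈ FF A S, f - x ∈ normalCone (PP S) (FF A S)) ↔
        ∃ f ∈ FF A S, (∀ z ∈ PP S, 0 ≤ inner ℝ (x - f) (z - f)) ∧
        ∀ z ∈ FF A S, inner ℝ (x - f) (z - f) ≤ 0 := by
      refine exists_congr fun f => and_congr_right fun hf => ?_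
      constructor
      · intro h
        refine ⟨fun z hz => ?_, fun z hz => ?_⟩
        · have := h f hf z hz
          rw [← neg_sub x f, inner_neg_left] at this
          linarith
        · have := h z hz f hf.1
          rwa [← neg_sub x f, ← neg_sub z f, inner_neg_neg] at this
      · rintro ⟨h1, h2⟩ g hg z hz
        have h3 := h1 z hz
        have h4 := h2 g hg
        have e : inner ℝ (f - x) (z - g) = inner ℝ (x - f) (g - f) - inner ℝ (x - f) (z - f) := by
          rw [← neg_sub x f, inner_neg_left, ← inner_sub_right, ← inner_neg_right]
          congr 1
          abel
        linarith
    rw [if_congr hiff rfl rfl]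
    by_cases hex : ∃ f ∈ FF A S, (∀ z ∈ PP S, 0 ≤ inner ℝ (x - f) (z - f)) ∧
        ∀ z ∈ FF A S, inner ℝ (x - f) (z - f) ≤ 0
    · rw [if_pos hex]
      obtain ⟨f, hf, h1, h2⟩ := hex
      have hfe := huniq A f hf h2
      rw [Finset.sum_eq_single f, if_pos ⟨hf, h1, h2⟩]
      · intro g _ hgf
        rw [if_neg]
        rintro ⟨hg, -, hg2⟩
        exact hgf ((huniq A g hg hg2).trans hfe.symm)
      · intro hfZ
        refine absurd (Finset.mem_filter.2 ⟨?_, hf.1⟩) hfZ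
        rw [hfe]
        exact Finset.mem_image_of_mem _ hA
    · rw [if_neg hex]
      symm
      apply Finset.sum_eq_zero
      intro f _
      rw [if_neg]
      rintro ⟨h1, h2⟩
      exact hex ⟨f, h1, h2⟩
  have hR : ∀ A ∈ S.powerset, eChar (cell A S) =
      ∑ f ∈ Z.filter (fun f => f ∈ PP S), (if f ∈ FF A S ∧
        ∀ z ∈ FF A S, inner ℝ (x - f) (z - f) ≤ 0 then eChar (cell A S) else 0) := by
    intro A hA
    by_cases hne : (cell A S).Nonempty
    · obtain ⟨h1, h2⟩ := hπ A (hne.mono (cell_sub_FF (Finset.mem_powerset.1 hA)))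
      rw [Finset.sum_eq_single (π A), if_pos ⟨h1, h2⟩]
      · intro g _ hgf
        rw [if_neg]
        rintro ⟨hg, hg2⟩
        exact hgf (huniq A g hg hg2)
      · intro hfZ
        exact absurd (Finset.mem_filter.2 ⟨Finset.mem_image_of_mem _ hA, h1.1⟩) hfZ
    · rw [eChar_of_not hne]; simp
  rw [Finset.sum_congr rfl hL, Finset.sum_congr rfl hR, Finset.sum_comm,
    Finset.sum_comm (s := S.powerset)]
  refine Finset.sum_congr rfl fun f hf => ?_
  have hfP : f ∈ PP S := (Finset.mem_filter.1 hf).2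
  by_cases hw : ∀ z ∈ PP S, 0 ≤ inner ℝ (x - f) (z - f)
  · refine Finset.sum_congr rfl fun A _ => ?_
    exact if_congr ⟨fun h => ⟨h.1, h.2.2⟩, fun h => ⟨h.1, hw, h.2⟩⟩ rfl rfl
  · have h1 : ∀ A ∈ S.powerset, (if f ∈ FF A S ∧ (∀ z ∈ PP S, 0 ≤ inner ℝ (x - f) (z - f)) ∧
        ∀ z ∈ FF A S, inner ℝ (x - f) (z - f) ≤ 0 then eChar (cell A S) else 0) = 0 :=
      fun A _ => if_neg fun h => hw h.2.1
    rw [Finset.sum_eq_zero h1]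
    push Not at hw
    obtain ⟨p, hp, hpw⟩ := hw
    exact (local_zero S f (x - f) p hfP hp hpw).symm

theorem phi_eq_zero_of_unbounded_lineFree {d : ℕ} (P : Set (Euc d))
    (hP : IsPolyhedral P) (hne : P.Nonempty)
    (hub : ¬ Bornology.IsBounded P) (hlf : LineFree P) :
    ∀ x : Euc d, phi P x = 0 := by
  obtain ⟨S, rfl⟩ := hP
  intro x
  have hPP : {x : Euc d | ∀ h ∈ S, inner ℝ h.1 x ≤ h.2} = PP S := rfl
  rw [hPP] at hne hub hlf ⊢
  have hFF : FF ∅ S = PP S := by ext y; simp [FF]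
  have hconv : Convex ℝ (PP S) := hFF ▸ FF_convex ∅ S
  have hclosed : IsClosed (PP S) := hFF ▸ FF_closed ∅ S
  obtain ⟨r, hr0, hr⟩ := not_bounded_iff_exists_ne_zero_mem_asymptoticCone.1 hub
  obtain ⟨p, hp⟩ := hne
  have hray : ∀ t : ℝ, 0 ≤ t → t • r + p ∈ PP S := fun t ht =>
    hconv.smul_vadd_mem_of_isClosed_of_mem_asymptoticCone hclosed ht hr hp
  have hrec : ∀ i ∈ S, inner ℝ i.1 r ≤ 0 := by
    intro i hi
    by_contra hcon
    push Not at hcon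
    have h1 := hray ((|i.2 - inner ℝ i.1 p| + 1) / inner ℝ i.1 r) (by positivity) i hi
    rw [inner_add_right, inner_smul_right, div_mul_cancel₀ _ hcon.ne'] at h1
    linarith [le_abs_self (i.2 - inner ℝ i.1 p)]
  have hk : ∃ k ∈ S, inner ℝ k.1 r < 0 := by
    by_contra hcon
    push Not at hcon
    obtain ⟨t, ht⟩ := hlf p r hr0
    refine ht fun i hi => ?_
    rw [inner_add_right, inner_smul_right, le_antisymm (hrec i hi) (hcon i hi)]
    simpa using hp i hi
  obtain ⟨k, hkS, hk⟩ := hk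
  rw [phi_eq_chi, chi_zero S r hrec k hkS hk]
end
end

section
/- For a polyhedral cone P in ℝ^d that is not a linear subspace, Σ_{F face of P} (-1)^{dim F} = 0, where the sum runs over all nonempty faces of P including P itself. -/
open RealInnerProductSpace Pointwise

noncomputable section

/-- A polyhedral cone: intersection of finitely many closed half-spaces whose
boundary hyperplanes contain the origin. -/
def IsPolyhedralCone {d : ℕ} (P : Set (Euc d)) : Prop :=
  ∃ s : Finset (Euc d), P = {x | ∀ u ∈ s, ⟪u, x⟫ ≤ 0}

/-- The common zero space of the functionals that `t` marks with `0`. -/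
def zsp {V ι : Type*} [AddCommGroup V] [Module ℝ V] (g : ι → V →ₗ[ℝ] ℝ) (t : ι → SignType) :
    Submodule ℝ V where
  carrier := {z | ∀ i, t i = 0 → g i z = 0}
  add_mem' := by
    intro a b ha hb i hi
    rw [map_add, ha i hi, hb i hi, add_zero]
  zero_mem' := by intro i _; simp
  smul_mem' := by
    intro c a ha i hi
    rw [map_smul, ha i hi, smul_zero]

theorem mem_zsp {V ι : Type*} [AddCommGroup V] [Module ℝ V] (g : ι → V →ₗ[ℝ] ℝ)
    (t : ι → SignType) (z : V) : z ∈ zsp g t ↔ ∀ i, t i = 0 → g i z = 0 := Iff.rfl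

theorem finrank_inf_ker_s3 {V : Type*} [AddCommGroup V] [Module ℝ V] [FiniteDimensional ℝ V]
    (W : Submodule ℝ V) (u : V →ₗ[ℝ] ℝ) (z : V) (hz : z ∈ W) (hu : u z ≠ 0) :
    Module.finrank ℝ W = Module.finrank ℝ (W ⊓ LinearMap.ker u : Submodule ℝ V) + 1 := by
  have h1 : (u.domRestrict W) ≠ 0 := by
    intro h
    apply hu
    have := LinearMap.congr_fun h ⟨z, hz⟩
    simpa using this
  have h2 := Module.Dual.finrank_ker_add_one_of_ne_zero (f := u.domRestrict W) h1
  rw [← h2]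
  congr 1
  have h3 : (W ⊓ LinearMap.ker u : Submodule ℝ V)
      = (LinearMap.ker (u.domRestrict W)).map W.subtype := by
    ext y
    simp only [Submodule.mem_inf, LinearMap.mem_ker, Submodule.mem_map]
    constructor
    · rintro ⟨h, h'⟩
      exact ⟨⟨y, h⟩, h', rfl⟩
    · rintro ⟨⟨y', h⟩, h', rfl⟩
      exact ⟨h, h'⟩
  rw [h3]
  exact (LinearEquiv.finrank_eq (Submodule.equivMapOfInjective _ W.injective_subtype _))

theorem eventually_sign {V : Type*} [AddCommGroup V] [Module ℝ V] (u : V →ₗ[ℝ] ℝ) (x z : V)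
    (h : u x = 0 → u z = 0) :
    ∀ᶠ δ in nhds (0 : ℝ), SignType.sign (u (x + δ • z)) = SignType.sign (u x) := by
  have hc : Filter.Tendsto (fun δ : ℝ => u x + δ * u z) (nhds 0) (nhds (u x)) := by
    have : Continuous (fun δ : ℝ => u x + δ * u z) := by fun_prop
    simpa using this.tendsto 0
  simp only [map_add, map_smul, smul_eq_mul]
  rcases lt_trichotomy (u x) 0 with h0 | h0 | h0
  · filter_upwards [hc.eventually (gt_mem_nhds h0)] with δ hδ
    rw [sign_neg h0, sign_neg hδ]
  · simp [h h0]
  · filter_upwards [hc.eventually (lt_mem_nhds h0)] with δ hδ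
    rw [sign_pos h0, sign_pos hδ]

open Classical in
/-- Euler characteristic of a relatively open convex set, cut by one hyperplane. -/
theorem open_split {V : Type*} [AddCommGroup V] [Module ℝ V] [FiniteDimensional ℝ V]
    (u : V →ₗ[ℝ] ℝ) (W : Submodule ℝ V) (X : Set V) (hXW : X ⊆ W) (hc : Convex ℝ X)
    (ho : ∀ x ∈ X, ∀ z ∈ W, ∀ᶠ δ in nhds (0 : ℝ), x + δ • z ∈ X) :
    (if (X ∩ {x | u x = 0}).Nonempty then
        (-1 : ℤ) ^ Module.finrank ℝ (W ⊓ LinearMap.ker u : Submodule ℝ V) else 0)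
      + (if (X ∩ {x | u x < 0}).Nonempty then (-1 : ℤ) ^ Module.finrank ℝ W else 0)
      + (if (X ∩ {x | 0 < u x}).Nonempty then (-1 : ℤ) ^ Module.finrank ℝ W else 0)
      = if X.Nonempty then (-1 : ℤ) ^ Module.finrank ℝ W else 0 := by
  by_cases hX : X.Nonempty
  swap
  · rw [Set.not_nonempty_iff_eq_empty] at hX
    subst hX
    simp
  by_cases hW : ∀ z ∈ W, u z = 0
  · have e0 : W ⊓ LinearMap.ker u = W := by
      apply inf_eq_left.2
      intro z hz
      exact hW z hz
    obtain ⟨x, hx⟩ := hX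
    have h0 : (X ∩ {x | u x = 0}).Nonempty := ⟨x, hx, hW x (hXW hx)⟩
    have h1 : ¬ (X ∩ {x | u x < 0}).Nonempty := by
      rintro ⟨y, hy, hy'⟩
      exact absurd (hW y (hXW hy)) (ne_of_lt hy')
    have h2 : ¬ (X ∩ {x | 0 < u x}).Nonempty := by
      rintro ⟨y, hy, hy'⟩
      exact absurd (hW y (hXW hy)) (ne_of_gt hy')
    rw [if_pos h0, if_neg h1, if_neg h2, if_pos ⟨x, hx⟩, e0]
    ring
  push Not at hW
  obtain ⟨z, hz, huz⟩ := hW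
  rw [if_pos hX, finrank_inf_ker_s3 W u z hz huz]
  by_cases h0 : (X ∩ {x | u x = 0}).Nonempty
  · obtain ⟨x, hx, hx0⟩ := id h0
    have key : ∀ w ∈ W, 0 < u w → (X ∩ {x | 0 < u x}).Nonempty ∧ (X ∩ {x | u x < 0}).Nonempty := by
      intro w hw huw
      obtain ⟨ε, hε, hε'⟩ := Metric.eventually_nhds_iff.1 (ho x hx w hw)
      have hx0' : u x = 0 := hx0
      refine ⟨⟨x + (ε / 2) • w, hε' ?_, ?_⟩, ⟨x + (-(ε / 2)) • w, hε' ?_, ?_⟩⟩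
      · simp [abs_of_pos hε, hε]
      · simp only [Set.mem_ofPred_eq, map_add, map_smul, hx0', smul_eq_mul]
        have : 0 < ε / 2 * u w := by positivity
        linarith
      · simp [abs_of_pos hε, hε]
      · simp only [Set.mem_ofPred_eq, map_add, map_smul, hx0', smul_eq_mul]
        have : 0 < ε / 2 * u w := by positivity
        linarith
    have key' : (X ∩ {x | 0 < u x}).Nonempty ∧ (X ∩ {x | u x < 0}).Nonempty := by
      rcases lt_or_gt_of_ne huz with h | h
      · exact key (-z) (W.neg_mem hz) (by simpa using h)
      · exact key z hz h
    rw [if_pos h0, if_pos key'.1, if_pos key'.2]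
    ring
  · have hnot : ¬ ((X ∩ {x | u x < 0}).Nonempty ∧ (X ∩ {x | 0 < u x}).Nonempty) := by
      rintro ⟨⟨a, ha, ha'⟩, ⟨b, hb, hb'⟩⟩
      apply h0
      have ha2 : u a < 0 := ha'
      have hb2 : 0 < u b := hb'
      have hd : 0 < u b - u a := by linarith
      refine ⟨(u b / (u b - u a)) • a + (-u a / (u b - u a)) • b, hc ha hb ?_ ?_ ?_, ?_⟩
      · positivity
      · exact div_nonneg (by linarith) hd.le
      · field_simp
        ring
      · simp only [Set.mem_ofPred_eq, map_add, map_smul, smul_eq_mul]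
        field_simp
        ring
    obtain ⟨x, hx⟩ := hX
    rw [if_neg h0]
    rcases lt_trichotomy (u x) 0 with h | h | h
    · have h1 : (X ∩ {x | u x < 0}).Nonempty := ⟨x, hx, h⟩
      rw [if_pos h1, if_neg (fun h2 => hnot ⟨h1, h2⟩)]
      ring
    · exact absurd ⟨x, hx, h⟩ h0
    · have h1 : (X ∩ {x | 0 < u x}).Nonempty := ⟨x, hx, h⟩
      rw [if_pos h1, if_neg (fun h2 => hnot ⟨h2, h1⟩)]
      ring

theorem zsp_cons_zero {V : Type*} [AddCommGroup V] [Module ℝ V] {n : ℕ}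
    (g : Fin (n + 1) → V →ₗ[ℝ] ℝ) (t : Fin n → SignType) :
    zsp g (Fin.cons 0 t : Fin (n + 1) → SignType)
      = LinearMap.ker (g 0) ⊓ zsp (fun i => g i.succ) t := by
  ext z
  simp [mem_zsp, Fin.forall_fin_succ]

theorem zsp_cons_ne {V : Type*} [AddCommGroup V] [Module ℝ V] {n : ℕ}
    (g : Fin (n + 1) → V →ₗ[ℝ] ℝ) (t : Fin n → SignType) (a : SignType) (ha : a ≠ 0) :
    zsp g (Fin.cons a t : Fin (n + 1) → SignType) = zsp (fun i => g i.succ) t := by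
  ext z
  simp [mem_zsp, Fin.forall_fin_succ, ha]

open Classical in
/-- Euler characteristic of a relatively open convex set, cut by an arrangement. -/
theorem open_sum {V : Type*} [AddCommGroup V] [Module ℝ V] [FiniteDimensional ℝ V] (n : ℕ) :
    ∀ (g : Fin n → V →ₗ[ℝ] ℝ) (W : Submodule ℝ V) (X : Set V) (_ : X ⊆ W) (_ : Convex ℝ X)
    (_ : ∀ x ∈ X, ∀ z ∈ W, ∀ᶠ δ in nhds (0 : ℝ), x + δ • z ∈ X),
    ∑ t : Fin n → SignType, (if ∃ x ∈ X, ∀ i, SignType.sign (g i x) = t i then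
        (-1 : ℤ) ^ Module.finrank ℝ (W ⊓ zsp g t : Submodule ℝ V) else 0)
      = if X.Nonempty then (-1 : ℤ) ^ Module.finrank ℝ W else 0 := by
  induction n with
  | zero =>
    intro g W X _ _ _
    have : ∀ t, zsp g t = ⊤ := by
      intro t
      ext z
      simp [mem_zsp]
    rw [Fintype.sum_unique, this, inf_top_eq]
    by_cases hX : X.Nonempty
    · rw [if_pos hX, if_pos]
      obtain ⟨x, hx⟩ := hX
      exact ⟨x, hx, fun i => i.elim0⟩
    · rw [if_neg hX, if_neg]
      rintro ⟨x, hx, _⟩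
      exact hX ⟨x, hx⟩
  | succ n ih =>
    intro g W X hXW hc ho
    rw [← open_split (g 0) W X hXW hc ho]
    rw [← (Fin.consEquiv (fun _ : Fin (n + 1) => SignType)).sum_comp, Fintype.sum_prod_type]
    have hS : ∀ F : SignType → ℤ, ∑ a, F a = F 0 + F (-1) + F 1 := by
      intro F
      have : (Finset.univ : Finset SignType) = {0, -1, 1} := rfl
      rw [this, Finset.sum_insert (by decide), Finset.sum_insert (by decide), Finset.sum_singleton]
      ring
    rw [hS]
    have hsub : ∀ Q : Set V, X ∩ Q ⊆ W := fun Q x hx => hXW hx.1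
    have hex : ∀ (a : SignType) (t : Fin n → SignType),
        (∃ x ∈ X, ∀ i, SignType.sign (g i x) = (Fin.cons a t : Fin (n + 1) → SignType) i) ↔
        ∃ x ∈ X ∩ {x | SignType.sign (g 0 x) = a}, ∀ i : Fin n,
          SignType.sign (g i.succ x) = t i := by
      intro a t
      simp [Fin.forall_fin_succ, and_assoc]
    have e0 : {x : V | SignType.sign (g 0 x) = 0} = {x | g 0 x = 0} := by
      ext x
      simp
    have e1 : {x : V | SignType.sign (g 0 x) = -1} = {x | g 0 x < 0} := by
      ext x
      simp [sign_eq_neg_one_iff]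
    have e2 : {x : V | SignType.sign (g 0 x) = 1} = {x | 0 < g 0 x} := by
      ext x
      simp [sign_eq_one_iff]
    have hop : ∀ (a : SignType) (W' : Submodule ℝ V), W' ≤ W →
        (a = 0 → W' ≤ LinearMap.ker (g 0)) →
        ∀ x ∈ X ∩ {x | SignType.sign (g 0 x) = a}, ∀ z ∈ W', ∀ᶠ δ in nhds (0 : ℝ),
          x + δ • z ∈ X ∩ {x | SignType.sign (g 0 x) = a} := by
      intro a W' hW' ha x hx z hz
      have hx2 : SignType.sign (g 0 x) = a := hx.2
      have := eventually_sign (g 0) x z (by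
        intro h0
        exact ha (by rw [← hx2, h0, sign_zero]) hz)
      filter_upwards [ho x hx.1 z (hW' hz), this] with δ h1 h2
      exact ⟨h1, h2.trans hx2⟩
    have i0 := ih (fun i => g i.succ) (W ⊓ LinearMap.ker (g 0)) (X ∩ {x | g 0 x = 0})
      (fun x hx => ⟨hXW hx.1, hx.2⟩)
      (hc.inter (convex_hyperplane (g 0).isLinear 0))
      (e0 ▸ hop 0 _ inf_le_left (fun _ => inf_le_right))
    have i1 := ih (fun i => g i.succ) W (X ∩ {x | g 0 x < 0}) (hsub _)
      (hc.inter (convex_halfSpace_lt (g 0).isLinear 0))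
      (e1 ▸ hop (-1) _ le_rfl (fun h => absurd h (by decide)))
    have i2 := ih (fun i => g i.succ) W (X ∩ {x | 0 < g 0 x}) (hsub _)
      (hc.inter (convex_halfSpace_gt (g 0).isLinear 0))
      (e2 ▸ hop 1 _ le_rfl (fun h => absurd h (by decide)))
    rw [← i0, ← i1, ← i2]
    have hcons : ∀ (a : SignType) (t : Fin n → SignType),
        (Fin.consEquiv (fun _ : Fin (n + 1) => SignType)) (a, t)
          = (Fin.cons a t : Fin (n + 1) → SignType) := fun _ _ => rfl
    congr 1
    · congr 1
      · apply Finset.sum_congr rfl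
        intro t _
        rw [hcons, zsp_cons_zero, ← inf_assoc]
        simp only [hex, e0]
      · apply Finset.sum_congr rfl
        intro t _
        rw [hcons, zsp_cons_ne g t (-1) (by decide)]
        simp only [hex, e1]
    · apply Finset.sum_congr rfl
      intro t _
      rw [hcons, zsp_cons_ne g t 1 (by decide)]
      simp only [hex, e2]

open Classical in
/-- The Euler relation at the level of sign vectors. -/
theorem euler_signs {V ι : Type*} [AddCommGroup V] [Module ℝ V] [FiniteDimensional ℝ V]
    [Fintype ι] (f : ι → V →ₗ[ℝ] ℝ) (p : V) (hp : ∀ i, f i p ≤ 0) (j : ι) (hj : f j p < 0) :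
    ∑ s : ι → SignType, (if ∃ x, (∀ i, f i x ≤ 0) ∧ ∀ i, SignType.sign (f i x) = s i then
      (-1 : ℤ) ^ Module.finrank ℝ (zsp f s) else 0) = 0 := by
  let e := Fintype.equivFin (ι × ι)
  let D : ι × ι → V →ₗ[ℝ] ℝ := fun q => (f q.1 p) • f q.2 - (f q.2 p) • f q.1
  have hD : ∀ a b x, D (a, b) x = f a p * f b x - f b p * f a x := by
    intro a b x
    simp [D]
  let g : Fin (Fintype.card (ι × ι)) → V →ₗ[ℝ] ℝ := fun k => D (e.symm k)
  have hsg : ∀ x y, (∀ k, SignType.sign (g k x) = SignType.sign (g k y)) → ∀ a b,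
      SignType.sign (f a p * f b x - f b p * f a x)
        = SignType.sign (f a p * f b y - f b p * f a y) := by
    intro x y h a b
    have := h (e (a, b))
    simpa only [g, Equiv.symm_apply_apply, hD] using this
  have step : ∀ s : ι → SignType,
      (if ∃ x, (∀ i, f i x ≤ 0) ∧ ∀ i, SignType.sign (f i x) = s i then
        (-1 : ℤ) ^ Module.finrank ℝ (zsp f s) else 0)
      = ∑ t : Fin (Fintype.card (ι × ι)) → SignType,
        (if ∃ x, (∀ i, f i x ≤ 0) ∧ (∀ i, SignType.sign (f i x) = s i) ∧
            ∀ k, SignType.sign (g k x) = t k then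
          (-1 : ℤ) ^ Module.finrank ℝ (zsp f s ⊓ zsp g t : Submodule ℝ V) else 0) := by
    intro s
    have := open_sum _ g (zsp f s)
      {x | (∀ i, f i x ≤ 0) ∧ ∀ i, SignType.sign (f i x) = s i} ?_ ?_ ?_
    · simp only [Set.mem_ofPred_eq, and_assoc, Set.Nonempty] at this
      exact this.symm
    · rintro x ⟨_, hx⟩ i hi
      rw [← sign_eq_zero_iff, hx i, hi]
    · rintro x ⟨hx1, hx2⟩ y ⟨hy1, hy2⟩ a b ha hb hab
      have hle : ∀ i, f i (a • x + b • y) ≤ 0 := by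
        intro i
        simp only [map_add, map_smul, smul_eq_mul]
        nlinarith [hx1 i, hy1 i]
      refine ⟨hle, fun i => ?_⟩
      rw [← hx2 i]
      have hxy : SignType.sign (f i y) = SignType.sign (f i x) := by rw [hx2, hy2]
      simp only [map_add, map_smul, smul_eq_mul]
      rcases (hx1 i).lt_or_eq with h | h
      · have hy : f i y < 0 := by
          rw [sign_neg h, sign_eq_neg_one_iff] at hxy
          exact hxy
        rw [sign_neg h, sign_neg]
        rcases ha.lt_or_eq with h' | h'
        · nlinarith
        · have : b = 1 := by linarith
          subst this
          simpa [← h'] using hy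
      · have hy : f i y = 0 := by
          rw [h, sign_zero, sign_eq_zero_iff] at hxy
          exact hxy
        simp [h, hy]
    · rintro x ⟨hx1, hx2⟩ z hz
      have : ∀ᶠ δ in nhds (0 : ℝ), ∀ i,
          SignType.sign (f i (x + δ • z)) = SignType.sign (f i x) := by
        rw [Filter.eventually_all]
        intro i
        apply eventually_sign
        intro h0
        exact hz i (by rw [← hx2, h0, sign_zero])
      filter_upwards [this] with δ hδ
      refine ⟨fun i => ?_, fun i => (hδ i).trans (hx2 i)⟩
      by_contra hcon
      push Not at hcon
      have h3 := hδ i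
      rw [sign_pos hcon, eq_comm, sign_eq_one_iff] at h3
      exact absurd (hx1 i) (not_le.2 h3)
  rw [Finset.sum_congr rfl (fun s _ => step s), Finset.sum_comm]
  apply Finset.sum_eq_zero
  intro t _
  by_cases ht : ∃ x, (∀ i, f i x ≤ 0) ∧ ∀ k, SignType.sign (g k x) = t k
  swap
  · apply Finset.sum_eq_zero
    intro s _
    rw [if_neg]
    rintro ⟨x, h1, _, h2⟩
    exact ht ⟨x, h1, h2⟩
  obtain ⟨x, hx1, hx2⟩ := ht
  have hshift : ∀ c : ℝ, ∀ k, SignType.sign (g k (x + c • p)) = t k := by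
    intro c k
    rw [← hx2 k]
    congr 1
    have hg : g k p = 0 := by
      have := hD (e.symm k).1 (e.symm k).2 p
      simp only [g]
      rw [this]
      ring
    rw [map_add, map_smul, hg, smul_zero, add_zero]
  -- the point on the boundary
  obtain ⟨m, hm1, hm2⟩ := Finset.exists_min_image (Finset.univ.filter fun i => f i p < 0)
    (fun i => f i x / f i p) ⟨j, by simpa using hj⟩
  have hm : f m p < 0 := by simpa using hm1
  set y1 := x + (1 : ℝ) • p with hy1
  set y2 := x + (-(f m x / f m p)) • p with hy2
  have y1le : ∀ i, f i y1 ≤ 0 := by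
    intro i
    simp only [hy1, map_add, map_smul, smul_eq_mul]
    linarith [hx1 i, hp i]
  have y1lt : ∀ i, f i p < 0 → f i y1 < 0 := by
    intro i hi
    simp only [hy1, map_add, map_smul, smul_eq_mul]
    linarith [hx1 i]
  have y2m : f m y2 = 0 := by
    simp only [hy2, map_add, map_smul, smul_eq_mul]
    field_simp [hm.ne]
    ring
  have y2le : ∀ i, f i y2 ≤ 0 := by
    intro i
    simp only [hy2, map_add, map_smul, smul_eq_mul]
    rcases (hp i).lt_or_eq with h | h
    · have h3 := hm2 i (by simpa using h)
      have h4 : f i x = f i x / f i p * f i p := by field_simp [h.ne]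
      rw [h4]
      nlinarith
    · rw [h]
      linarith [hx1 i]
  -- uniqueness of sign vectors
  have cancel : ∀ a b c : ℝ, a < 0 → SignType.sign (a * b) = SignType.sign (a * c) →
      SignType.sign b = SignType.sign c := by
    intro a b c ha h
    rw [sign_mul, sign_mul, sign_neg ha] at h
    revert h
    generalize SignType.sign b = B
    generalize SignType.sign c = C
    revert B C
    decide
  have uniq2 : ∀ y, (∀ i, f i y ≤ 0) → (∀ k, SignType.sign (g k y) = t k) →
      ∀ l, f l p < 0 → f l y = 0 → ∀ i, SignType.sign (f i y) = SignType.sign (f i y2) := by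
    intro y hy hyt l hl hly i
    have hs := hsg y y2 (fun k => (hyt k).trans (hshift _ k).symm)
    have h1 := hs l m
    rw [hly, y2m] at h1
    simp only [mul_zero, zero_sub, sub_zero] at h1
    have h2 : f l y2 = 0 := by
      by_contra hne
      have hlt : f l y2 < 0 := lt_of_le_of_ne (y2le l) hne
      have : f m p * f l y2 > 0 := mul_pos_of_neg_of_neg hm hlt
      rw [sign_neg (by linarith : -(f m p * f l y2) < 0), sign_eq_neg_one_iff] at h1
      nlinarith [hy m]
    have h3 := hs l i
    rw [hly, h2, mul_zero, sub_zero, sub_zero] at h3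
    exact cancel _ _ _ hl h3
  have uniq1 : ∀ y, (∀ i, f i y ≤ 0) → (∀ k, SignType.sign (g k y) = t k) →
      (∀ l, f l p < 0 → f l y ≠ 0) → ∀ i, SignType.sign (f i y) = SignType.sign (f i y1) := by
    intro y hy hyt hne i
    have hs := hsg y y1 (fun k => (hyt k).trans (hshift _ k).symm)
    rcases (hp i).lt_or_eq with h | h
    · rw [sign_neg (y1lt i h), sign_neg (lt_of_le_of_ne (hy i) (hne i h))]
    · have h3 := hs j i
      rw [h, zero_mul, zero_mul, sub_zero, sub_zero] at h3
      exact cancel _ _ _ hj h3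
  set s1 : ι → SignType := fun i => SignType.sign (f i y1) with hs1
  set s2 : ι → SignType := fun i => SignType.sign (f i y2) with hs2
  have hne : s1 ≠ s2 := by
    intro h
    have := congr_fun h m
    simp only [hs1, hs2] at this
    rw [sign_neg (y1lt m hm), y2m, sign_zero] at this
    exact absurd this (by decide)
  rw [← Finset.sum_subset (Finset.subset_univ {s1, s2})]
  · rw [Finset.sum_pair hne, if_pos ⟨y1, y1le, fun _ => rfl, hshift _⟩,
      if_pos ⟨y2, y2le, fun _ => rfl, hshift _⟩]
    have hW : zsp f s2 ⊓ zsp g t = (zsp f s1 ⊓ zsp g t) ⊓ LinearMap.ker (f m) := by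
      ext z
      simp only [Submodule.mem_inf, mem_zsp, LinearMap.mem_ker, hs1, hs2, sign_eq_zero_iff]
      constructor
      · rintro ⟨h1, h2⟩
        refine ⟨⟨fun i hi => ?_, h2⟩, h1 m y2m⟩
        apply h1
        rcases (hp i).lt_or_eq with h | h
        · exact absurd hi (y1lt i h).ne
        · simp only [hy1, hy2, map_add, map_smul, smul_eq_mul, h] at hi ⊢
          simpa using hi
      · rintro ⟨⟨h1, h2⟩, h3⟩
        refine ⟨fun i hi => ?_, h2⟩
        have h4 := h2 (e (m, i)) (by
          rw [← hshift (-(f m x / f m p)) (e (m, i)), ← hy2]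
          simp only [g, Equiv.symm_apply_apply, hD, y2m, hi]
          simp)
        simp only [g, Equiv.symm_apply_apply, hD, h3, mul_zero, sub_zero] at h4
        exact (mul_eq_zero.1 h4).resolve_left hm.ne
    rw [hW, finrank_inf_ker_s3 (zsp f s1 ⊓ zsp g t) (f m) p ?_ hm.ne]
    · ring
    · constructor
      · intro i hi
        simp only [hs1, sign_eq_zero_iff] at hi
        rcases (hp i).lt_or_eq with h | h
        · exact absurd hi (y1lt i h).ne
        · exact h
      · intro k _
        have := hD (e.symm k).1 (e.symm k).2 p
        simp only [g]
        rw [this]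
        ring
  · intro s _ hs
    rw [if_neg]
    rintro ⟨y, ya, yb, yc⟩
    apply hs
    by_cases hcase : ∃ l, f l p < 0 ∧ f l y = 0
    · obtain ⟨l, h1, h2⟩ := hcase
      have : s = s2 := funext fun i => (yb i).symm.trans (uniq2 y ya yc l h1 h2 i)
      simp [this]
    · push Not at hcase
      have : s = s1 := funext fun i => (yb i).symm.trans (uniq1 y ya yc hcase i)
      simp [this]

/-- The candidate face attached to a sign vector. -/
def faceOf {V ι : Type*} [AddCommGroup V] [Module ℝ V] (f : ι → V →ₗ[ℝ] ℝ)
    (s : ι → SignType) : Set V :=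
  {y | (∀ i, f i y ≤ 0) ∧ ∀ i, s i = 0 → f i y = 0}

theorem exists_small_s3 {V ι : Type*} [AddCommGroup V] [Module ℝ V] [Finite ι]
    (f : ι → V →ₗ[ℝ] ℝ) (x z : V) (hx : ∀ i, f i x ≤ 0) (h : ∀ i, f i x = 0 → f i z = 0) :
    ∃ ε : ℝ, 0 < ε ∧ ∀ i, f i (x + ε • z) ≤ 0 := by
  have : ∀ᶠ δ in nhds (0 : ℝ), ∀ i,
      SignType.sign (f i (x + δ • z)) = SignType.sign (f i x) := by
    rw [Filter.eventually_all]
    intro i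
    exact eventually_sign _ _ _ (h i)
  obtain ⟨ε, hε, hε'⟩ := Metric.eventually_nhds_iff.1 this
  refine ⟨ε / 2, by positivity, fun i => ?_⟩
  have h2 := hε' (y := ε / 2) (by simp [abs_of_pos hε, hε]) i
  by_contra hcon
  push Not at hcon
  rw [sign_pos hcon, eq_comm, sign_eq_one_iff] at h2
  exact absurd (hx i) (not_le.2 h2)

theorem faceOf_isFace {d : ℕ} {ι : Type*} [Finite ι] (f : ι → Euc d →ₗ[ℝ] ℝ) (x : Euc d)
    (hx : ∀ i, f i x ≤ 0) :
    IsFaceOf {y | ∀ i, f i y ≤ 0} (faceOf f fun i => SignType.sign (f i x)) := by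
  refine ⟨⟨x, hx, fun i hi => sign_eq_zero_iff.1 hi⟩, ?_, ?_⟩
  · rintro y ⟨hy, hy'⟩ z ⟨hz, hz'⟩ a b ha hb hab
    refine ⟨fun i => ?_, fun i hi => ?_⟩
    · simp only [map_add, map_smul, smul_eq_mul]
      nlinarith [hy i, hz i]
    · simp [hy' i hi, hz' i hi]
  · refine ⟨fun y hy => hy.1, ?_⟩
    rintro y hy z hz w ⟨_, hw⟩ ⟨a, b, ha, hb, hab, rfl⟩
    refine ⟨hy, fun i hi => ?_⟩
    have := hw i hi
    simp only [map_add, map_smul, smul_eq_mul] at this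
    have h1 : a * f i y ≤ 0 := mul_nonpos_of_nonneg_of_nonpos ha.le (hy i)
    have h2 : b * f i z ≤ 0 := mul_nonpos_of_nonneg_of_nonpos hb.le (hz i)
    have h3 : a * f i y = 0 := by linarith
    exact (mul_eq_zero.1 h3).resolve_left ha.ne'

theorem face_eq_faceOf {d : ℕ} {ι : Type*} [Fintype ι] (f : ι → Euc d →ₗ[ℝ] ℝ) (F : Set (Euc d))
    (hF : IsFaceOf {y | ∀ i, f i y ≤ 0} F) :
    ∃ x, (∀ i, f i x ≤ 0) ∧ F = faceOf f fun i => SignType.sign (f i x) := by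
  classical
  obtain ⟨hne, hc, hext⟩ := hF
  obtain ⟨x, hxF, hmin⟩ : ∃ x ∈ F, ∀ y ∈ F, (Finset.univ.filter fun i => f i x = 0).card ≤
      (Finset.univ.filter fun i => f i y = 0).card := by
    have := (measure fun y : Euc d => (Finset.univ.filter fun i => f i y = 0).card).wf.has_min F hne
    obtain ⟨x, hx, h⟩ := this
    exact ⟨x, hx, fun y hy => not_lt.1 (h y hy)⟩
  have hxP : ∀ i, f i x ≤ 0 := hext.1 hxF
  refine ⟨x, hxP, Set.Subset.antisymm ?_ ?_⟩
  · intro y hy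
    have hyP : ∀ i, f i y ≤ 0 := hext.1 hy
    refine ⟨hyP, fun i hi => ?_⟩
    rw [sign_eq_zero_iff] at hi
    have hw := hc hxF hy (by norm_num : (0 : ℝ) ≤ 1 / 2) (by norm_num : (0 : ℝ) ≤ 1 / 2)
      (by norm_num)
    have hle := hmin _ hw
    have hsub : (Finset.univ.filter fun i => f i ((1 / 2 : ℝ) • x + (1 / 2 : ℝ) • y) = 0) ⊆
        Finset.univ.filter fun i => f i x = 0 := by
      intro k hk
      simp only [Finset.mem_filter, Finset.mem_univ, true_and, map_add, map_smul,
        smul_eq_mul] at hk ⊢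
      linarith [hxP k, hyP k]
    have heq := Finset.eq_of_subset_of_card_le hsub hle
    have hi' : i ∈ Finset.univ.filter fun i => f i x = 0 := by simpa using hi
    rw [← heq] at hi'
    simp only [Finset.mem_filter, Finset.mem_univ, true_and, map_add, map_smul,
        smul_eq_mul] at hi'
    linarith
  · rintro y ⟨hyP, hy⟩
    obtain ⟨ε, hε, h⟩ := exists_small_s3 f x (x - y) hxP (by
      intro i hi
      rw [map_sub, hi, hy i (sign_eq_zero_iff.2 hi), sub_zero])
    refine hext.2 hyP h hxF ⟨ε / (1 + ε), 1 / (1 + ε), by positivity, by positivity, ?_, ?_⟩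
    · field_simp
      ring
    · have h1 : (1 + ε) ≠ 0 := by positivity
      ext k
      simp only [PiLp.add_apply, PiLp.smul_apply, PiLp.sub_apply, smul_eq_mul]
      field_simp
      ring

theorem sdim_faceOf {d : ℕ} {ι : Type*} [Finite ι] (f : ι → Euc d →ₗ[ℝ] ℝ) (x : Euc d)
    (hx : ∀ i, f i x ≤ 0) :
    sdim (faceOf f fun i => SignType.sign (f i x))
      = Module.finrank ℝ (zsp f fun i => SignType.sign (f i x)) := by
  have hxm : x ∈ faceOf f fun i => SignType.sign (f i x) :=
    ⟨hx, fun i hi => sign_eq_zero_iff.1 hi⟩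
  have : (affineSpan ℝ (faceOf f fun i => SignType.sign (f i x))).direction
      = zsp f fun i => SignType.sign (f i x) := by
    rw [direction_affineSpan]
    apply le_antisymm
    · rw [vectorSpan_def, Submodule.span_le]
      rintro _ ⟨a, ha, b, hb, rfl⟩ i hi
      simp only [vsub_eq_sub, map_sub, ha.2 i hi, hb.2 i hi, sub_zero]
    · intro z hz
      obtain ⟨ε, hε, h⟩ := exists_small_s3 f x z hx (fun i hi => hz i (by simp [hi]))
      have hm : x + ε • z ∈ faceOf f fun i => SignType.sign (f i x) := by
        refine ⟨h, fun i hi => ?_⟩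
        rw [map_add, map_smul, hz i hi, hxm.2 i hi]
        simp
      have h2 := vsub_mem_vectorSpan ℝ hm hxm
      rw [vsub_eq_sub, add_sub_cancel_left] at h2
      have h3 := Submodule.smul_mem _ ε⁻¹ h2
      rwa [smul_smul, inv_mul_cancel₀ hε.ne', one_smul] at h3
  rw [sdim, this]

theorem euler_aux {d : ℕ} {ι : Type*} [Fintype ι] (f : ι → Euc d →ₗ[ℝ] ℝ) (p : Euc d)
    (hp : ∀ i, f i p ≤ 0) (j : ι) (hj : f j p < 0) :
    ∑ᶠ F ∈ {F : Set (Euc d) | IsFaceOf {x | ∀ i, f i x ≤ 0} F}, (-1 : ℤ) ^ sdim F = 0 := by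
  classical
  let T : Finset (ι → SignType) := Finset.univ.filter fun s =>
    ∃ x, (∀ i, f i x ≤ 0) ∧ ∀ i, SignType.sign (f i x) = s i
  have himg : {F : Set (Euc d) | IsFaceOf {x | ∀ i, f i x ≤ 0} F} = faceOf f '' (T : Set _) := by
    ext F
    constructor
    · intro hF
      obtain ⟨x, hx, rfl⟩ := face_eq_faceOf f F hF
      exact ⟨_, Finset.mem_coe.2 (Finset.mem_filter.2 ⟨Finset.mem_univ _, x, hx, fun _ => rfl⟩), rfl⟩
    · rintro ⟨s, hs, rfl⟩
      simp only [T, Finset.coe_filter, Finset.mem_univ, true_and, Set.mem_ofPred_eq] at hs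
      obtain ⟨x, hx, hxs⟩ := hs
      obtain rfl : (fun i => SignType.sign (f i x)) = s := funext hxs
      exact faceOf_isFace f x hx
  have hinj : Set.InjOn (faceOf f) (T : Set (ι → SignType)) := by
    intro s hs s' hs' h
    simp only [T, Finset.coe_filter, Finset.mem_univ, true_and, Set.mem_ofPred_eq] at hs hs'
    obtain ⟨x, hx, hxs⟩ := hs
    obtain ⟨y, hy, hys⟩ := hs'
    have hxm : x ∈ faceOf f s' := h ▸ ⟨hx, fun i hi => by rw [← sign_eq_zero_iff, hxs, hi]⟩
    have hym : y ∈ faceOf f s := h ▸ ⟨hy, fun i hi => by rw [← sign_eq_zero_iff, hys, hi]⟩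
    funext i
    rw [← hxs, ← hys]
    rcases (hx i).lt_or_eq with h1 | h1
    · rcases (hy i).lt_or_eq with h2 | h2
      · rw [sign_neg h1, sign_neg h2]
      · exact absurd (hxm.2 i (by rw [← hys, h2, sign_zero])) h1.ne
    · rw [h1, hym.2 i (by rw [← hxs, h1, sign_zero])]
  rw [himg, finsum_mem_image hinj, finsum_mem_coe_finset, ← euler_signs f p hp j hj,
    ← Finset.sum_filter]
  apply Finset.sum_congr rfl
  intro s hs
  obtain ⟨x, hx, hxs⟩ := (Finset.mem_filter.1 hs).2
  obtain rfl : (fun i => SignType.sign (f i x)) = s := funext hxs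
  rw [sdim_faceOf f x hx]

theorem euler_relation_cones {d : ℕ} (P : Set (Euc d)) (hP : IsPolyhedralCone P)
    (hns : ¬ ∃ U : Submodule ℝ (Euc d), P = (U : Set (Euc d))) :
    ∑ᶠ F ∈ {F : Set (Euc d) | IsFaceOf P F}, (-1 : ℤ) ^ sdim F = 0 := by
  obtain ⟨S, rfl⟩ := hP
  let f : S → Euc d →ₗ[ℝ] ℝ := fun u => (innerSL ℝ (u : Euc d)).toLinearMap
  have hf : ∀ u x, f u x = ⟪(u : Euc d), x⟫ := fun u x => rfl
  have hPe : {x : Euc d | ∀ u ∈ S, ⟪u, x⟫ ≤ 0} = {x | ∀ i, f i x ≤ 0} := by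
    ext x
    simp [hf]
  rw [hPe] at hns ⊢
  obtain ⟨p, hp, j, hj⟩ : ∃ p, (∀ i, f i p ≤ 0) ∧ ∃ j, f j p < 0 := by
    by_contra hcon
    push Not at hcon
    apply hns
    refine ⟨zsp f 0, ?_⟩
    ext x
    constructor
    · intro hx i _
      exact le_antisymm (hx i) (hcon x hx i)
    · intro hx i
      exact (hx i rfl).le
  exact euler_aux f p hp j hj
end
end

section
/- Let P be a nonempty polyhedral set in ℝ^d and F a nonempty face of P. Then the set F - N(P,F) admits the disjoint decomposition F - N(P,F) = ⨆_{G,H faces of P, G ⊆ F ⊆ H} (relint G - relint N(P,H)), and in particular its interior equals relint F - relint N(P,F), and its boundary equals the union of relint G - relint N(P,H) over faces G ⊆ F ⊆ H with G ≠ H. -/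
open RealInnerProductSpace Pointwise

noncomputable section

theorem ri_of_mem {d : ℕ} {C : Set (Euc d)} {x : Euc d} (hx : x ∈ intrinsicInterior ℝ C)
    {y : Euc d} (hy : y ∈ C) : ∃ ε : ℝ, 0 < ε ∧ x - ε • (y - x) ∈ C := by
  obtain ⟨x', hx', rfl⟩ := mem_intrinsicInterior.1 hx
  have hyA : y ∈ affineSpan ℝ C := subset_affineSpan ℝ C hy
  have hm : ∀ ε : ℝ, (x' : Euc d) - ε • (y - x') ∈ affineSpan ℝ C := fun ε => by
    have := AffineMap.lineMap_mem (-ε) x'.2 hyA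
    rw [AffineMap.lineMap_apply] at this
    convert this using 1
    simp [vsub_eq_sub, vadd_eq_add]
    abel
  let γ : ℝ → affineSpan ℝ C := fun ε => ⟨_, hm ε⟩
  have hγ : Continuous γ := by
    apply Continuous.subtype_mk
    fun_prop
  have h0 : γ 0 = x' := by ext1; simp [γ]
  have hev : ∀ᶠ ε in nhds (0 : ℝ), γ ε ∈ interior ((↑) ⁻¹' C : Set (affineSpan ℝ C)) := by
    apply hγ.continuousAt
    rw [h0]
    exact isOpen_interior.mem_nhds hx'
  have hev2 : ∀ᶠ ε in nhdsWithin (0 : ℝ) (Set.Ioi 0), γ ε ∈ interior ((↑) ⁻¹' C : Set (affineSpan ℝ C)) :=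
    hev.filter_mono nhdsWithin_le_nhds
  obtain ⟨ε, h1, h2⟩ := (hev2.and self_mem_nhdsWithin).exists
  have h3 : γ ε ∈ ((↑) ⁻¹' C : Set (affineSpan ℝ C)) := interior_subset h1
  exact ⟨ε, h2, h3⟩

theorem mem_seg {d : ℕ} {x y : Euc d} {ε : ℝ} (hε : 0 < ε) :
    x ∈ openSegment ℝ y (x - ε • (y - x)) := by
  refine ⟨ε / (1 + ε), 1 / (1 + ε), by positivity, by positivity, by field_simp; ring, ?_⟩
  have h : (1 + ε) ≠ 0 := by positivity
  have : (1 + ε) • (((ε / (1 + ε)) • y + (1 / (1 + ε)) • (x - ε • (y - x)))) = (1 + ε) • x := by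
    rw [smul_add, smul_smul, smul_smul, mul_div_cancel₀ _ h, mul_div_cancel₀ _ h]
    module
  exact smul_right_injective _ h this

theorem mem_ri {d : ℕ} {C : Set (Euc d)} (hC : Convex ℝ C) {x : Euc d} (hx : x ∈ C)
    (h : ∀ y ∈ C, ∃ ε : ℝ, 0 < ε ∧ x - ε • (y - x) ∈ C) : x ∈ intrinsicInterior ℝ C := by
  obtain ⟨z, hz⟩ := Set.Nonempty.intrinsicInterior hC ⟨x, hx⟩
  obtain ⟨z', hz', rfl⟩ := mem_intrinsicInterior.1 hz
  have hzC : z' ∈ ((↑) ⁻¹' C : Set (affineSpan ℝ C)) := interior_subset hz'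
  obtain ⟨ε, hε, hy⟩ := h z' hzC
  obtain ⟨a, b, ha, hb, hab, hx'⟩ := mem_seg (x := x) (y := z') hε
  set y := x - ε • ((z' : Euc d) - x) with hydef
  have hxA : x ∈ affineSpan ℝ C := subset_affineSpan ℝ C hx
  refine mem_intrinsicInterior.2 ⟨⟨x, hxA⟩, ?_, rfl⟩
  rw [mem_interior_iff_mem_nhds, Metric.mem_nhds_iff] at hz' ⊢
  obtain ⟨r, hr, hball⟩ := hz'
  refine ⟨a * r, by positivity, fun w hw => ?_⟩
  have hwx : (w : Euc d) - x ∈ (affineSpan ℝ C).direction :=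
    AffineSubspace.vsub_mem_direction w.2 hxA
  have hmem : a⁻¹ • ((w : Euc d) - x) + z' ∈ affineSpan ℝ C :=
    AffineSubspace.vadd_mem_of_mem_direction (Submodule.smul_mem _ _ hwx) z'.2
  have hin : (⟨_, hmem⟩ : affineSpan ℝ C) ∈ Metric.ball z' r := by
    rw [Metric.mem_ball, Subtype.dist_eq, dist_eq_norm] at hw ⊢
    simp only [add_sub_cancel_right, norm_smul, norm_inv, Real.norm_eq_abs, abs_of_pos ha]
    rw [inv_mul_lt_iff₀ ha]
    exact hw
  have h1 : a⁻¹ • ((w : Euc d) - x) + z' ∈ C := hball hin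
  have h2 := hC h1 hy ha.le hb.le hab
  have h3 : a • (a⁻¹ • ((w : Euc d) - x) + z') + b • y = w := by
    rw [smul_add, smul_smul, mul_inv_cancel₀ ha.ne', one_smul, add_assoc, hx']
    abel
  rw [h3] at h2
  exact h2

theorem eps_small {d : ℕ} {C : Set (Euc d)} (hC : Convex ℝ C) {x y : Euc d} (hx : x ∈ C)
    {ε δ : ℝ} (hδ : 0 < δ) (hle : δ ≤ ε) (h : x - ε • (y - x) ∈ C) : x - δ • (y - x) ∈ C := by
  have hε : 0 < ε := hδ.trans_le hle
  have h1 : 0 ≤ 1 - δ / ε := by rw [sub_nonneg, div_le_one hε]; exact hle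
  have := hC h hx (by positivity : 0 ≤ δ / ε) h1 (by ring)
  convert this using 1
  rw [smul_sub (δ / ε), smul_smul, div_mul_cancel₀ _ hε.ne']
  module

theorem small_step {d : ℕ} (s : Finset (Euc d × ℝ)) {x v : Euc d}
    (hx : ∀ h ∈ s, ⟪h.1, x⟫ ≤ h.2) (hv : ∀ h ∈ s, ⟪h.1, x⟫ = h.2 → ⟪h.1, v⟫ ≤ 0) :
    ∃ ε : ℝ, 0 < ε ∧ ∀ h ∈ s, ⟪h.1, x + ε • v⟫ ≤ h.2 := by
  have hev : ∀ᶠ ε in nhdsWithin (0 : ℝ) (Set.Ioi 0), ∀ h ∈ s, ⟪h.1, x + ε • v⟫ ≤ h.2 := by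
    rw [Filter.eventually_all_finset]
    intro h hs
    rcases (hx h hs).eq_or_lt with he | hl
    · filter_upwards [self_mem_nhdsWithin] with ε hε
      rw [inner_add_right, real_inner_smul_right]
      have := mul_nonneg (le_of_lt hε) (neg_nonneg.2 (hv h hs he))
      linarith
    · have hc : Continuous fun ε : ℝ => ⟪h.1, x + ε • v⟫ := by fun_prop
      have := hc.continuousAt (x := 0) |>.eventually_lt (continuousAt_const (y := h.2)) (by simpa using hl)
      exact (this.filter_mono nhdsWithin_le_nhds).mono fun _ h => h.le
  obtain ⟨ε, h1, h2⟩ := (hev.and self_mem_nhdsWithin).exists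
  exact ⟨ε, h2, h1⟩

theorem nc_convex {d : ℕ} (P F : Set (Euc d)) : Convex ℝ (normalCone P F) := by
  intro u hu w hw a b ha hb _ f hf z hz
  rw [inner_add_left, real_inner_smul_left, real_inner_smul_left]
  have := mul_nonneg ha (neg_nonneg.2 (hu f hf z hz))
  have := mul_nonneg hb (neg_nonneg.2 (hw f hf z hz))
  linarith

theorem nc_smul {d : ℕ} {P F : Set (Euc d)} {u : Euc d} (hu : u ∈ normalCone P F) {t : ℝ}
    (ht : 0 ≤ t) : t • u ∈ normalCone P F := by
  intro f hf z hz
  rw [real_inner_smul_left]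
  have := mul_nonneg ht (neg_nonneg.2 (hu f hf z hz))
  linarith

theorem nc_zero {d : ℕ} (P F : Set (Euc d)) : (0 : Euc d) ∈ normalCone P F := by
  intro f _ z _; simp

theorem nc_closed {d : ℕ} (P F : Set (Euc d)) : IsClosed (normalCone P F) := by
  have : normalCone P F = ⋂ f ∈ F, ⋂ z ∈ P, {u : Euc d | ⟪u, z - f⟫ ≤ 0} := by
    ext u; simp [normalCone]
  rw [this]
  refine isClosed_biInter fun f _ => isClosed_biInter fun z _ => ?_
  exact isClosed_le (by fun_prop) continuous_const

theorem nc_perp {d : ℕ} {P F : Set (Euc d)} (hFP : F ⊆ P) {u f g : Euc d}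
    (hu : u ∈ normalCone P F) (hf : f ∈ F) (hg : g ∈ F) : ⟪u, f - g⟫ = 0 := by
  have h1 := hu f hf g (hFP hg)
  have h2 := hu g hg f (hFP hf)
  rw [inner_sub_right] at *
  linarith

theorem nc_anti {d : ℕ} {P F H : Set (Euc d)} (h : F ⊆ H) : normalCone P H ⊆ normalCone P F :=
  fun _ hu f hf z hz => hu f (h hf) z hz

theorem decomp_unique {d : ℕ} {P F : Set (Euc d)} (hFP : F ⊆ P) {f g u w : Euc d}
    (hf : f ∈ F) (hg : g ∈ F) (hu : u ∈ normalCone P F) (hw : w ∈ normalCone P F)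
    (h : f - u = g - w) : f = g ∧ u = w := by
  have h1 : f - g = u - w := by
    rw [sub_eq_sub_iff_add_eq_add] at h ⊢; rw [h]; abel
  have h2 : ⟪f - g, f - g⟫ = 0 := by
    nth_rewrite 1 [h1]
    rw [inner_sub_left, nc_perp hFP hu hf hg, nc_perp hFP hw hf hg, sub_zero]
  have h3 := inner_self_eq_zero.1 h2
  rw [h3] at h1
  exact ⟨sub_eq_zero.1 h3, sub_eq_zero.1 h1.symm⟩

/-- A point in the relative interior of a convex subset lying in a face forces inclusion. -/
theorem face_incl {d : ℕ} {P F G : Set (Euc d)} (hF : IsExtreme ℝ P F) (hG : G ⊆ P) {x : Euc d}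
    (hx : x ∈ intrinsicInterior ℝ G) (hxF : x ∈ F) : G ⊆ F := by
  intro y hy
  obtain ⟨ε, hε, h⟩ := ri_of_mem hx hy
  exact hF.left_mem_of_mem_openSegment (hG hy) (hG h) hxF (mem_seg hε)

/-- The polyhedron attached to `s`. -/
def poly {d : ℕ} (s : Finset (Euc d × ℝ)) : Set (Euc d) := {x | ∀ h ∈ s, ⟪h.1, x⟫ ≤ h.2}

/-- The smallest face containing `x`. -/
def minFace {d : ℕ} (s : Finset (Euc d × ℝ)) (x : Euc d) : Set (Euc d) :=
  {y | y ∈ poly s ∧ ∀ h ∈ s, ⟪h.1, x⟫ = h.2 → ⟪h.1, y⟫ = h.2}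

theorem poly_convex {d : ℕ} (s : Finset (Euc d × ℝ)) : Convex ℝ (poly s) := by
  intro x hx y hy a b ha hb hab h hs
  rw [inner_add_right, real_inner_smul_right, real_inner_smul_right]
  calc _ ≤ a * h.2 + b * h.2 := add_le_add (mul_le_mul_of_nonneg_left (hx h hs) ha)
        (mul_le_mul_of_nonneg_left (hy h hs) hb)
    _ = h.2 := by rw [← add_mul, hab, one_mul]

theorem minFace_convex {d : ℕ} (s : Finset (Euc d × ℝ)) (x : Euc d) : Convex ℝ (minFace s x) := by
  intro y hy z hz a b ha hb hab
  refine ⟨poly_convex s hy.1 hz.1 ha hb hab, fun h hs he => ?_⟩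
  rw [inner_add_right, real_inner_smul_right, real_inner_smul_right, hy.2 h hs he, hz.2 h hs he,
    ← add_mul, hab, one_mul]

theorem minFace_ri {d : ℕ} {s : Finset (Euc d × ℝ)} {x : Euc d} (hx : x ∈ poly s) :
    x ∈ intrinsicInterior ℝ (minFace s x) := by
  refine mem_ri (minFace_convex s x) ⟨hx, fun _ _ h => h⟩ fun y hy => ?_
  obtain ⟨ε, hε, h⟩ := small_step s (v := x - y) hx (fun h hs he => by
    rw [inner_sub_right, hy.2 h hs he, he, sub_self])
  have e : x - ε • (y - x) = x + ε • (x - y) := by module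
  refine ⟨ε, hε, ?_⟩
  rw [e]
  refine ⟨h, fun h hs he => ?_⟩
  rw [inner_add_right, real_inner_smul_right, inner_sub_right, hy.2 h hs he, he]
  ring

theorem minFace_face {d : ℕ} {s : Finset (Euc d × ℝ)} {x : Euc d} (hx : x ∈ poly s) :
    IsFaceOf (poly s) (minFace s x) := by
  refine ⟨⟨x, hx, fun _ _ h => h⟩, minFace_convex s x, fun y hy => hy.1, ?_⟩
  rintro y hy z hz w hw ⟨a, b, ha, hb, hab, rfl⟩
  refine ⟨hy, fun h hs he => ?_⟩
  have h1 := hw.2 h hs he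
  rw [inner_add_right, real_inner_smul_right, real_inner_smul_right] at h1
  have h2 := hy h hs
  have h3 := hz h hs
  have hb' : b = 1 - a := by linarith
  refine le_antisymm h2 ?_
  by_contra hlt
  push Not at hlt
  have h4 := mul_lt_mul_of_pos_left hlt ha
  have h5 := mul_le_mul_of_nonneg_left h3 hb.le
  have h6 : a * h.2 + b * h.2 = h.2 := by rw [← add_mul, hab, one_mul]
  linarith

theorem face_eq_minFace {d : ℕ} {s : Finset (Euc d × ℝ)} {F : Set (Euc d)}
    (hF : IsFaceOf (poly s) F) {x : Euc d} (hx : x ∈ intrinsicInterior ℝ F) : F = minFace s x := by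
  have hxF := intrinsicInterior_subset hx
  have hxP := hF.2.2.subset hxF
  apply Set.Subset.antisymm
  · exact face_incl (minFace_face hxP).2.2 hF.2.2.subset hx ⟨hxP, fun _ _ h => h⟩
  · exact face_incl hF.2.2 (fun y hy => hy.1) (minFace_ri hxP) hxF

/-- Active normals belong to the normal cone. -/
theorem active_mem {d : ℕ} {s : Finset (Euc d × ℝ)} {x : Euc d} {h : Euc d × ℝ} (hs : h ∈ s)
    (he : ⟪h.1, x⟫ = h.2) : h.1 ∈ normalCone (poly s) (minFace s x) := by
  intro f hf z hz
  rw [inner_sub_right, hf.2 h hs he]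
  linarith [hz h hs]

/-- The maximizers of a relative interior vector of the normal cone. -/
theorem face_of_ri_nc {d : ℕ} {s : Finset (Euc d × ℝ)} {H : Set (Euc d)}
    (hH : IsFaceOf (poly s) H) {n : Euc d} (hn : n ∈ intrinsicInterior ℝ (normalCone (poly s) H)) :
    H = {x | x ∈ poly s ∧ ∀ z ∈ poly s, ⟪n, z - x⟫ ≤ 0} := by
  apply Set.Subset.antisymm
  · exact fun x hx => ⟨hH.2.2.subset hx, fun z hz => intrinsicInterior_subset hn x hx z hz⟩
  · rintro z ⟨hz, hzmax⟩
    obtain ⟨x, hx⟩ := Set.Nonempty.intrinsicInterior hH.2.1 hH.1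
    have hxH := intrinsicInterior_subset hx
    have hnz : ⟪n, z - x⟫ = 0 := by
      have h1 := hzmax x (hH.2.2.subset hxH)
      have h2 := intrinsicInterior_subset hn x hxH z hz
      rw [inner_sub_right] at *
      linarith
    have key : ∀ m ∈ normalCone (poly s) H, ⟪m, z - x⟫ = 0 := by
      intro m hm
      obtain ⟨ε, hε, h⟩ := ri_of_mem hn hm
      have h1 := h x hxH z hz
      rw [inner_sub_left, real_inner_smul_left, inner_sub_left, hnz] at h1
      have h2 := hm x hxH z hz
      refine le_antisymm h2 ?_
      by_contra hlt
      push Not at hlt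
      nlinarith
    have hHe := face_eq_minFace hH hx
    rw [hHe]
    refine ⟨hz, fun h hs he => ?_⟩
    have := key h.1 (by rw [hHe]; exact active_mem hs he)
    rw [inner_sub_right, he] at this
    linarith

theorem poly_closed {d : ℕ} (s : Finset (Euc d × ℝ)) : IsClosed (poly s) := by
  have : poly s = ⋂ h ∈ s, {x : Euc d | ⟪h.1, x⟫ ≤ h.2} := by ext; simp [poly]
  rw [this]
  exact isClosed_biInter fun f _ => isClosed_le (by fun_prop) continuous_const

theorem minFace_closed {d : ℕ} (s : Finset (Euc d × ℝ)) (x : Euc d) : IsClosed (minFace s x) := by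
  have : minFace s x = poly s ∩ ⋂ h ∈ s, ⋂ (_ : ⟪h.1, x⟫ = h.2), {x : Euc d | ⟪h.1, x⟫ = h.2} := by
    ext; simp [minFace]
  rw [this]
  refine (poly_closed s).inter (isClosed_biInter fun f _ => isClosed_iInter fun _ => ?_)
  exact isClosed_eq (by fun_prop) continuous_const

theorem D_closed {d : ℕ} {P F : Set (Euc d)} (hFP : F ⊆ P) (hF : IsClosed F) :
    IsClosed (F - normalCone P F) := by
  let φ : F × normalCone P F → Euc d := fun p => (p.1 : Euc d) - p.2
  have hr : F - normalCone P F = Set.range φ := by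
    ext x
    simp [φ, Set.mem_sub]
  have : CompleteSpace F := hF.completeSpace_coe
  have : CompleteSpace (normalCone P F) := (nc_closed P F).completeSpace_coe
  have hanti : AntilipschitzWith 1 φ := by
    apply AntilipschitzWith.of_le_mul_dist
    rintro ⟨⟨f, hf⟩, ⟨u, hu⟩⟩ ⟨⟨g, hg⟩, ⟨w, hw⟩⟩
    have h0 : ⟪f - g, u - w⟫ = 0 := by
      rw [real_inner_comm, inner_sub_left, nc_perp hFP hu hf hg, nc_perp hFP hw hf hg, sub_zero]
    have h1 : ‖(f - u) - (g - w)‖ ^ 2 = ‖f - g‖ ^ 2 + ‖u - w‖ ^ 2 := by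
      have e : (f - u) - (g - w) = (f - g) - (u - w) := by abel
      rw [e, norm_sub_sq_real, h0]; ring
    simp only [φ, Prod.dist_eq, Subtype.dist_eq, dist_eq_norm, NNReal.coe_one, one_mul]
    refine max_le ?_ ?_
    · exact (sq_le_sq₀ (norm_nonneg _) (norm_nonneg _)).1 (by nlinarith [sq_nonneg ‖u - w‖])
    · exact (sq_le_sq₀ (norm_nonneg _) (norm_nonneg _)).1 (by nlinarith [sq_nonneg ‖f - g‖])
  have hu : UniformContinuous φ :=
    (uniformContinuous_subtype_val.comp uniformContinuous_fst).sub
      (uniformContinuous_subtype_val.comp uniformContinuous_snd)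
  rw [hr]
  exact (hanti.isComplete_range hu).isClosed

theorem D_convex {d : ℕ} {P F : Set (Euc d)} (hF : Convex ℝ F) : Convex ℝ (F - normalCone P F) :=
  hF.sub (nc_convex P F)

theorem D_span {d : ℕ} {s : Finset (Euc d × ℝ)} {F : Set (Euc d)} (hF : IsFaceOf (poly s) F) :
    (interior (F - normalCone (poly s) F)).Nonempty := by
  obtain ⟨x, hx⟩ := Set.Nonempty.intrinsicInterior hF.2.1 hF.1
  have hxF := intrinsicInterior_subset hx
  have hFe := face_eq_minFace hF hx
  have hxP := hF.2.2.subset hxF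
  have hxD : x ∈ F - normalCone (poly s) F := ⟨x, hxF, 0, nc_zero _ _, sub_zero x⟩
  rw [(D_convex hF.2.1).interior_nonempty_iff_affineSpan_eq_top,
    AffineSubspace.affineSpan_eq_top_iff_vectorSpan_eq_top_of_nonempty ℝ _ _ ⟨x, hxD⟩,
    ← Submodule.orthogonal_eq_bot_iff, Submodule.eq_bot_iff]
  intro v hv
  rw [Submodule.mem_orthogonal] at hv
  have hv' : ∀ y ∈ F - normalCone (poly s) F, ⟪y - x, v⟫ = 0 := fun y hy =>
    hv _ (vsub_mem_vectorSpan ℝ hy hxD)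
  have hact : ∀ h ∈ s, ⟪h.1, x⟫ = h.2 → ⟪h.1, v⟫ = 0 := by
    intro h hs he
    have hm : h.1 ∈ normalCone (poly s) F := by rw [hFe]; exact active_mem hs he
    have := hv' _ ⟨x, hxF, h.1, hm, rfl⟩
    simpa using this
  obtain ⟨ε, hε, h⟩ := small_step s hxP fun h hs he => (hact h hs he).le
  have hmem : x + ε • v ∈ F := by
    rw [hFe]
    refine ⟨h, fun h hs he => ?_⟩
    rw [inner_add_right, real_inner_smul_right, hact h hs he, he]; ring
  have := hv' _ ⟨_, hmem, 0, nc_zero _ _, sub_zero _⟩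
  rw [add_sub_cancel_left, real_inner_smul_left] at this
  exact inner_self_eq_zero.1 ((mul_eq_zero.1 this).resolve_left hε.ne')

theorem D_interior {d : ℕ} {s : Finset (Euc d × ℝ)} {F : Set (Euc d)} (hF : IsFaceOf (poly s) F) :
    interior (F - normalCone (poly s) F) =
      intrinsicInterior ℝ F - intrinsicInterior ℝ (normalCone (poly s) F) := by
  have hFP := hF.2.2.subset
  apply Set.Subset.antisymm
  · intro x hx
    have hx' := interior_subset_intrinsicInterior (𝕜 := ℝ) hx
    obtain ⟨f, hf, n, hn, rfl⟩ := interior_subset hx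
    refine ⟨f, mem_ri hF.2.1 hf fun y hy => ?_, n, mem_ri (nc_convex _ _) hn fun m hm => ?_, rfl⟩
    · obtain ⟨ε, hε, h⟩ := ri_of_mem hx' (Set.sub_mem_sub hy hn)
      obtain ⟨f', hf', n', hn', he⟩ := h
      refine ⟨ε, hε, ?_⟩
      simp only at he
      have e1 : (f - ε • (y - f)) - f' = n - n' := by
        have : f' = f - n - ε • (y - n - (f - n)) + n' := by rw [← he]; abel
        rw [this]; module
      have e2 : ⟪n - n', (f - ε • (y - f)) - f'⟫ = 0 := by
        have e3 : (f - ε • (y - f)) - f' = (f - f') - ε • (y - f) := by abel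
        rw [e3, inner_sub_right, real_inner_smul_right, inner_sub_left, inner_sub_left,
          nc_perp hFP hn hf hf', nc_perp hFP hn' hf hf', nc_perp hFP hn hy hf,
          nc_perp hFP hn' hy hf]
        ring
      rw [← e1] at e2
      rw [sub_eq_zero.1 (inner_self_eq_zero.1 e2)]
      exact hf'
    · obtain ⟨ε, hε, h⟩ := ri_of_mem hx' (Set.sub_mem_sub hf hm)
      obtain ⟨f', hf', n', hn', he⟩ := h
      refine ⟨ε, hε, ?_⟩
      simp only at he
      have e1 : (n - ε • (m - n)) - n' = f - f' := by
        have : f' = f - n - ε • (f - m - (f - n)) + n' := by rw [← he]; abel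
        rw [this]; module
      have e2 : ⟪(n - ε • (m - n)) - n', f - f'⟫ = 0 := by
        rw [inner_sub_left, inner_sub_left, real_inner_smul_left, inner_sub_left,
          nc_perp hFP hn hf hf', nc_perp hFP hn' hf hf', nc_perp hFP hm hf hf']
        ring
      rw [← e1] at e2
      rw [sub_eq_zero.1 (inner_self_eq_zero.1 e2)]
      exact hn'
  · rintro _ ⟨f, hf, n, hn, rfl⟩
    obtain ⟨z, hz⟩ := D_span hF
    obtain ⟨g, hg, m, hm, hgm⟩ := interior_subset hz
    obtain ⟨ε₁, hε₁, h₁⟩ := ri_of_mem hf hg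
    obtain ⟨ε₂, hε₂, h₂⟩ := ri_of_mem hn hm
    have hδ := lt_min hε₁ hε₂
    set δ := min ε₁ ε₂
    have k1 := eps_small hF.2.1 (intrinsicInterior_subset hf) hδ (min_le_left _ _) h₁
    have k2 := eps_small (nc_convex _ _) (intrinsicInterior_subset hn) hδ (min_le_right _ _) h₂
    have k3 : (f - n) - δ • (z - (f - n)) ∈ F - normalCone (poly s) F := by
      refine ⟨_, k1, _, k2, ?_⟩
      rw [← hgm]
      module
    exact (D_convex hF.2.1).openSegment_interior_self_subset_interior hz k3 (mem_seg hδ)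

/-- The face of maximizers of `n`. -/
theorem maxFace {d : ℕ} {s : Finset (Euc d × ℝ)} {F : Set (Euc d)} (hF : IsFaceOf (poly s) F)
    {n : Euc d} (hn : n ∈ normalCone (poly s) F) :
    ∃ H, IsFaceOf (poly s) H ∧ F ⊆ H ∧ n ∈ intrinsicInterior ℝ (normalCone (poly s) H) := by
  set H : Set (Euc d) := {x | x ∈ poly s ∧ ∀ z ∈ poly s, ⟪n, z - x⟫ ≤ 0} with hHdef
  have hFH : F ⊆ H := fun f hf => ⟨hF.2.2.subset hf, fun z hz => hn f hf z hz⟩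
  have hnH : n ∈ normalCone (poly s) H := fun f hf z hz => hf.2 z hz
  have hH : IsFaceOf (poly s) H := by
    refine ⟨hF.1.mono hFH, ?_, fun x hx => hx.1, ?_⟩
    · intro x hx y hy a b ha hb hab
      refine ⟨poly_convex s hx.1 hy.1 ha hb hab, fun z hz => ?_⟩
      have h1 := mul_le_mul_of_nonneg_left (hx.2 z hz) ha
      have h2 := mul_le_mul_of_nonneg_left (hy.2 z hz) hb
      have e : z - (a • x + b • y) = a • (z - x) + b • (z - y) := by
        have : z = (a + b) • z := by rw [hab, one_smul]
        nth_rewrite 1 [this]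
        module
      rw [e, inner_add_right, real_inner_smul_right, real_inner_smul_right]
      linarith
    · rintro x hx y hy w hw ⟨a, b, ha, hb, hab, rfl⟩
      refine ⟨hx, fun z hz => ?_⟩
      have h1 := hw.2 z hz
      have h2 := hw.2 y hy
      simp only [inner_sub_right, inner_add_right, real_inner_smul_right] at h1 h2 ⊢
      have hb' : b = 1 - a := by linarith
      subst hb'
      have h3 : ⟪n, y⟫ ≤ ⟪n, x⟫ := by
        have : a * ⟪n, y⟫ ≤ a * ⟪n, x⟫ := by linarith
        exact le_of_mul_le_mul_left this ha
      have h4 := mul_le_mul_of_nonneg_left h3 hb.le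
      linarith
  refine ⟨H, hH, hFH, ?_⟩
  clear_value H
  obtain ⟨x, hx⟩ := Set.Nonempty.intrinsicInterior hH.2.1 hH.1
  have hxH := intrinsicInterior_subset hx
  have hxP := hH.2.2.subset hxH
  have hHe := face_eq_minFace hH hx
  have hint : x - n ∈ interior (H - normalCone (poly s) H) := by
    by_contra hnot
    obtain ⟨v, hv⟩ := geometric_hahn_banach_open_point (D_convex hH.2.1).interior isOpen_interior hnot
    have hlt : ∀ c ∈ intrinsicInterior ℝ (normalCone (poly s) H), v n < v c := by
      intro c hc
      have := hv (x - c) (by rw [D_interior hH]; exact Set.sub_mem_sub hx hc)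
      rw [map_sub, map_sub] at this
      linarith
    obtain ⟨c₀, hc₀⟩ := Set.Nonempty.intrinsicInterior (nc_convex (poly s) H) ⟨n, hnH⟩
    have hc₀N := intrinsicInterior_subset hc₀
    -- weak inequality on the whole cone
    have hle : ∀ m ∈ normalCone (poly s) H, v n ≤ v m := by
      intro m hm
      by_contra hlt'
      push Not at hlt'
      have h0 := hlt c₀ hc₀
      have hmem : x - n ∈ closure (interior (H - normalCone (poly s) H)) := by
        rw [(D_convex hH.2.1).closure_interior_eq_closure_of_nonempty_interior (D_span hH)]
        exact subset_closure (Set.sub_mem_sub hxH hnH)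
      have hmem : x - m ∈ closure (interior (H - normalCone (poly s) H)) := by
        rw [(D_convex hH.2.1).closure_interior_eq_closure_of_nonempty_interior (D_span hH)]
        exact subset_closure (Set.sub_mem_sub hxH hm)
      have hcl : closure (interior (H - normalCone (poly s) H)) ⊆ {y | v y ≤ v (x - n)} :=
        closure_minimal (fun y hy => (hv y hy).le) (isClosed_le v.continuous continuous_const)
      have := hcl hmem
      simp only [Set.mem_ofPred_eq, map_sub] at this
      linarith
    have hn0 : v n = 0 := by
      have h1 := hle 0 (nc_zero _ _)
      have h2 := hle _ (nc_smul hnH (by norm_num : (0 : ℝ) ≤ 2))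
      rw [map_zero] at h1
      rw [map_smul, smul_eq_mul] at h2
      linarith
    set w : Euc d := (InnerProductSpace.toDual ℝ (Euc d)).symm v with hw
    have hvw : ∀ y, v y = ⟪y, w⟫ := fun y => by
      rw [real_inner_comm, hw, InnerProductSpace.toDual_symm_apply]
    obtain ⟨ε, hε, h⟩ := small_step s (x := x) (v := -w) hxP (fun h hs he => by
      have := hle h.1 (by rw [hHe]; exact active_mem hs he)
      rw [hn0, hvw] at this
      rw [inner_neg_right]
      linarith)
    have hmem : x + ε • (-w) ∈ H := by
      rw [hHdef]
      refine ⟨h, fun z hz => ?_⟩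
      have := hnH x hxH z hz
      rw [inner_sub_right] at this ⊢
      rw [inner_add_right, real_inner_smul_right, inner_neg_right, ← hvw, hn0]
      linarith
    have := nc_perp hH.2.2.subset hc₀N hmem hxH
    rw [add_sub_cancel_left, real_inner_smul_right, inner_neg_right, ← hvw] at this
    have h0 := hlt c₀ hc₀
    rw [hn0] at h0
    have := mul_pos hε h0
    linarith
  rw [D_interior hH] at hint
  obtain ⟨f, hf, m, hm, he⟩ := hint
  obtain ⟨-, h2⟩ := decomp_unique hH.2.2.subset (intrinsicInterior_subset hf) hxH
    (intrinsicInterior_subset hm) hnH he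
  rw [← h2]
  exact hm

theorem face_minus_normalCone_decomposition {d : ℕ} (P F : Set (Euc d))
    (hP : IsPolyhedral P) (hne : P.Nonempty) (hF : IsFaceOf P F) :
    (F - normalCone P F =
      ⋃ G ∈ {G : Set (Euc d) | IsFaceOf P G ∧ G ⊆ F},
        ⋃ H ∈ {H : Set (Euc d) | IsFaceOf P H ∧ F ⊆ H},
          (intrinsicInterior ℝ G - intrinsicInterior ℝ (normalCone P H))) ∧
    (∀ G₁ H₁ G₂ H₂ : Set (Euc d),
      IsFaceOf P G₁ → G₁ ⊆ F → IsFaceOf P H₁ → F ⊆ H₁ →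
      IsFaceOf P G₂ → G₂ ⊆ F → IsFaceOf P H₂ → F ⊆ H₂ →
      (G₁, H₁) ≠ (G₂, H₂) →
      Disjoint (intrinsicInterior ℝ G₁ - intrinsicInterior ℝ (normalCone P H₁))
        (intrinsicInterior ℝ G₂ - intrinsicInterior ℝ (normalCone P H₂))) ∧
    (interior (F - normalCone P F) =
      intrinsicInterior ℝ F - intrinsicInterior ℝ (normalCone P F)) ∧
    (frontier (F - normalCone P F) =
      ⋃ G ∈ {G : Set (Euc d) | IsFaceOf P G ∧ G ⊆ F},
        ⋃ H ∈ {H : Set (Euc d) | IsFaceOf P H ∧ F ⊆ H ∧ G ≠ H},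
          (intrinsicInterior ℝ G - intrinsicInterior ℝ (normalCone P H))) := by
  obtain ⟨s, hs⟩ := hP
  change P = poly s at hs
  subst hs
  have hA : F - normalCone (poly s) F =
      ⋃ G ∈ {G : Set (Euc d) | IsFaceOf (poly s) G ∧ G ⊆ F},
        ⋃ H ∈ {H : Set (Euc d) | IsFaceOf (poly s) H ∧ F ⊆ H},
          (intrinsicInterior ℝ G - intrinsicInterior ℝ (normalCone (poly s) H)) := by
    apply Set.Subset.antisymm
    · rintro _ ⟨f, hf, n, hn, rfl⟩
      have hfP := hF.2.2.subset hf
      obtain ⟨H, hH, hFH, hnH⟩ := maxFace hF hn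
      simp only [Set.mem_iUnion]
      exact ⟨minFace s f, ⟨minFace_face hfP,
        face_incl hF.2.2 (fun y hy => hy.1) (minFace_ri hfP) hf⟩, H, ⟨hH, hFH⟩,
        Set.sub_mem_sub (minFace_ri hfP) hnH⟩
    · intro x hx
      simp only [Set.mem_iUnion] at hx
      obtain ⟨G, ⟨-, hGF⟩, H, ⟨-, hFH⟩, f, hf, n, hn, rfl⟩ := hx
      exact Set.sub_mem_sub (hGF (intrinsicInterior_subset hf))
        (nc_anti hFH (intrinsicInterior_subset hn))
  have hB : ∀ G₁ H₁ G₂ H₂ : Set (Euc d),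
      IsFaceOf (poly s) G₁ → G₁ ⊆ F → IsFaceOf (poly s) H₁ → F ⊆ H₁ →
      IsFaceOf (poly s) G₂ → G₂ ⊆ F → IsFaceOf (poly s) H₂ → F ⊆ H₂ →
      (G₁, H₁) ≠ (G₂, H₂) →
      Disjoint (intrinsicInterior ℝ G₁ - intrinsicInterior ℝ (normalCone (poly s) H₁))
        (intrinsicInterior ℝ G₂ - intrinsicInterior ℝ (normalCone (poly s) H₂)) := by
    intro G₁ H₁ G₂ H₂ hG₁ hGF₁ hH₁ hFH₁ hG₂ hGF₂ hH₂ hFH₂ hne'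
    rw [Set.disjoint_left]
    rintro _ ⟨f, hf, n, hn, rfl⟩ ⟨g, hg, m, hm, he⟩
    apply hne'
    obtain ⟨h1, h2⟩ := decomp_unique hF.2.2.subset (hGF₂ (intrinsicInterior_subset hg))
      (hGF₁ (intrinsicInterior_subset hf)) (nc_anti hFH₂ (intrinsicInterior_subset hm))
      (nc_anti hFH₁ (intrinsicInterior_subset hn)) he
    subst h1 h2
    rw [face_eq_minFace hG₁ hf, face_eq_minFace hG₂ hg, face_of_ri_nc hH₁ hn,
      face_of_ri_nc hH₂ hm]
  have hC := D_interior hF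
  have hcl : IsClosed (F - normalCone (poly s) F) := by
    apply D_closed hF.2.2.subset
    obtain ⟨x, hx⟩ := Set.Nonempty.intrinsicInterior hF.2.1 hF.1
    rw [face_eq_minFace hF hx]
    exact minFace_closed s x
  refine ⟨hA, hB, hC, ?_⟩
  rw [hcl.frontier_eq]
  apply Set.Subset.antisymm
  · rintro x ⟨hx, hxi⟩
    rw [hA] at hx
    simp only [Set.mem_iUnion] at hx ⊢
    obtain ⟨G, ⟨hG, hGF⟩, H, ⟨hH, hFH⟩, hx⟩ := hx
    refine ⟨G, ⟨hG, hGF⟩, H, ⟨hH, hFH, ?_⟩, hx⟩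
    rintro rfl
    apply hxi
    rw [hC]
    rwa [Set.Subset.antisymm hGF hFH] at hx
  · intro x hx
    simp only [Set.mem_iUnion] at hx
    obtain ⟨G, ⟨hG, hGF⟩, H, ⟨hH, hFH, hGH⟩, hx⟩ := hx
    refine ⟨?_, fun hxi => ?_⟩
    · rw [hA]
      simp only [Set.mem_iUnion]
      exact ⟨G, ⟨hG, hGF⟩, H, ⟨hH, hFH⟩, hx⟩
    · rw [hC] at hxi
      refine Set.disjoint_left.1 (hB G H F F hG hGF hH hFH hF subset_rfl hF subset_rfl ?_) hx hxi
      intro he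
      simp only [Prod.mk.injEq] at he
      exact hGH (he.1.trans he.2.symm)
end
end
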